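/- arXiv:2507.21405 — 2 statements merged into one kernel-verified Lean document; each statement's English description precedes it below -/
import Mathlib

section
/- Let X ⊆ ℂᴺ be a complex analytic set and x ∈ X, and let I(X,x) denote the ideal of germs of holomorphic functions at x vanishing on X. Then the tangent cone C(X,x) equals the common zero set V(I_*(X,x)) of the ideal I_*(X,x) generated by the initial parts (lowest-degree homogeneous terms of the Taylor expansions at x) of all functions in I(X,x). -/
open Filter Topology Set

noncomputable section

/-- `ℂⁿ` with its Euclidean (Hermitian) norm. -/
abbrev Cn (n : ℕ) : Type := EuclideanSpace ℂ (Fin n)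

/-- The tangent cone of `X` at `x`: all limits `v` of `tₖ • (xₖ - x)` with `xₖ ∈ X`,
`xₖ → x` and `tₖ ∈ ℂ`. -/
def tangentConeSet {E : Type*} [NormedAddCommGroup E] [NormedSpace ℂ E]
    (X : Set E) (x : E) : Set E :=
  {v | ∃ (xs : ℕ → E) (ts : ℕ → ℂ), (∀ k, xs k ∈ X) ∧
    Filter.Tendsto xs Filter.atTop (𝓝 x) ∧
    Filter.Tendsto (fun k => ts k • (xs k - x)) Filter.atTop (𝓝 v)}

/-- `X` is a complex analytic subset of the open set `Ω`: it is closed in `Ω` and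
locally the common zero set of holomorphic functions. -/
def IsAnalyticSetIn {E : Type*} [NormedAddCommGroup E] [NormedSpace ℂ E]
    (X Ω : Set E) : Prop :=
  IsOpen Ω ∧ X ⊆ Ω ∧ IsClosed (Subtype.val ⁻¹' X : Set Ω) ∧
  ∀ p ∈ Ω, ∃ U : Set E, IsOpen U ∧ p ∈ U ∧ U ⊆ Ω ∧
    ∃ S : Set (E → ℂ), (∀ g ∈ S, AnalyticOnNhd ℂ g U) ∧
      X ∩ U = {x ∈ U | ∀ g ∈ S, g x = 0}

open MeasureTheory in
theorem tc_analyticAt_setIntegral_local {E : Type*} [NormedAddCommGroup E] [NormedSpace ℂ E]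
    (f : E × ℂ → ℂ) (z0 : E) (γ : ℝ → ℂ) (hγ : Continuous γ) (θ0 : ℝ)
    (hf : AnalyticAt ℂ f (z0, γ θ0)) :
    ∃ V ∈ 𝓝 θ0, MeasurableSet V ∧ ∀ s ⊆ V, MeasurableSet s →
      AnalyticAt ℂ (fun z => ∫ θ in s, f (z, γ θ)) z0 ∧
      ∀ᶠ z in 𝓝 z0, IntegrableOn (fun θ => f (z, γ θ)) s := by
  obtain ⟨p, r, hp⟩ := hf
  obtain ⟨ε, hε0, hε⟩ : ∃ ε : NNReal, 0 < ε ∧ (ε + ε : ENNReal) < r := by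
    obtain ⟨r0, h0, h1⟩ := ENNReal.lt_iff_exists_nnreal_btwn.1 hp.r_pos
    refine ⟨r0 / 2, ?_, ?_⟩
    · have : 0 < r0 := by exact_mod_cast h0
      positivity
    · rw [← ENNReal.coe_add, add_halves]; exact h1
  have hεp : (ε + ε : ENNReal) < p.radius := hε.trans_le hp.r_le
  have hεp1 : (ε : ENNReal) < p.radius := lt_of_le_of_lt (le_add_right le_rfl) hεp
  set x : ℝ → E × ℂ := fun θ => (0, γ θ - γ θ0) with hx
  have hxc : Continuous x := by fun_prop
  set V : Set ℝ := Metric.ball θ0 1 ∩ x ⁻¹' (Metric.ball 0 ε) with hV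
  have hVo : IsOpen V := Metric.isOpen_ball.inter (Metric.isOpen_ball.preimage hxc)
  have hVm : θ0 ∈ V := by
    refine ⟨by simp, ?_⟩
    simp [hx, hε0]
  refine ⟨V, hVo.mem_nhds hVm, hVo.measurableSet, ?_⟩
  intro s hsV hs
  have hxε : ∀ θ ∈ s, ‖x θ‖₊ ≤ ε := by
    intro θ hθ
    have := (hsV hθ).2
    simp only [mem_preimage, mem_ball_zero_iff] at this
    exact_mod_cast this.le
  have hfin : volume s < ⊤ :=
    lt_of_le_of_lt (measure_mono (hsV.trans inter_subset_left)) measure_ball_lt_top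
  have : IsFiniteMeasure (volume.restrict s) := ⟨by simpa using hfin⟩
  -- the bound
  set Nk : ℕ → NNReal := fun k => ∑' s : Σ l : ℕ, { s : Finset (Fin (k + l)) // s.card = l },
      ‖p (k + s.1)‖₊ * ε ^ s.1 with hNk
  have hN : ∀ θ ∈ s, ∀ k, ‖p.changeOrigin (x θ) k‖₊ ≤ Nk k := by
    intro θ hθ k
    have h1 : (‖x θ‖₊ : ENNReal) < p.radius :=
      lt_of_le_of_lt (by exact_mod_cast hxε θ hθ) hεp1
    refine (p.nnnorm_changeOrigin_le k h1).trans ?_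
    refine Summable.tsum_le_tsum (fun i => ?_) (p.changeOriginSeries_summable_aux₂ h1 k)
      (p.changeOriginSeries_summable_aux₂ hεp1 k)
    gcongr
    exact hxε θ hθ
  have hNsum : Summable fun k => Nk k * ε ^ k := by
    have := (NNReal.summable_sigma.1 (p.changeOriginSeries_summable_aux₁ hεp)).2
    simpa only [NNReal.tsum_mul_right] using this
  let L : E →L[ℂ] E × ℂ := ContinuousLinearMap.inl ℂ E ℂ
  have hL : ‖L‖ ≤ 1 := ContinuousLinearMap.norm_inl_le_one ℂ E ℂ
  let c : (n : ℕ) → ℝ → (E [×n]→L[ℂ] ℂ) := fun n θ =>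
    ((p.changeOrigin (x θ) n).compContinuousLinearMap (fun _ => L))
  have hcb : ∀ n, ∀ θ ∈ s, ‖c n θ‖ ≤ Nk n := by
    intro n θ hθ
    refine (ContinuousMultilinearMap.norm_compContinuousLinearMap_le _ _).trans ?_
    have h2 : (∏ i : Fin n, ‖L‖) ≤ 1 := by
      simpa using pow_le_one₀ (norm_nonneg _) hL
    calc _ ≤ ‖p.changeOrigin (x θ) n‖ * 1 := by gcongr
      _ ≤ Nk n := by rw [mul_one]; exact_mod_cast hN θ hθ n
  have hcc : ∀ n, ContinuousOn (c n) s := by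
    intro n
    have h1 : ContinuousOn (fun y => p.changeOrigin y n) (Metric.eball 0 p.radius) :=
      (p.hasFPowerSeriesOnBall_changeOrigin n (hp.r_pos.trans_le hp.r_le)).continuousOn
    have h2 : ContinuousOn (fun θ => p.changeOrigin (x θ) n) s := by
      refine h1.comp hxc.continuousOn ?_
      intro θ hθ
      simp only [Metric.mem_eball, edist_zero_right]
      exact lt_of_le_of_lt (by simpa [enorm_eq_nnnorm] using hxε θ hθ) hεp1
    exact (ContinuousMultilinearMap.compContinuousLinearMapL (fun _ => L)).continuous.comp_continuousOn h2
  have hci : ∀ n, Integrable (c n) (volume.restrict s) := by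
    intro n
    refine Integrable.of_bound ((hcc n).aestronglyMeasurable hs) (Nk n) ?_
    exact (ae_restrict_iff' hs).2 (Eventually.of_forall (hcb n))
  let Q : FormalMultilinearSeries ℂ E ℂ := fun n => ∫ θ in s, c n θ
  have hQn : ∀ n, ‖Q n‖ ≤ Nk n * (volume.restrict s).real univ := by
    intro n
    exact norm_integral_le_of_norm_le_const ((ae_restrict_iff' hs).2 (Eventually.of_forall (hcb n)))
  have hHS : ∀ y : E, ‖y‖ < ε → ∀ θ ∈ s, HasSum (fun n => c n θ (fun _ => y)) (f (z0 + y, γ θ)) := by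
    intro y hy θ hθ
    have h1 : (‖x θ‖₊ : ENNReal) < r := by
      refine lt_of_le_of_lt (show (‖x θ‖₊ : ENNReal) ≤ ε by exact_mod_cast hxε θ hθ) ?_
      exact lt_of_le_of_lt (le_add_right le_rfl) hε
    have h2 := (hp.changeOrigin h1).hasSum (y := (y, 0)) (by
      simp only [Metric.mem_eball, edist_zero_right]
      rw [lt_tsub_iff_right]
      refine lt_of_le_of_lt ?_ hε
      gcongr
      · rw [enorm_eq_nnnorm]
        have : ‖((y, 0) : E × ℂ)‖ ≤ ε := by simpa [Prod.norm_def] using hy.le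
        exact_mod_cast this
      · exact_mod_cast hxε θ hθ)
    have h3 : (z0, γ θ0) + x θ + (y, 0) = (z0 + y, γ θ) := by simp [hx]
    rw [h3] at h2
    exact h2
  constructor
  swap
  · filter_upwards [Metric.ball_mem_nhds z0 (show (0 : ℝ) < ε from hε0)] with z hz
    have hz' : ‖z - z0‖ < ε := by simpa [dist_eq_norm] using hz
    have h4 := hHS (z - z0) hz'
    have hco : ContinuousOn f (Metric.eball (z0, γ θ0) r) := hp.continuousOn
    have hco2 : ContinuousOn (fun θ => f (z, γ θ)) s := by
      refine hco.comp (by fun_prop) ?_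
      intro θ hθ
      simp only [Metric.mem_eball]
      have : dist (z, γ θ) (z0, γ θ0) ≤ ε := by
        rw [Prod.dist_eq]
        apply max_le
        · simpa using (Metric.mem_ball.1 hz).le
        · have := hxε θ hθ
          have h5 : ‖x θ‖ ≤ ε := by exact_mod_cast this
          simpa [hx, Prod.norm_def, dist_eq_norm] using h5
      rw [edist_dist]
      refine lt_of_le_of_lt (ENNReal.ofReal_le_ofReal this) ?_
      simp only [ENNReal.ofReal_coe_nnreal]
      exact lt_of_le_of_lt (le_add_right le_rfl) hε
    refine Integrable.of_bound (hco2.aestronglyMeasurable hs) (∑' n, (Nk n * ε ^ n : NNReal)) ?_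
    refine (ae_restrict_iff' hs).2 (Eventually.of_forall fun θ hθ => ?_)
    have h6 := h4 θ hθ
    rw [show z0 + (z - z0) = z by abel] at h6
    have hNs' : Summable fun n => ((Nk n * ε ^ n : NNReal) : ℝ) := NNReal.summable_coe.2 hNsum
    rw [← h6.tsum_eq]
    refine tsum_of_norm_bounded hNs'.hasSum fun n => ?_
    refine ((c n θ).le_opNorm _).trans ?_
    simp only [Finset.prod_const, Finset.card_univ, Fintype.card_fin]
    push_cast
    gcongr
    exact hcb n θ hθ
  refine ⟨Q, ε, ?_, by exact_mod_cast hε0, ?_⟩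
  · apply Q.le_radius_of_summable
    refine Summable.of_nonneg_of_le (fun n => by positivity) (fun n => ?_)
      ((NNReal.summable_coe.2 hNsum).mul_left ((volume.restrict s).real univ))
    push_cast
    calc _ ≤ (Nk n * (volume.restrict s).real univ) * (ε : ℝ) ^ n := by
          gcongr; exact hQn n
      _ = _ := by ring
  · intro y hy
    have hy' : ‖y‖ < ε := by
      simp only [Metric.mem_eball, edist_zero_right, enorm_eq_nnnorm] at hy
      exact_mod_cast hy
    have hQy : ∀ n, Q n (fun _ => y) = ∫ θ in s, c n θ (fun _ => y) := by
      intro n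
      have := (ContinuousMultilinearMap.apply ℂ (fun _ : Fin n => E) ℂ (fun _ => y)).integral_comp_comm (hci n)
      simpa using this.symm
    simp_rw [hQy]
    have hNs' : Summable fun n => ((Nk n * ε ^ n : NNReal) : ℝ) := NNReal.summable_coe.2 hNsum
    refine hasSum_integral_of_dominated_convergence (fun n _ => ((Nk n * ε ^ n : NNReal) : ℝ)) ?_ ?_ ?_ ?_ ?_
    · intro n
      exact ((ContinuousMultilinearMap.apply ℂ (fun _ : Fin n => E) ℂ (fun _ => y)).integrable_comp (hci n)).1
    · intro n
      refine (ae_restrict_iff' hs).2 (Eventually.of_forall fun θ hθ => ?_)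
      refine ((c n θ).le_opNorm _).trans ?_
      simp only [Finset.prod_const, Finset.card_univ, Fintype.card_fin]
      push_cast
      gcongr
      exact hcb n θ hθ
    · exact Eventually.of_forall fun _ => hNs'
    · exact integrable_const _
    · refine (ae_restrict_iff' hs).2 (Eventually.of_forall fun θ hθ => ?_)
      exact hHS y hy' θ hθ

open MeasureTheory in
theorem tc_analyticAt_circleIntegral {E : Type*} [NormedAddCommGroup E] [NormedSpace ℂ E]
    (f : E × ℂ → ℂ) (z0 : E) (R : ℝ) (hR : 0 ≤ R)
    (hf : ∀ ζ ∈ Metric.sphere (0 : ℂ) R, AnalyticAt ℂ f (z0, ζ)) :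
    AnalyticAt ℂ (fun z => ∮ ζ in C(0, R), f (z, ζ)) z0 := by
  let F : E × ℂ → ℂ := fun q => q.2 * Complex.I * f q
  have hF : ∀ θ : ℝ, AnalyticAt ℂ F (z0, circleMap 0 R θ) := by
    intro θ
    have := hf (circleMap 0 R θ) (circleMap_mem_sphere 0 hR θ)
    exact (analyticAt_snd.mul analyticAt_const).mul this
  have key : ∃ S, MeasurableSet S ∧ Icc (0 : ℝ) (2 * Real.pi) ⊆ S ∧ ∀ s ⊆ S, MeasurableSet s →
      AnalyticAt ℂ (fun z => ∫ θ in s, F (z, circleMap 0 R θ)) z0 ∧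
      ∀ᶠ z in 𝓝 z0, IntegrableOn (fun θ => F (z, circleMap 0 R θ)) s := by
    refine isCompact_Icc.induction_on (p := fun K => ∃ S, MeasurableSet S ∧ K ⊆ S ∧
      ∀ s ⊆ S, MeasurableSet s → AnalyticAt ℂ (fun z => ∫ θ in s, F (z, circleMap 0 R θ)) z0 ∧
      ∀ᶠ z in 𝓝 z0, IntegrableOn (fun θ => F (z, circleMap 0 R θ)) s) ?_ ?_ ?_ ?_
    · refine ⟨∅, MeasurableSet.empty, subset_rfl, fun s hs _ => ?_⟩
      rw [subset_empty_iff.1 hs]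
      simp [analyticAt_const]
    · rintro s t hst ⟨S, h1, h2, h3⟩
      exact ⟨S, h1, hst.trans h2, h3⟩
    · rintro s t ⟨S, h1, h2, h3⟩ ⟨T, k1, k2, k3⟩
      refine ⟨S ∪ T, h1.union k1, union_subset_union h2 k2, fun u hu hum => ?_⟩
      have a1 := h3 (u ∩ S) inter_subset_right (hum.inter h1)
      have a2 := k3 (u \ S) (by
        rintro a ⟨ha, hb⟩
        exact (hu ha).resolve_left hb) (hum.diff h1)
      have hun : u = (u ∩ S) ∪ (u \ S) := (inter_union_sdiff u S).symm
      constructor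
      · refine (a1.1.add a2.1).congr ?_
        filter_upwards [a1.2, a2.2] with z hz1 hz2
        conv_rhs => rw [hun]
        rw [setIntegral_union (by
          exact disjoint_left.2 fun a ha hb => hb.2 ha.2) (hum.diff h1) hz1 hz2]
        rfl
      · filter_upwards [a1.2, a2.2] with z hz1 hz2
        rw [hun]
        exact hz1.union hz2
    · intro θ _
      obtain ⟨V, hV, hVm, h⟩ := tc_analyticAt_setIntegral_local F z0 (circleMap 0 R)
        (continuous_circleMap 0 R) θ (hF θ)
      exact ⟨V, mem_nhdsWithin_of_mem_nhds hV, V, hVm, subset_rfl, h⟩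
  obtain ⟨S, -, hS, h⟩ := key
  have := (h (Ioc 0 (2 * Real.pi)) (Ioc_subset_Icc_self.trans hS) measurableSet_Ioc).1
  refine this.congr (Eventually.of_forall fun z => ?_)
  simp only [circleIntegral, deriv_circleMap, smul_eq_mul, F]
  rw [intervalIntegral.integral_of_le Real.two_pi_pos.le]

theorem tc_newton (M : Multiset ℂ) (j : ℕ) :
    (j : ℂ) * M.esymm j = (-1) ^ (j + 1) *
      ∑ a ∈ Finset.HasAntidiagonal.antidiagonal j with a.1 < j, (-1) ^ a.1 * M.esymm a.1 *
        (M.map (fun x => x ^ a.2)).sum := by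
  classical
  have h := congrArg (MvPolynomial.aeval (fun x : M => (x : ℂ))) (MvPolynomial.mul_esymm_eq_sum M ℂ j)
  have hps : ∀ n, MvPolynomial.aeval (fun x : M => (x : ℂ)) (MvPolynomial.psum M ℂ n) =
      (M.map (fun x => x ^ n)).sum := by
    intro n
    simp only [MvPolynomial.psum, map_sum, map_pow, MvPolynomial.aeval_X]
    conv_rhs => rw [← Multiset.map_univ_coe M, Multiset.map_map]
    rfl
  simp only [map_mul, map_natCast, map_pow, map_neg, map_one, map_sum, hps,
    MvPolynomial.aeval_esymm_eq_multiset_esymm] at h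
  have hu : Multiset.map (fun x : M => (x : ℂ)) Finset.univ.val = M := Multiset.map_univ_coe M
  rw [hu] at h
  exact h

theorem tc_factor (g : ℂ → ℂ) (ρ : ℝ) (hρ : 0 < ρ)
    (hg : AnalyticOnNhd ℂ g (Metric.closedBall 0 ρ)) (hs : ∀ t ∈ Metric.sphere (0 : ℂ) ρ, g t ≠ 0) :
    ∃ (s : Multiset ℂ) (u : ℂ → ℂ), AnalyticOnNhd ℂ u (Metric.closedBall 0 ρ) ∧
      (∀ t ∈ Metric.closedBall (0 : ℂ) ρ, u t ≠ 0) ∧ (∀ a ∈ s, a ∈ Metric.ball (0 : ℂ) ρ) ∧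
      ∀ t ∈ Metric.closedBall (0 : ℂ) ρ, ∀ᶠ x in 𝓝 t, g x = (s.map (fun a => x - a)).prod * u x := by
  classical
  set U := Metric.closedBall (0 : ℂ) ρ with hU
  have hUc : IsConnected U := (convex_closedBall _ _).isConnected ⟨0, by simp [hU, hρ.le]⟩
  have hρU : (ρ : ℂ) ∈ U := by simp [hU, abs_of_pos hρ]
  have hρs : (ρ : ℂ) ∈ Metric.sphere (0 : ℂ) ρ := by simp [abs_of_pos hρ]
  have hm : MeromorphicOn g U := hg.meromorphicOn
  have hord : ∀ u : U, meromorphicOrderAt g u ≠ ⊤ := by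
    have := (hm.exists_meromorphicOrderAt_ne_top_iff_forall hUc).1
    apply this
    refine ⟨⟨ρ, hρU⟩, ?_⟩
    have h1 := hg _ hρU
    rw [h1.meromorphicOrderAt_eq, (h1.analyticOrderAt_eq_zero).2 (hs _ hρs)]
    simp
  have hfin : (MeromorphicOn.divisor g U).support.Finite :=
    (MeromorphicOn.divisor g U).finiteSupport (isCompact_closedBall _ _)
  obtain ⟨u, hu1, hu2, hu3⟩ := hm.extract_zeros_poles hord hfin
  have hnn : ∀ x, 0 ≤ MeromorphicOn.divisor g U x := by
    intro x
    have := MeromorphicOn.AnalyticOnNhd.divisor_nonneg hg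
    exact this x
  set D := MeromorphicOn.divisor g U with hD
  let s : Multiset ℂ := ∑ a ∈ hfin.toFinset, (D a).toNat • ({a} : Multiset ℂ)
  have hprod : ∀ x : ℂ, (∏ᶠ a, (fun y : ℂ => y - a) ^ D a) x = (s.map (fun a => x - a)).prod := by
    intro x
    rw [finprod_eq_prod_of_mulSupport_subset (s := hfin.toFinset)]
    · have hF : ∀ F : Finset ℂ, (Multiset.map (fun a => x - a)
          (∑ a ∈ F, (D a).toNat • ({a} : Multiset ℂ))).prod = ∏ a ∈ F, (x - a) ^ (D a).toNat := by
        intro F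
        induction F using Finset.induction_on with
        | empty => simp
        | insert a F ha ih =>
          rw [Finset.sum_insert ha, Finset.prod_insert ha, Multiset.map_add, Multiset.prod_add, ih,
            Multiset.map_nsmul, Multiset.prod_nsmul, Multiset.map_singleton,
            Multiset.prod_singleton]
      rw [hF, Finset.prod_apply]
      refine Finset.prod_congr rfl fun a _ => ?_
      rw [Pi.pow_apply, ← zpow_natCast, Int.toNat_of_nonneg (hnn a)]
    · intro a ha
      simp only [Function.mem_mulSupport] at ha
      simp only [Finite.coe_toFinset, Function.mem_support]
      intro h0
      exact ha (by rw [h0]; simp)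
  have hpa : ∀ t, AnalyticAt ℂ (fun x : ℂ => (s.map (fun a => x - a)).prod) t := by
    intro t
    induction s using Multiset.induction_on with
    | empty => simpa using analyticAt_const
    | cons a s ih =>
      simp only [Multiset.map_cons, Multiset.prod_cons]
      exact (analyticAt_id.sub analyticAt_const).mul ih
  have heq : ∀ t ∈ U, ∀ᶠ x in 𝓝 t, g x = (s.map (fun a => x - a)).prod * u x := by
    intro t ht
    have ha : AnalyticAt ℂ (fun x => (s.map (fun a => x - a)).prod * u x) t :=
      (hpa t).mul (hu1 t ht)
    refine (AnalyticAt.frequently_eq_iff_eventually_eq (hg t ht) ha).1 ?_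
    have h1 : ∀ᶠ x in 𝓝[U \ {t}] t, g x = (s.map (fun a => x - a)).prod * u x := by
      have := hu3
      rw [Filter.EventuallyEq, Filter.eventually_iff, mem_codiscreteWithin] at this
      have h2 := this t ht
      rw [Filter.disjoint_principal_right] at h2
      have h3 : ∀ᶠ x in 𝓝[≠] t, x ∉ U \ {x | g x = ((∏ᶠ a, (fun y : ℂ => y - a) ^ D a) • u) x} := h2
      rw [eventually_nhdsWithin_iff] at h3 ⊢
      filter_upwards [h3] with x hx hxU
      have h4 := hx hxU.2
      simp only [Set.mem_sdiff, not_and, not_not, Set.mem_ofPred_eq] at h4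
      have h5 := h4 hxU.1
      rw [h5, Pi.smul_apply', hprod, smul_eq_mul]
    have hne : (𝓝[U \ {t}] t).NeBot := by
      have hp : Preperfect U := by
        rw [hU]
        exact (hUc.isPreconnected.preperfect_of_nontrivial ⟨0, by simp [hU, hρ.le], ρ, hρU, by
          exact_mod_cast hρ.ne⟩)
      have := hp t ht
      rw [accPt_iff_nhds] at this
      rw [mem_closure_iff_nhdsWithin_neBot.symm, mem_closure_iff_nhds]
      intro V hV
      obtain ⟨y, hy, hyt⟩ := this V hV
      exact ⟨y, hy.1, hy.2, hyt⟩
    exact (h1.frequently).filter_mono (nhdsWithin_mono _ (fun x hx => hx.2))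
  refine ⟨s, u, hu1, fun t ht => hu2 ⟨t, ht⟩, ?_, heq⟩
  intro a ha
  have hsU : a ∈ U := by
    simp only [s, Multiset.mem_sum] at ha
    obtain ⟨b, hb, hab⟩ := ha
    have : a = b := by
      have := Multiset.mem_of_mem_nsmul hab
      simpa using this
    subst this
    have : D a ≠ 0 := by simpa using hb
    exact D.supportWithinDomain this
  have h0 : g a = 0 := by
    rw [(heq a hsU).self_of_nhds]
    have : (0 : ℂ) ∈ s.map (fun b => a - b) := Multiset.mem_map.2 ⟨a, ha, by simp⟩
    rw [Multiset.prod_eq_zero this, zero_mul]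
  by_contra hb
  have : a ∈ Metric.sphere (0 : ℂ) ρ := by
    simp only [Metric.mem_sphere, Metric.mem_ball, not_lt, hU, Metric.mem_closedBall] at *
    linarith
  exact hs a this h0

theorem tc_argument (g G : ℂ → ℂ) (ρ : ℝ) (hρ : 0 < ρ) (s : Multiset ℂ) (u : ℂ → ℂ)
    (hG : AnalyticOnNhd ℂ G (Metric.closedBall 0 ρ))
    (hu : AnalyticOnNhd ℂ u (Metric.closedBall 0 ρ))
    (hu0 : ∀ t ∈ Metric.closedBall (0 : ℂ) ρ, u t ≠ 0)
    (hsb : ∀ a ∈ s, a ∈ Metric.ball (0 : ℂ) ρ)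
    (hg : ∀ t ∈ Metric.closedBall (0 : ℂ) ρ, ∀ᶠ x in 𝓝 t, g x = (s.map (fun a => x - a)).prod * u x) :
    (∮ t in C(0, ρ), G t * (deriv g t / g t)) = 2 * Real.pi * Complex.I * (s.map G).sum := by
  have hsub : Metric.sphere (0 : ℂ) ρ ⊆ Metric.closedBall 0 ρ := Metric.sphere_subset_closedBall
  have h1 : ∀ t ∈ Metric.sphere (0 : ℂ) ρ, G t * (deriv g t / g t) =
      (s.map (fun a => (t - a)⁻¹ * G t)).sum + G t * (deriv u t / u t) := by
    intro t ht
    have hlog : logDeriv g t = (s.map (fun a => (t - a)⁻¹)).sum + logDeriv u t := by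
      have e1 : logDeriv g t = logDeriv (fun x => (s.map (fun a => x - a)).prod * u x) t := by
        have hgt := (hg t (hsub ht)).self_of_nhds
        rw [logDeriv_apply, logDeriv_apply, Filter.EventuallyEq.deriv_eq (hg t (hsub ht)), hgt]
      rw [e1]
      clear e1 hg
      induction s using Multiset.induction_on with
      | empty => simp
      | cons a s ih =>
        have hsb' : ∀ a ∈ s, a ∈ Metric.ball (0 : ℂ) ρ := fun b hb => hsb b (Multiset.mem_cons_of_mem hb)
        have hta : t - a ≠ 0 := by
          intro h
          have h2 := hsb a (Multiset.mem_cons_self a s)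
          rw [sub_eq_zero.1 h] at ht
          simp at ht h2
          linarith
        have hts : (s.map (fun a => t - a)).prod ≠ 0 := by
          rw [Ne, Multiset.prod_eq_zero_iff, Multiset.mem_map]
          rintro ⟨b, hb, hb2⟩
          have h2 := hsb' b hb
          rw [sub_eq_zero.1 hb2] at ht
          simp at ht h2
          linarith
        have hd : ∀ s : Multiset ℂ, DifferentiableAt ℂ (fun x : ℂ => (s.map (fun a => x - a)).prod) t := by
          intro s
          induction s using Multiset.induction_on with
          | empty => simp
          | cons a s ih =>
            simp only [Multiset.map_cons, Multiset.prod_cons]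
            exact (differentiableAt_id.sub_const a).mul ih
        have hdu := (hu t (hsub ht)).differentiableAt
        simp only [Multiset.map_cons, Multiset.prod_cons, Multiset.sum_cons, mul_assoc]
        rw [logDeriv_mul (f := fun x => x - a)
          (g := fun x => (s.map (fun a => x - a)).prod * u x) t hta (mul_ne_zero hts (hu0 t (hsub ht)))
          (differentiableAt_id.sub_const a) ((hd s).mul hdu), ih hsb']
        rw [logDeriv_apply]
        simp [add_assoc]
    rw [logDeriv_apply, logDeriv_apply] at hlog
    rw [hlog, mul_add, Multiset.sum_map_mul_right, mul_comm (G t) (Multiset.sum _)]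
  have hci : ∀ a ∈ Metric.ball (0 : ℂ) ρ, CircleIntegrable (fun t => (t - a)⁻¹ * G t) 0 ρ := by
    intro a ha
    apply ContinuousOn.circleIntegrable hρ.le
    refine ContinuousOn.mul (ContinuousOn.inv₀ (by fun_prop) ?_) (hG.continuousOn.mono hsub)
    intro t ht h
    rw [sub_eq_zero.1 h] at ht
    simp at ht ha
    linarith
  have h2 : CircleIntegrable (fun t => (s.map (fun a => (t - a)⁻¹ * G t)).sum) 0 ρ ∧
      (∮ t in C(0, ρ), (s.map (fun a => (t - a)⁻¹ * G t)).sum) =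
        2 * Real.pi * Complex.I * (s.map G).sum := by
    clear hg h1
    induction s using Multiset.induction_on with
    | empty => simp [circleIntegrable_const, circleIntegral]
    | cons a s ih =>
      obtain ⟨i1, i2⟩ := ih fun b hb => hsb b (Multiset.mem_cons_of_mem hb)
      have ha := hsb a (Multiset.mem_cons_self a s)
      simp only [Multiset.map_cons, Multiset.sum_cons]
      refine ⟨(hci a ha).add i1, ?_⟩
      rw [circleIntegral.integral_add (hci a ha) i1, i2]
      have := (hG.differentiableOn).circleIntegral_sub_inv_smul ha
      simp only [smul_eq_mul] at this
      rw [this]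
      ring
  have h3 : AnalyticOnNhd ℂ (fun t => G t * (deriv u t / u t)) (Metric.closedBall 0 ρ) :=
    fun t ht => (hG t ht).mul ((hu t ht).deriv.div (hu t ht) (hu0 t ht))
  rw [circleIntegral.integral_congr hρ.le h1, circleIntegral.integral_add h2.1
    ((h3.continuousOn.mono hsub).circleIntegrable hρ.le), h2.2,
    Complex.circleIntegral_eq_zero_of_differentiable_on_off_countable hρ.le countable_empty
      h3.continuousOn (fun z hz => (h3 z (Metric.ball_subset_closedBall hz.1)).differentiableAt), add_zero]

theorem tc_esymm_analytic {E : Type*} [NormedAddCommGroup E] [NormedSpace ℂ E] (M : E → Multiset ℂ)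
    (B : Set E) (hM : ∀ n : ℕ, AnalyticOnNhd ℂ (fun z => ((M z).map (fun x => x ^ n)).sum) B) (j : ℕ) :
    AnalyticOnNhd ℂ (fun z => (M z).esymm j) B := by
  induction j using Nat.strong_induction_on with
  | _ j ih =>
    rcases Nat.eq_zero_or_pos j with rfl | hj
    · intro z _
      simp only [Multiset.esymm, Multiset.powersetCard_zero_left, Multiset.map_singleton, Multiset.prod_zero, Multiset.sum_singleton]
      exact analyticAt_const
    · have hj0 : (j : ℂ) ≠ 0 := by exact_mod_cast hj.ne'
      have e : (fun z => (M z).esymm j) = fun z => (j : ℂ)⁻¹ * ((-1) ^ (j + 1) *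
          ∑ a ∈ Finset.HasAntidiagonal.antidiagonal j with a.1 < j, (-1) ^ a.1 * (M z).esymm a.1 *
          ((M z).map (fun x => x ^ a.2)).sum) := by
        funext z
        rw [← tc_newton, inv_mul_cancel_left₀ hj0]
      rw [e]
      intro z hz
      refine analyticAt_const.mul (analyticAt_const.mul ?_)
      refine Finset.analyticAt_fun_sum _ fun a ha => ?_
      have ha' : a.1 < j := (Finset.mem_filter.1 ha).2
      exact (analyticAt_const.mul (ih a.1 ha' z hz)).mul (hM a.2 z hz)

theorem tc_pderiv {E : Type*} [NormedAddCommGroup E] [NormedSpace ℂ E] (h : E × ℂ → ℂ) (z : E) (t : ℂ)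
    (hh : AnalyticAt ℂ h (z, t)) :
    deriv (fun x => h (z, x)) t = fderiv ℂ h (z, t) (0, 1) := by
  have h1 : HasDerivAt (fun x : ℂ => (z, x)) ((0 : E), (1 : ℂ)) t :=
    (hasDerivAt_const t z).prodMk (hasDerivAt_id t)
  exact (hh.differentiableAt.hasFDerivAt.comp_hasDerivAt t h1).deriv

theorem tc_prep {E : Type*} [NormedAddCommGroup E] [NormedSpace ℂ E] (U : Set (E × ℂ)) (hU : IsOpen U)
    (h0 : (0 : E × ℂ) ∈ U) (h : E × ℂ → ℂ) (hh : AnalyticOnNhd ℂ h U)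
    (hne : ¬ ∀ᶠ t in 𝓝 (0 : ℂ), h (0, t) = 0) (R : ℝ) (hR : 0 < R) :
    ∃ ρ : ℝ, 0 < ρ ∧ ρ < R ∧ ∃ ε : ℝ, 0 < ε ∧ ∃ (k : ℕ) (s : E → Multiset ℂ),
      Metric.ball (0 : E) ε ×ˢ Metric.closedBall (0 : ℂ) ρ ⊆ U ∧
      (∀ t : ℂ, 0 < ‖t‖ → ‖t‖ ≤ ρ → h (0, t) ≠ 0) ∧
      (∀ z ∈ Metric.ball (0 : E) ε, (s z).card = k ∧
        (∀ t ∈ Metric.sphere (0 : ℂ) ρ, h (z, t) ≠ 0) ∧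
        (∀ t, t ∈ s z ↔ ‖t‖ < ρ ∧ h (z, t) = 0)) ∧
      ∀ g : E × ℂ → ℂ, AnalyticOnNhd ℂ g U → ∀ j : ℕ,
        AnalyticOnNhd ℂ (fun z => ((s z).map (fun t => g (z, t))).esymm j) (Metric.ball (0 : E) ε) := by
  have hsl : ∀ z t, (z, t) ∈ U → ∀ g : E × ℂ → ℂ, AnalyticOnNhd ℂ g U →
      AnalyticAt ℂ (fun x => g (z, x)) t := by
    intro z t hzt g hg
    exact (hg (z, t) hzt).comp_of_eq (analyticAt_const.prod analyticAt_id) rfl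
  have h1 : ∀ᶠ t in 𝓝[≠] (0 : ℂ), h (0, t) ≠ 0 :=
    ((hsl 0 0 h0 h hh).eventually_eq_zero_or_eventually_ne_zero).resolve_left hne
  rw [eventually_nhdsWithin_iff, Metric.eventually_nhds_iff_ball] at h1
  obtain ⟨r1, hr1, h1⟩ := h1
  obtain ⟨r2, hr2, h2⟩ := Metric.mem_nhds_iff.1 (hU.mem_nhds h0)
  set ρ := min R (min r1 r2) / 2 with hρdef
  have hmin : 0 < min R (min r1 r2) := by positivity
  have hρ : 0 < ρ := by positivity
  have hρR : ρ < R := by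
    have := min_le_left R (min r1 r2); linarith
  have hρ1 : ρ < r1 := by
    have := (min_le_right R (min r1 r2)).trans (min_le_left _ _); linarith
  have hρ2 : ρ < r2 := by
    have := (min_le_right R (min r1 r2)).trans (min_le_right _ _); linarith
  have hU0 : ∀ z t, ‖z‖ < r2 → ‖t‖ ≤ ρ → (z, t) ∈ U := by
    intro z t hz ht
    apply h2
    rw [mem_ball_zero_iff, Prod.norm_def]
    exact max_lt hz (ht.trans_lt hρ2)
  have hn0 : ∀ t : ℂ, 0 < ‖t‖ → ‖t‖ ≤ ρ → h (0, t) ≠ 0 := by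
    intro t ht ht2
    exact h1 t (by rw [mem_ball_zero_iff]; linarith) (by simpa using ht)
  have h3 : ∀ᶠ z in 𝓝 (0 : E), ∀ t ∈ Metric.sphere (0 : ℂ) ρ, h (z, t) ≠ 0 := by
    apply (isCompact_sphere (0 : ℂ) ρ).eventually_forall_of_forall_eventually
    intro t ht
    have ht' : ‖t‖ = ρ := by simpa using ht
    have := (hh (0, t) (hU0 0 t (by simpa using hr2) ht'.le)).continuousAt.eventually_ne
      (hn0 t (by rw [ht']; exact hρ) ht'.le)
    exact this
  rw [Metric.eventually_nhds_iff_ball] at h3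
  obtain ⟨r3, hr3, h3⟩ := h3
  set ε1 := min r2 r3 with hε1
  have hε1p : 0 < ε1 := lt_min hr2 hr3
  have hB2 : ∀ z ∈ Metric.ball (0 : E) ε1, ‖z‖ < r2 := fun z hz =>
    (mem_ball_zero_iff.1 hz).trans_le (min_le_left _ _)
  have hB3 : ∀ z ∈ Metric.ball (0 : E) ε1, ∀ t ∈ Metric.sphere (0 : ℂ) ρ, h (z, t) ≠ 0 := fun z hz =>
    h3 z (mem_ball_zero_iff.2 ((mem_ball_zero_iff.1 hz).trans_le (min_le_right _ _)))
  have hon : ∀ z ∈ Metric.ball (0 : E) ε1, ∀ g : E × ℂ → ℂ, AnalyticOnNhd ℂ g U →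
      AnalyticOnNhd ℂ (fun x => g (z, x)) (Metric.closedBall 0 ρ) := by
    intro z hz g hg t ht
    exact hsl z t (hU0 z t (hB2 z hz) (by simpa using ht)) g hg
  have hex : ∀ z : E, ∃ (s : Multiset ℂ) (u : ℂ → ℂ), z ∈ Metric.ball (0 : E) ε1 →
      AnalyticOnNhd ℂ u (Metric.closedBall 0 ρ) ∧
      (∀ t ∈ Metric.closedBall (0 : ℂ) ρ, u t ≠ 0) ∧ (∀ a ∈ s, a ∈ Metric.ball (0 : ℂ) ρ) ∧
      ∀ t ∈ Metric.closedBall (0 : ℂ) ρ, ∀ᶠ x in 𝓝 t, h (z, x) = (s.map (fun a => x - a)).prod * u x := by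
    intro z
    by_cases hz : z ∈ Metric.ball (0 : E) ε1
    · obtain ⟨s, u, hs⟩ := tc_factor (fun x => h (z, x)) ρ hρ (hon z hz h hh) (hB3 z hz)
      exact ⟨s, u, fun _ => hs⟩
    · exact ⟨0, 0, fun h => absurd h hz⟩
  choose s u hs using hex
  have hps : ∀ g : E × ℂ → ℂ, AnalyticOnNhd ℂ g U →
      AnalyticOnNhd ℂ (fun z => ((s z).map (fun t => g (z, t))).sum) (Metric.ball 0 ε1) := by
    intro g hg
    have hint : ∀ z ∈ Metric.ball (0 : E) ε1, ((s z).map (fun t => g (z, t))).sum =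
        (2 * Real.pi * Complex.I)⁻¹ * ∮ ζ in C(0, ρ),
          (fun p : E × ℂ => g p * (fderiv ℂ h p (0, 1) / h p)) (z, ζ) := by
      intro z hz
      obtain ⟨a1, a2, a3, a4⟩ := hs z hz
      have := tc_argument (fun x => h (z, x)) (fun x => g (z, x)) ρ hρ (s z) (u z) (hon z hz g hg)
        a1 a2 a3 a4
      have e : (∮ ζ in C(0, ρ), (fun p : E × ℂ => g p * (fderiv ℂ h p (0, 1) / h p)) (z, ζ)) =
          ∮ t in C(0, ρ), g (z, t) * (deriv (fun x => h (z, x)) t / h (z, t)) := by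
        apply circleIntegral.integral_congr hρ.le
        intro t ht
        have ht' : ‖t‖ = ρ := by simpa using ht
        simp only
        rw [tc_pderiv h z t (hh _ (hU0 z t (hB2 z hz) ht'.le))]
      rw [e, this, inv_mul_cancel_left₀]
      simp [Real.pi_ne_zero]
    intro z0 hz0
    have han : AnalyticAt ℂ (fun z => (2 * Real.pi * Complex.I)⁻¹ * ∮ ζ in C(0, ρ),
          (fun p : E × ℂ => g p * (fderiv ℂ h p (0, 1) / h p)) (z, ζ)) z0 := by
      refine analyticAt_const.mul (tc_analyticAt_circleIntegral
        (fun p : E × ℂ => g p * (fderiv ℂ h p (0, 1) / h p)) z0 ρ hρ.le ?_)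
      intro ζ hζ
      have hζ' : ‖ζ‖ = ρ := by simpa using hζ
      have hm := hU0 z0 ζ (hB2 z0 hz0) hζ'.le
      have hf : AnalyticAt ℂ (fun p => fderiv ℂ h p (0, 1)) (z0, ζ) :=
        ((ContinuousLinearMap.apply ℂ ℂ ((0 : E), (1 : ℂ))).analyticAt _).comp (hh _ hm).fderiv
      exact (hg _ hm).mul (hf.div (hh _ hm) (hB3 z0 hz0 ζ hζ))
    refine han.congr ?_
    filter_upwards [Metric.isOpen_ball.mem_nhds hz0] with z hz
    exact (hint z hz).symm
  have hcard : ∀ᶠ z in 𝓝 (0 : E), (s z).card = (s 0).card := by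
    have hc := hps (fun _ => 1) analyticOnNhd_const 0 (by simpa using hε1p)
    have hc2 := hc.continuousAt.eventually (Metric.ball_mem_nhds _ one_pos)
    filter_upwards [hc2] with z hz
    simp only [Multiset.map_const', Multiset.sum_replicate, nsmul_eq_mul, mul_one,
      Metric.mem_ball, dist_eq_norm] at hz
    have h5 : ‖(((((s z).card : ℤ) - ((s 0).card : ℤ)) : ℤ) : ℂ)‖ < 1 := by
      push_cast; exact hz
    rw [Complex.norm_intCast] at h5
    have h6 : |((s z).card : ℤ) - ((s 0).card : ℤ)| < 1 := by exact_mod_cast h5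
    have h7 := Int.abs_lt_one_iff.1 h6
    omega
  rw [Metric.eventually_nhds_iff_ball] at hcard
  obtain ⟨r4, hr4, hcard⟩ := hcard
  have hsub : Metric.ball (0 : E) (min ε1 r4) ⊆ Metric.ball 0 ε1 := Metric.ball_subset_ball (min_le_left _ _)
  refine ⟨ρ, hρ, hρR, min ε1 r4, lt_min hε1p hr4, (s 0).card, s, ?_, hn0, ?_, ?_⟩
  · rintro ⟨z, t⟩ ⟨hz, ht⟩
    exact hU0 z t (hB2 z (hsub hz)) (by simpa using ht)
  · intro z hz
    refine ⟨hcard z (Metric.ball_subset_ball (min_le_right _ _) hz), hB3 z (hsub hz), ?_⟩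
    intro t
    obtain ⟨a1, a2, a3, a4⟩ := hs z (hsub hz)
    constructor
    · intro ht
      have ht' := a3 t ht
      refine ⟨by simpa using ht', ?_⟩
      rw [(a4 t (Metric.ball_subset_closedBall ht')).self_of_nhds]
      have : (0 : ℂ) ∈ (s z).map (fun b => t - b) := Multiset.mem_map.2 ⟨t, ht, by simp⟩
      rw [Multiset.prod_eq_zero this, zero_mul]
    · rintro ⟨ht, hz0⟩
      have htc : t ∈ Metric.closedBall (0 : ℂ) ρ := by simpa using ht.le
      rw [(a4 t htc).self_of_nhds] at hz0
      have h8 := (mul_eq_zero.1 hz0).resolve_right (a2 t htc)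
      obtain ⟨b, hb, hb2⟩ := Multiset.mem_map.1 (Multiset.prod_eq_zero_iff.1 h8)
      rw [sub_eq_zero.1 hb2]
      exact hb
  · intro g hg j
    apply tc_esymm_analytic
    intro n
    have := (hps (fun p => g p ^ n) (fun p hp => (hg p hp).pow n)).mono hsub
    simpa [Multiset.map_map] using this

theorem tc_dir {E : Type*} [NormedAddCommGroup E] [NormedSpace ℂ E] (c : E → ℂ)
    (hc : AnalyticAt ℂ c 0) (hne : ¬ ∀ᶠ z in 𝓝 (0 : E), c z = 0) (hc0 : c 0 = 0) :
    ∃ w : E, w ≠ 0 ∧ ∃ C : ℝ, 0 < C ∧ ∀ᶠ q : E × ℂ in 𝓝 0, c (q.1 + q.2 • w) = 0 → ‖q.2‖ ≤ C * ‖q.1‖ := by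
  classical
  obtain ⟨p, hp⟩ := hc
  have hex : ∃ n, ∃ w : E, p n (fun _ => w) ≠ 0 := by
    by_contra hcon
    push Not at hcon
    apply hne
    have := hp.eventually_hasSum
    filter_upwards [this] with z hz
    simp only [hcon, zero_add] at hz
    exact hz.unique hasSum_zero
  set d := Nat.find hex with hd
  obtain ⟨w, hw⟩ := Nat.find_spec hex
  have hlt : ∀ e < d, ∀ w : E, p e (fun _ => w) = 0 := by
    intro e he w
    have := Nat.find_min hex he
    push Not at this
    exact this w
  have hd1 : d ≠ 0 := by
    intro h0
    apply hw
    have := hp.coeff_zero (fun _ => w)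
    rw [hc0] at this
    have key : ∀ n, n = 0 → p n (fun _ => w) = 0 := by
      rintro n rfl
      exact this
    exact key _ h0
  have hw0 : w ≠ 0 := by
    rintro rfl
    apply hw
    exact (p d).map_coord_zero ⟨0, Nat.pos_of_ne_zero hd1⟩ rfl
  set P : E → ℂ := fun y => p d (fun _ => y) with hP
  have hPc : Continuous P := (p d).cont.comp (continuous_pi fun _ => continuous_id)
  have hPh : ∀ (s : ℂ) y, P (s • y) = s ^ d * P y := by
    intro s y
    simp only [hP]
    rw [(p d).map_smul_univ (fun _ => s) (fun _ => y)]
    simp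
  have hPw : P w ≠ 0 := hw
  set m := ‖P w‖ with hm
  have hmpos : 0 < m := norm_pos_iff.2 hPw
  have hη : ∀ᶠ u in 𝓝 (0 : E), m / 2 < ‖P (w + u)‖ := by
    have : ContinuousAt (fun u => ‖P (w + u)‖) 0 := by fun_prop
    apply this.eventually_const_lt
    simp only [add_zero]
    linarith
  rw [Metric.eventually_nhds_iff_ball] at hη
  obtain ⟨η, hη0, hη⟩ := hη
  have hO := hp.isBigO_sub_partialSum_pow (d + 1)
  obtain ⟨K, hK0, hK⟩ := hO.exists_pos
  have hK1 := hK.bound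
  set L := (η + ‖w‖) with hL
  have hLpos : 0 < L := by positivity
  refine ⟨w, hw0, η⁻¹, by positivity, ?_⟩
  have hcont : Tendsto (fun q : E × ℂ => q.1 + q.2 • w) (𝓝 0) (𝓝 0) := by
    have : Continuous (fun q : E × ℂ => q.1 + q.2 • w) := by fun_prop
    simpa using this.tendsto 0
  have hsm : ∀ᶠ q : E × ℂ in 𝓝 0, K * L ^ (d + 1) * ‖q.2‖ < m / 2 := by
    have : ContinuousAt (fun q : E × ℂ => K * L ^ (d + 1) * ‖q.2‖) 0 := by fun_prop
    apply this.eventually_lt_const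
    simp; linarith
  filter_upwards [hcont.eventually hK1, hsm] with q hq1 hq2 hq0
  by_contra hlt'
  push Not at hlt'
  have hs : 0 < ‖q.2‖ := lt_of_le_of_lt (by positivity) hlt'
  have hs0 : q.2 ≠ 0 := norm_pos_iff.1 hs
  have hyn : ‖q.1‖ < η * ‖q.2‖ := by
    rwa [inv_mul_lt_iff₀ hη0] at hlt'
  have hsum : p.partialSum (d + 1) (q.1 + q.2 • w) = P (q.1 + q.2 • w) := by
    rw [FormalMultilinearSeries.partialSum, Finset.sum_range_succ, Finset.sum_eq_zero, zero_add]
    intro e he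
    exact hlt e (Finset.mem_range.1 he) _
  rw [zero_add, hq0, hsum, zero_sub, norm_neg] at hq1
  have e1 : q.1 + q.2 • w = q.2 • (w + q.2⁻¹ • q.1) := by
    rw [smul_add, smul_inv_smul₀ hs0, add_comm]
  have hb : m / 2 < ‖P (w + q.2⁻¹ • q.1)‖ := by
    apply hη
    rw [mem_ball_zero_iff, norm_smul, norm_inv, inv_mul_lt_iff₀ hs]
    linarith
  have hnorm : ‖q.1 + q.2 • w‖ ≤ ‖q.2‖ * L := by
    calc _ ≤ ‖q.1‖ + ‖q.2‖ * ‖w‖ := by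
          rw [← norm_smul]; exact norm_add_le _ _
      _ ≤ _ := by rw [hL]; nlinarith
  have h1 : ‖P (q.1 + q.2 • w)‖ = ‖q.2‖ ^ d * ‖P (w + q.2⁻¹ • q.1)‖ := by
    rw [e1, hPh, norm_mul, norm_pow]
  rw [h1, norm_pow, norm_norm] at hq1
  have h2 : ‖q.1 + q.2 • w‖ ^ (d + 1) ≤ (‖q.2‖ * L) ^ (d + 1) := by gcongr
  have h3 : ‖q.2‖ ^ d * (m / 2) ≤ ‖q.2‖ ^ d * ‖P (w + q.2⁻¹ • q.1)‖ := by gcongr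
  have h4 : K * ‖q.1 + q.2 • w‖ ^ (d + 1) ≤ K * (‖q.2‖ * L) ^ (d + 1) := by gcongr
  have h5 : ‖q.2‖ ^ d * (m / 2) ≤ ‖q.2‖ ^ d * (K * L ^ (d + 1) * ‖q.2‖) := by
    calc _ ≤ K * (‖q.2‖ * L) ^ (d + 1) := by linarith
      _ = _ := by rw [mul_pow, pow_succ ‖q.2‖ d]; ring
  have h6 := le_of_mul_le_mul_left h5 (by positivity)
  linarith

theorem tc_div1 (V : Set ℂ) (hV : IsOpen V) (ρ : ℝ) (hVρ : Metric.closedBall (0 : ℂ) ρ ⊆ V) (s : Multiset ℂ)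
    (C : ℝ) (hs : ∀ a ∈ s, a ∈ Metric.ball (0 : ℂ) ρ) :
    ∀ b : ℂ → ℂ, DifferentiableOn ℂ b V →
    (∀ x ∈ Metric.closedBall (0 : ℂ) ρ, ‖b x‖ ≤ C * ‖(s.map (fun a => x - a)).prod‖) →
    ∃ b' : ℂ → ℂ, DifferentiableOn ℂ b' V ∧ ∀ x ∈ Metric.closedBall (0 : ℂ) ρ,
      b x = (s.map (fun a => x - a)).prod * b' x := by
  induction s using Multiset.induction_on with
  | empty =>
    intro b hb _
    exact ⟨b, hb, by simp⟩
  | cons a s ih =>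
    intro b hb hbd
    have ha := hs a (Multiset.mem_cons_self a s)
    have haV : a ∈ V := hVρ (Metric.ball_subset_closedBall ha)
    have hba : b a = 0 := by
      have := hbd a (Metric.ball_subset_closedBall ha)
      simpa using this
    have hds : DifferentiableOn ℂ (dslope b a) V :=
      (Complex.differentiableOn_dslope (hV.mem_nhds haV)).2 hb
    have heq : ∀ x, b x = (x - a) * dslope b a x := by
      intro x
      have := sub_smul_dslope b a x
      rw [hba, sub_zero, smul_eq_mul] at this
      exact this.symm
    have hne : ∀ x ∈ Metric.closedBall (0 : ℂ) ρ, x ≠ a →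
        ‖dslope b a x‖ ≤ C * ‖(s.map (fun a => x - a)).prod‖ := by
      intro x hx hxa
      have h1 := hbd x hx
      rw [heq x] at h1
      simp only [Multiset.map_cons, Multiset.prod_cons, norm_mul] at h1
      have h2 : 0 < ‖x - a‖ := norm_pos_iff.2 (sub_ne_zero.2 hxa)
      rw [mul_left_comm] at h1
      exact le_of_mul_le_mul_left h1 h2
    have hpc : ∀ s : Multiset ℂ, Continuous (fun x : ℂ => (s.map (fun a => x - a)).prod) := by
      intro s
      induction s using Multiset.induction_on with
      | empty => simpa using continuous_const
      | cons a s ih =>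
        simp only [Multiset.map_cons, Multiset.prod_cons]
        exact (continuous_id.sub continuous_const).mul ih
    have hall : ∀ x ∈ Metric.closedBall (0 : ℂ) ρ,
        ‖dslope b a x‖ ≤ C * ‖(s.map (fun a => x - a)).prod‖ := by
      intro x hx
      by_cases hxa : x = a
      · subst hxa
        have c1 : ContinuousAt (fun y => ‖dslope b x y‖) x :=
          ((hds.differentiableAt (hV.mem_nhds haV)).continuousAt).norm
        have c2 : ContinuousAt (fun y => C * ‖(s.map (fun a => y - a)).prod‖) x :=
          (continuous_const.mul (hpc s).norm).continuousAt
        refine le_of_tendsto_of_tendsto (b := 𝓝[≠] x) (c1.tendsto.mono_left nhdsWithin_le_nhds)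
          (c2.tendsto.mono_left nhdsWithin_le_nhds) ?_
        rw [Filter.EventuallyLE, eventually_nhdsWithin_iff]
        filter_upwards [Metric.isOpen_ball.mem_nhds ha] with y hy hyx
        exact hne y (Metric.ball_subset_closedBall hy) hyx
      · exact hne x hx hxa
    obtain ⟨b', hb', h⟩ := ih (fun c hc => hs c (Multiset.mem_cons_of_mem hc)) _ hds hall
    refine ⟨b', hb', fun x hx => ?_⟩
    rw [heq x, h x hx, Multiset.map_cons, Multiset.prod_cons, mul_assoc]

theorem tc_riemann1 (δ b : ℂ → ℂ) (ρ : ℝ) (hρ : 0 < ρ) (C : ℝ)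
    (hδ : AnalyticOnNhd ℂ δ (Metric.closedBall 0 ρ)) (hb : AnalyticOnNhd ℂ b (Metric.closedBall 0 ρ))
    (hs : ∀ t ∈ Metric.sphere (0 : ℂ) ρ, δ t ≠ 0)
    (hC : ∀ t ∈ Metric.closedBall (0 : ℂ) ρ, ‖b t‖ ≤ C * ‖δ t‖) :
    b 0 = ((2 * Real.pi * Complex.I)⁻¹ * ∮ ζ in C(0, ρ), ζ⁻¹ * (b ζ / δ ζ)) * δ 0 := by
  obtain ⟨s, u, hu, hu0, hsb, hfac⟩ := tc_factor δ ρ hρ hδ hs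
  obtain ⟨K, hK⟩ := (isCompact_closedBall (0 : ℂ) ρ).exists_bound_of_continuousOn hu.continuousOn
  have hC0 : ∀ x ∈ Metric.closedBall (0 : ℂ) ρ, ‖b x‖ ≤ |C| * |K| * ‖(s.map (fun a => x - a)).prod‖ := by
    intro x hx
    have h1 := hC x hx
    rw [(hfac x hx).self_of_nhds, norm_mul] at h1
    have hKx := hK x hx
    calc _ ≤ _ := h1
      _ ≤ |C| * (‖(s.map (fun a => x - a)).prod‖ * |K|) := by
        gcongr
        · exact le_abs_self C
        · exact hKx.trans (le_abs_self K)
      _ = _ := by ring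
  obtain ⟨b', hb', hbb⟩ := tc_div1 {x | AnalyticAt ℂ b x} (isOpen_analyticAt ℂ b) ρ hb s _ hsb b
    (fun x hx => AnalyticAt.differentiableWithinAt hx) hC0
  have hq : DifferentiableOn ℂ (fun x => b' x / u x) (Metric.closedBall 0 ρ) := by
    intro x hx
    have d1 := (hb'.differentiableAt ((isOpen_analyticAt ℂ b).mem_nhds (hb x hx)))
    exact (d1.div (hu x hx).differentiableAt (hu0 x hx)).differentiableWithinAt
  have h0b : (0 : ℂ) ∈ Metric.ball (0 : ℂ) ρ := by simpa using hρ
  have hca := hq.circleIntegral_sub_inv_smul h0b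
  have e : (∮ ζ in C(0, ρ), ζ⁻¹ * (b ζ / δ ζ)) = ∮ ζ in C(0, ρ), (ζ - 0)⁻¹ • (b' ζ / u ζ) := by
    apply circleIntegral.integral_congr hρ.le
    intro t ht
    have htc := Metric.sphere_subset_closedBall ht
    have h1 := (hfac t htc).self_of_nhds
    have h2 := hs t ht
    have h3 : (s.map (fun a => t - a)).prod ≠ 0 := by
      intro h; apply h2; rw [h1, h, zero_mul]
    simp only [sub_zero, smul_eq_mul]
    rw [hbb t htc, h1, mul_div_mul_left _ _ h3]
  have h0c := Metric.ball_subset_closedBall h0b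
  have hpi : (2 * Real.pi * Complex.I : ℂ) ≠ 0 := by simp [Real.pi_ne_zero]
  rw [e, hca, smul_eq_mul, inv_mul_cancel_left₀ hpi, hbb 0 h0c, (hfac 0 h0c).self_of_nhds]
  have := hu0 0 h0c
  field_simp

theorem tc_riemann {E : Type*} [NormedAddCommGroup E] [NormedSpace ℂ E] (δ b : E → ℂ)
    (hδ : AnalyticAt ℂ δ 0) (hb : AnalyticAt ℂ b 0) (hne : ¬ ∀ᶠ z in 𝓝 (0 : E), δ z = 0) (C : ℝ)
    (hC : ∀ᶠ z in 𝓝 (0 : E), ‖b z‖ ≤ C * ‖δ z‖) :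
    ∃ a : E → ℂ, AnalyticAt ℂ a 0 ∧ ∀ᶠ z in 𝓝 (0 : E), b z = a z * δ z := by
  by_cases h0 : δ 0 = 0
  swap
  · refine ⟨fun z => b z / δ z, hb.div hδ h0, ?_⟩
    filter_upwards [hδ.continuousAt.eventually_ne h0] with z hz
    field_simp
  obtain ⟨w, hw, K, hK, hdir⟩ := tc_dir δ hδ hne h0
  have hcont : Tendsto (fun q : E × ℂ => q.1 + q.2 • w) (𝓝 0) (𝓝 0) := by
    have : Continuous (fun q : E × ℂ => q.1 + q.2 • w) := by fun_prop
    simpa using this.tendsto 0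
  have hall := (hdir.and (hcont.eventually (hδ.eventually_analyticAt.and
    (hb.eventually_analyticAt.and hC))))
  rw [Metric.eventually_nhds_iff_ball] at hall
  obtain ⟨r, hr, hall⟩ := hall
  set ρ := r / 2 with hρd
  have hρ : 0 < ρ := by positivity
  set ε := min r (ρ / K) with hε
  have hε0 : 0 < ε := by positivity
  have hin : ∀ z : E, ‖z‖ < ε → ∀ t : ℂ, ‖t‖ ≤ ρ → (z, t) ∈ Metric.ball (0 : E × ℂ) r := by
    intro z hz t ht
    rw [mem_ball_zero_iff, Prod.norm_def]
    refine max_lt (hz.trans_le (min_le_left _ _)) ?_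
    simp only
    linarith
  have hnz : ∀ z : E, ‖z‖ < ε → ∀ t : ℂ, ‖t‖ = ρ → δ (z + t • w) ≠ 0 := by
    intro z hz t ht h
    have h1 := (hall _ (hin z hz t ht.le)).1 h
    simp only at h1
    have h2 : ‖z‖ < ρ / K := hz.trans_le (min_le_right _ _)
    rw [lt_div_iff₀ hK] at h2
    rw [ht] at h1
    linarith
  have hsl : ∀ (f : E → ℂ) (z : E) (t : ℂ), AnalyticAt ℂ f (z + t • w) →
      AnalyticAt ℂ (fun p : E × ℂ => f (p.1 + p.2 • w)) (z, t) := by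
    intro f z t hf
    refine AnalyticAt.comp_of_eq (g := f) (f := fun p : E × ℂ => p.1 + p.2 • w) hf ?_ rfl
    exact analyticAt_fst.add (analyticAt_snd.smul analyticAt_const)
  have hsl2 : ∀ (f : E → ℂ) (z : E) (t : ℂ), AnalyticAt ℂ f (z + t • w) →
      AnalyticAt ℂ (fun t : ℂ => f (z + t • w)) t := by
    intro f z t hf
    refine AnalyticAt.comp_of_eq (g := f) (f := fun t : ℂ => z + t • w) hf ?_ rfl
    exact analyticAt_const.add (analyticAt_id.smul analyticAt_const)
  refine ⟨fun z => (2 * Real.pi * Complex.I)⁻¹ * ∮ ζ in C(0, ρ), (fun p : E × ℂ =>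
    p.2⁻¹ * (b (p.1 + p.2 • w) / δ (p.1 + p.2 • w))) (z, ζ), ?_, ?_⟩
  · refine analyticAt_const.mul (tc_analyticAt_circleIntegral (fun p : E × ℂ =>
      p.2⁻¹ * (b (p.1 + p.2 • w) / δ (p.1 + p.2 • w))) 0 ρ hρ.le ?_)
    intro ζ hζ
    have hζ' : ‖ζ‖ = ρ := by simpa using hζ
    have h0ε : ‖(0 : E)‖ < ε := by simpa using hε0
    obtain ⟨-, i1, i2, -⟩ := hall _ (hin 0 h0ε ζ hζ'.le)
    refine (analyticAt_snd.inv ?_).mul ((hsl b 0 ζ i2).div (hsl δ 0 ζ i1) (hnz 0 h0ε ζ hζ'))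
    simp only
    rw [← norm_pos_iff, hζ']; exact hρ
  · filter_upwards [Metric.ball_mem_nhds (0 : E) hε0] with z hz
    rw [mem_ball_zero_iff] at hz
    have := tc_riemann1 (fun t => δ (z + t • w)) (fun t => b (z + t • w)) ρ hρ C
      (fun t ht => hsl2 δ z t (hall _ (hin z hz t (by simpa using ht))).2.1)
      (fun t ht => hsl2 b z t (hall _ (hin z hz t (by simpa using ht))).2.2.1)
      (fun t ht => hnz z hz t (by simpa using ht))
      (fun t ht => (hall _ (hin z hz t (by simpa using ht))).2.2.2)
    simpa using this

theorem tc_division {E : Type*} [NormedAddCommGroup E] [NormedSpace ℂ E] (B : Set E)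
    (ρ : ℝ) (hρ : 0 < ρ) (d : ℕ) (c : ℕ → E → ℂ) (hc : ∀ j ≤ d, AnalyticOnNhd ℂ (c j) B)
    (hq : ∀ z ∈ B, ∀ t ∈ Metric.sphere (0 : ℂ) ρ, ∑ j ∈ Finset.range (d + 1), c j z * t ^ j ≠ 0)
    (f : E × ℂ → ℂ) (hf : AnalyticOnNhd ℂ f (B ×ˢ Metric.closedBall (0 : ℂ) ρ)) :
    ∃ r : ℕ → E → ℂ, (∀ i, AnalyticOnNhd ℂ (r i) B) ∧ ∀ z ∈ B, ∀ t ∈ Metric.ball (0 : ℂ) ρ,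
      ∃ A : ℂ, f (z, t) = A * (∑ j ∈ Finset.range (d + 1), c j z * t ^ j) +
        ∑ i ∈ Finset.range d, r i z * t ^ i := by
  set Q : E × ℂ → ℂ := fun p => ∑ j ∈ Finset.range (d + 1), c j p.1 * p.2 ^ j with hQ
  have hQa : ∀ z ∈ B, ∀ t, AnalyticAt ℂ Q (z, t) := by
    intro z hz t
    refine Finset.analyticAt_fun_sum _ fun j hj => ?_
    have h1 : AnalyticAt ℂ (fun p : E × ℂ => c j p.1) (z, t) :=
      (hc j (by simp at hj; omega) z hz).comp_of_eq analyticAt_fst rfl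
    exact h1.mul (analyticAt_snd.pow j)
  -- the kernel
  set K : ℕ → E × ℂ → ℂ := fun i p => f p / Q p * ∑ j ∈ Finset.range (d + 1),
    if i < j then c j p.1 * p.2 ^ (j - 1 - i) else 0 with hK
  have hKa : ∀ i, ∀ z ∈ B, ∀ ζ ∈ Metric.sphere (0 : ℂ) ρ, AnalyticAt ℂ (K i) (z, ζ) := by
    intro i z hz ζ hζ
    refine ((hf (z, ζ) ⟨hz, Metric.sphere_subset_closedBall hζ⟩).div (hQa z hz ζ) (hq z hz ζ hζ)).mul ?_
    refine Finset.analyticAt_fun_sum _ fun j hj => ?_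
    split_ifs
    · have h1 : AnalyticAt ℂ (fun p : E × ℂ => c j p.1) (z, ζ) :=
        (hc j (by simp at hj; omega) z hz).comp_of_eq analyticAt_fst rfl
      exact h1.mul (analyticAt_snd.pow _)
    · exact analyticAt_const
  have hcs : ∀ z : E, Continuous fun t : ℂ => (z, t) := fun z => by fun_prop
  have hKc : ∀ i, ∀ z ∈ B, ContinuousOn (fun ζ => K i (z, ζ)) (Metric.sphere (0 : ℂ) ρ) := by
    intro i z hz ζ hζ
    exact ((hKa i z hz ζ hζ).continuousAt.comp (f := fun t : ℂ => (z, t))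
      (hcs z).continuousAt).continuousWithinAt
  have hpi : (2 * Real.pi * Complex.I : ℂ) ≠ 0 := by simp [Real.pi_ne_zero]
  refine ⟨fun i z => (2 * Real.pi * Complex.I)⁻¹ * ∮ ζ in C(0, ρ), K i (z, ζ), ?_, ?_⟩
  · intro i z hz
    exact analyticAt_const.mul (tc_analyticAt_circleIntegral (K i) z ρ hρ.le (hKa i z hz))
  intro z hz t ht
  refine ⟨(2 * Real.pi * Complex.I)⁻¹ * ∮ ζ in C(0, ρ), (ζ - t)⁻¹ * (f (z, ζ) / Q (z, ζ)), ?_⟩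
  have hne : ∀ ζ ∈ Metric.sphere (0 : ℂ) ρ, ζ - t ≠ 0 := by
    intro ζ hζ h
    rw [sub_eq_zero.1 h] at hζ
    simp at hζ ht
    linarith
  have hfd : DifferentiableOn ℂ (fun ζ => f (z, ζ)) (Metric.closedBall 0 ρ) := by
    intro ζ hζ
    have : AnalyticAt ℂ (fun ζ => f (z, ζ)) ζ :=
      (hf (z, ζ) ⟨hz, hζ⟩).comp_of_eq (analyticAt_const.prod analyticAt_id) rfl
    exact this.differentiableAt.differentiableWithinAt
  have hca := hfd.circleIntegral_sub_inv_smul ht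
  have hpt : ∀ ζ ∈ Metric.sphere (0 : ℂ) ρ, (ζ - t)⁻¹ • f (z, ζ) =
      Q (z, t) * ((ζ - t)⁻¹ * (f (z, ζ) / Q (z, ζ))) + ∑ i ∈ Finset.range d, t ^ i * K i (z, ζ) := by
    intro ζ hζ
    have h1 := hq z hz ζ hζ
    have h2 := hne ζ hζ
    have h3 : Q (z, ζ) - Q (z, t) = (ζ - t) * ∑ i ∈ Finset.range d, t ^ i *
        ∑ j ∈ Finset.range (d + 1), (if i < j then c j z * ζ ^ (j - 1 - i) else 0) := by
      simp only [Finset.mul_sum, hQ]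
      rw [Finset.sum_comm, ← Finset.sum_sub_distrib]
      refine Finset.sum_congr rfl fun j hj => ?_
      have hjd : j ≤ d := by simp at hj; omega
      have h4 : ∑ i ∈ Finset.range d, (ζ - t) * (t ^ i * (if i < j then c j z * ζ ^ (j - 1 - i) else 0)) =
          ∑ i ∈ Finset.range j, (ζ - t) * (t ^ i * (c j z * ζ ^ (j - 1 - i))) := by
        rw [← Finset.sum_subset (Finset.range_mono hjd)]
        · refine Finset.sum_congr rfl fun i hi => ?_
          rw [if_pos (Finset.mem_range.1 hi)]
        · intro i _ hi
          rw [if_neg (by simpa using hi)]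
          simp
      rw [h4]
      have h5 := Commute.geom_sum₂_mul (Commute.all t ζ) j
      have h6 : ∑ i ∈ Finset.range j, (ζ - t) * (t ^ i * (c j z * ζ ^ (j - 1 - i))) =
          - c j z * ((∑ i ∈ Finset.range j, t ^ i * ζ ^ (j - 1 - i)) * (t - ζ)) := by
        rw [Finset.sum_mul, Finset.mul_sum]
        refine Finset.sum_congr rfl fun i hi => ?_
        ring
      rw [h6, h5]
      ring
    have h7 : ∑ i ∈ Finset.range d, t ^ i * K i (z, ζ) = f (z, ζ) / Q (z, ζ) *
        ∑ i ∈ Finset.range d, t ^ i *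
        ∑ j ∈ Finset.range (d + 1), (if i < j then c j z * ζ ^ (j - 1 - i) else 0) := by
      rw [Finset.mul_sum]
      refine Finset.sum_congr rfl fun i hi => ?_
      simp only [hK]
      ring
    have h1' : Q (z, ζ) ≠ 0 := h1
    have h8 : ∑ i ∈ Finset.range d, t ^ i *
        ∑ j ∈ Finset.range (d + 1), (if i < j then c j z * ζ ^ (j - 1 - i) else 0) =
        (ζ - t)⁻¹ * (Q (z, ζ) - Q (z, t)) := by
      rw [h3, inv_mul_cancel_left₀ h2]
    rw [h7, h8, smul_eq_mul]
    field_simp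
    ring
  have i1 : CircleIntegrable (fun ζ => (ζ - t)⁻¹ * (f (z, ζ) / Q (z, ζ))) 0 ρ := by
    apply ContinuousOn.circleIntegrable hρ.le
    refine ContinuousOn.mul (ContinuousOn.inv₀ (by fun_prop) hne) ?_
    intro ζ hζ
    have := ((hf (z, ζ) ⟨hz, Metric.sphere_subset_closedBall hζ⟩).div (hQa z hz ζ) (hq z hz ζ hζ))
    exact (this.continuousAt.comp (f := fun t : ℂ => (z, t)) (hcs z).continuousAt).continuousWithinAt
  have i2 : ∀ i ∈ Finset.range d, CircleIntegrable (fun ζ => t ^ i * K i (z, ζ)) 0 ρ := by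
    intro i _
    apply ContinuousOn.circleIntegrable hρ.le
    exact continuousOn_const.mul (hKc i z hz)
  have i3 : CircleIntegrable (fun ζ => ∑ i ∈ Finset.range d, t ^ i * K i (z, ζ)) 0 ρ := by
    apply ContinuousOn.circleIntegrable hρ.le
    exact continuousOn_finset_sum _ fun i _ => continuousOn_const.mul (hKc i z hz)
  have i4 : CircleIntegrable (fun ζ => Q (z, t) * ((ζ - t)⁻¹ * (f (z, ζ) / Q (z, ζ)))) 0 ρ := by
    exact i1.const_smul (a := Q (z, t))
  rw [circleIntegral.integral_congr hρ.le hpt, circleIntegral.integral_add i4 i3,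
    circleIntegral.integral_fun_sum i2, circleIntegral.integral_const_mul] at hca
  simp only [circleIntegral.integral_const_mul, smul_eq_mul] at hca
  have : f (z, t) = (2 * Real.pi * Complex.I)⁻¹ * (2 * Real.pi * Complex.I * f (z, t)) := by
    rw [inv_mul_cancel_left₀ hpi]
  rw [this, ← hca, mul_add, Finset.mul_sum]
  congr 1
  · ring
  · refine Finset.sum_congr rfl fun i _ => ?_
    ring

theorem tc_domain {E : Type*} [NormedAddCommGroup E] [NormedSpace ℂ E] (f g : E → ℂ)
    (hf : AnalyticAt ℂ f 0) (hg : AnalyticAt ℂ g 0) (hfg : ∀ᶠ z in 𝓝 (0 : E), f z * g z = 0)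
    (hne : ¬ ∀ᶠ z in 𝓝 (0 : E), f z = 0) : ∀ᶠ z in 𝓝 (0 : E), g z = 0 := by
  obtain ⟨r, hr, hall⟩ := Metric.eventually_nhds_iff_ball.1
    (hf.eventually_analyticAt.and (hg.eventually_analyticAt.and hfg))
  have hfr : ∃ᶠ z in 𝓝 (0 : E), f z ≠ 0 := Filter.not_eventually.1 hne
  obtain ⟨y, hy, hyb⟩ := (hfr.and_eventually (Metric.ball_mem_nhds (0 : E) hr)).exists
  have hga : AnalyticOnNhd ℂ g (Metric.ball (0 : E) r) := fun z hz => (hall z hz).2.1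
  have hgy : g =ᶠ[𝓝 y] 0 := by
    filter_upwards [(hall y hyb).1.continuousAt.eventually_ne hy, Metric.isOpen_ball.mem_nhds hyb]
      with z hz hzb
    exact (mul_eq_zero.1 (hall z hzb).2.2).resolve_left hz
  have := hga.eqOn_zero_of_preconnected_of_eventuallyEq_zero
    ((convex_ball (0 : E) r).isPreconnected) hyb hgy
  filter_upwards [Metric.ball_mem_nhds (0 : E) hr] with z hz
  exact this hz

theorem tc_pseudo {R : Type*} [CommRing R] (d : ℕ) (p : Polynomial R) (hp : p.degree < (d + 1 : ℕ)) (n : ℕ) :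
    ∀ ω : Polynomial R, ω.degree < (n : ℕ) → ∃ (M : ℕ) (A r : Polynomial R), r.degree < (d : ℕ) ∧
      Polynomial.C (p.coeff d) ^ M * ω = A * p + r := by
  rw [Polynomial.degree_lt_iff_coeff_zero] at hp
  induction n with
  | zero =>
    intro ω hω
    refine ⟨0, 0, ω, lt_of_lt_of_le hω (by exact_mod_cast Nat.zero_le d), by simp⟩
  | succ n ih =>
    intro ω hω
    rcases lt_or_ge n d with hnd | hnd
    · exact ⟨0, 0, ω, lt_of_lt_of_le hω (by exact_mod_cast hnd), by simp⟩
    · have h1 : (Polynomial.C (p.coeff d) * ω -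
          Polynomial.C (ω.coeff n) * (Polynomial.X ^ (n - d) * p)).degree < ((n : ℕ) : WithBot ℕ) := by
        rw [Polynomial.degree_lt_iff_coeff_zero] at hω ⊢
        intro m hm
        simp only [Polynomial.coeff_sub, Polynomial.coeff_C_mul, Polynomial.coeff_X_pow_mul']
        rw [if_pos (by omega)]
        rcases eq_or_lt_of_le hm with rfl | hm'
        · rw [Nat.sub_sub_self hnd]; ring
        · rw [hω m (by omega), hp (m - (n - d)) (by omega)]; ring
      obtain ⟨M, A, r, hr, h⟩ := ih _ h1
      refine ⟨M + 1, A + Polynomial.C (p.coeff d) ^ M * (Polynomial.C (ω.coeff n) * Polynomial.X ^ (n - d)),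
        r, hr, ?_⟩
      rw [mul_sub] at h
      linear_combination h

theorem tc_root_bound (d : ℕ) (c : ℕ → ℂ) (η : ℝ) (hη : 0 < η)
    (h : ∑ j ∈ Finset.range d, ‖c j‖ * η ^ j < η ^ d) (t : ℂ)
    (ht : t ^ d + ∑ j ∈ Finset.range d, c j * t ^ j = 0) : ‖t‖ < η := by
  by_contra hlt
  push Not at hlt
  have h1 : t ^ d = - ∑ j ∈ Finset.range d, c j * t ^ j := by linear_combination ht
  have h2 : ‖t‖ ^ d ≤ ∑ j ∈ Finset.range d, ‖c j‖ * ‖t‖ ^ j := by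
    rw [← norm_pow, h1, norm_neg]
    refine (norm_sum_le _ _).trans (Finset.sum_le_sum fun j _ => ?_)
    rw [norm_mul, norm_pow]
  set x := ‖t‖ / η with hx
  have hx1 : 1 ≤ x := (one_le_div hη).2 hlt
  have htx : ‖t‖ = x * η := by rw [hx]; field_simp
  rw [htx] at h2
  have h3 : ∑ j ∈ Finset.range d, ‖c j‖ * (x * η) ^ j ≤ x ^ d * ∑ j ∈ Finset.range d, ‖c j‖ * η ^ j := by
    rw [Finset.mul_sum]
    refine Finset.sum_le_sum fun j hj => ?_
    have : x ^ j ≤ x ^ d := pow_le_pow_right₀ hx1 (by simp at hj; omega)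
    rw [mul_pow]
    calc _ = x ^ j * (‖c j‖ * η ^ j) := by ring
      _ ≤ _ := by gcongr
  have h4 : 0 < x ^ d := by positivity
  rw [mul_pow] at h2
  nlinarith

/-- The ring of functions analytic at the origin. -/
def tcR (E : Type*) [NormedAddCommGroup E] [NormedSpace ℂ E] : Subring (E → ℂ) where
  carrier := {f | AnalyticAt ℂ f 0}
  mul_mem' ha hb := AnalyticAt.mul ha hb
  one_mem' := analyticAt_const
  add_mem' ha hb := AnalyticAt.add ha hb
  zero_mem' := analyticAt_const
  neg_mem' ha := AnalyticAt.neg ha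

/-- Evaluation at a point. -/
def tcEv {E : Type*} [NormedAddCommGroup E] [NormedSpace ℂ E] (z : E) : tcR E →+* ℂ :=
  (Pi.evalRingHom (fun _ : E => ℂ) z).comp (tcR E).subtype

theorem tcEv_apply {E : Type*} [NormedAddCommGroup E] [NormedSpace ℂ E] (z : E) (f : tcR E) :
    tcEv z f = f.1 z := rfl

theorem tc_riemann2 {E : Type*} [NormedAddCommGroup E] [NormedSpace ℂ E] (δ b : E → ℂ)
    (hδ : AnalyticAt ℂ δ 0) (hb : AnalyticAt ℂ b 0) (hne : ¬ ∀ᶠ z in 𝓝 (0 : E), δ z = 0)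
    (hC : ∀ η : ℝ, 0 < η → ∀ᶠ z in 𝓝 (0 : E), δ z ≠ 0 → ‖b z‖ ≤ η * ‖δ z‖) :
    ∃ a : E → ℂ, AnalyticAt ℂ a 0 ∧ a 0 = 0 ∧ ∀ᶠ z in 𝓝 (0 : E), b z = a z * δ z := by
  have hne2 : ¬ ∀ᶠ z in 𝓝 (0 : E), (fun z => δ z * δ z) z = 0 := by
    intro h
    apply hne
    filter_upwards [h] with z hz
    exact mul_self_eq_zero.1 hz
  have hC2 : ∀ᶠ z in 𝓝 (0 : E), ‖b z * δ z‖ ≤ 1 * ‖δ z * δ z‖ := by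
    filter_upwards [hC 1 one_pos] with z hz
    by_cases h : δ z = 0
    · simp [h]
    · rw [norm_mul, norm_mul, ← mul_assoc]
      gcongr
      exact hz h
  obtain ⟨a, ha, hab⟩ := tc_riemann (fun z => δ z * δ z) (fun z => b z * δ z) (hδ.mul hδ) (hb.mul hδ)
    hne2 1 hC2
  have hz : ∀ᶠ z in 𝓝 (0 : E), b z - a z * δ z = 0 := by
    refine tc_domain δ (fun z => b z - a z * δ z) hδ (hb.sub (ha.mul hδ)) ?_ hne
    filter_upwards [hab] with z hz
    linear_combination hz
  have hz2 : ∀ᶠ z in 𝓝 (0 : E), b z = a z * δ z := by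
    filter_upwards [hz] with z hz
    exact sub_eq_zero.1 hz
  refine ⟨a, ha, ?_, hz2⟩
  by_contra ha0
  have hpos : 0 < ‖a 0‖ / 2 := by have := norm_pos_iff.2 ha0; positivity
  have h1 : ∀ᶠ z in 𝓝 (0 : E), ‖a 0‖ / 2 < ‖a z‖ :=
    ha.continuousAt.norm.eventually_const_lt (by linarith)
  apply hne
  filter_upwards [h1, hz2, hC _ hpos] with z i1 i2 i3
  by_contra hd
  have i4 := i3 hd
  rw [i2, norm_mul] at i4
  have := le_of_mul_le_mul_right i4 (norm_pos_iff.2 hd)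
  linarith

theorem tc_minpoly {E : Type*} [NormedAddCommGroup E] [NormedSpace ℂ E] (X : Set (E × ℂ))
    (ω : Polynomial (tcR E)) (hω : ω.Monic)
    (hωX : ∀ᶠ q : E × ℂ in 𝓝 0, q ∈ X → (ω.map (tcEv q.1)).eval q.2 = 0) :
    ∃ (d : ℕ) (p : Polynomial (tcR E)), p.degree < (d + 1 : ℕ) ∧
      (¬ ∀ᶠ z in 𝓝 (0 : E), (p.coeff d).1 z = 0) ∧
      (∀ᶠ q : E × ℂ in 𝓝 0, q ∈ X → (p.map (tcEv q.1)).eval q.2 = 0) ∧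
      ∀ r : Polynomial (tcR E), r.degree < (d : ℕ) →
        (∀ᶠ q : E × ℂ in 𝓝 0, q ∈ X → (r.map (tcEv q.1)).eval q.2 = 0) →
        ∀ i, ∀ᶠ z in 𝓝 (0 : E), (r.coeff i).1 z = 0 := by
  classical
  have hex : ∃ n : ℕ, ∃ p : Polynomial (tcR E), p.degree < (n : ℕ) ∧
      (∀ᶠ q : E × ℂ in 𝓝 0, q ∈ X → (p.map (tcEv q.1)).eval q.2 = 0) ∧
      ∃ i, ¬ ∀ᶠ z in 𝓝 (0 : E), (p.coeff i).1 z = 0 := by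
    refine ⟨ω.natDegree + 1, ω, ?_, hωX, ω.natDegree, ?_⟩
    · exact lt_of_le_of_lt Polynomial.degree_le_natDegree (by exact_mod_cast Nat.lt_succ_self _)
    · rw [Polynomial.Monic.coeff_natDegree hω]
      intro h
      have : (1 : ℂ) = 0 := h.self_of_nhds
      exact one_ne_zero this
  have hmin : ∀ m < Nat.find hex, ∀ r : Polynomial (tcR E), r.degree < (m : ℕ) →
        (∀ᶠ q : E × ℂ in 𝓝 0, q ∈ X → (r.map (tcEv q.1)).eval q.2 = 0) →
        ∀ i, ∀ᶠ z in 𝓝 (0 : E), (r.coeff i).1 z = 0 := by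
    intro m hm r hr hrX i
    have := Nat.find_min hex hm
    push Not at this
    exact this r hr hrX i
  obtain ⟨p, hp, hpX, i, hi⟩ := Nat.find_spec hex
  rcases h0 : Nat.find hex with _ | d
  · rw [h0] at hp
    have : p = 0 := by
      rw [Polynomial.degree_lt_iff_coeff_zero] at hp
      ext1 m
      rw [hp m (Nat.zero_le _), Polynomial.coeff_zero]
    subst this
    exact absurd (Eventually.of_forall fun z => rfl) hi
  · rw [h0] at hp hmin
    refine ⟨d, p, hp, ?_, hpX, hmin d (Nat.lt_succ_self d)⟩
    intro hd
    set r := p - Polynomial.C (p.coeff d) * Polynomial.X ^ d with hr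
    have hrc : ∀ m, m ≠ d → r.coeff m = p.coeff m := by
      intro m hm
      simp [hr, Polynomial.coeff_X_pow, hm]
    have hrd : r.degree < (d : ℕ) := by
      rw [Polynomial.degree_lt_iff_coeff_zero] at hp ⊢
      intro m hm
      rcases eq_or_lt_of_le hm with rfl | hm'
      · simp [hr]
      · rw [hrc m hm'.ne', hp m hm']
    have hrX : ∀ᶠ q : E × ℂ in 𝓝 0, q ∈ X → (r.map (tcEv q.1)).eval q.2 = 0 := by
      have hd2 : ∀ᶠ q : E × ℂ in 𝓝 0, (p.coeff d).1 q.1 = 0 :=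
        (continuous_fst.tendsto (0 : E × ℂ)).eventually hd
      filter_upwards [hpX, hd2] with q h1 h2 hq
      simp [hr, h1 hq, tcEv_apply, h2]
    have := hmin d (Nat.lt_succ_self d) r hrd hrX
    apply hi
    by_cases hid : i = d
    · rw [hid]; exact hd
    · rw [← hrc i hid]; exact this i

theorem tc_core {E : Type*} [NormedAddCommGroup E] [NormedSpace ℂ E] (X : Set (E × ℂ))
    (ω : Polynomial (tcR E)) (hω : ω.Monic) (hω0 : ∀ j < ω.natDegree, (ω.coeff j).1 0 = 0)
    (hωX : ∀ᶠ q : E × ℂ in 𝓝 0, q ∈ X → (ω.map (tcEv q.1)).eval q.2 = 0) :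
    ∃ (d : ℕ) (c : ℕ → E → ℂ) (δ : E → ℂ), (∀ j, AnalyticAt ℂ (c j) 0 ∧ c j 0 = 0) ∧
      AnalyticAt ℂ δ 0 ∧ (¬ ∀ᶠ z in 𝓝 (0 : E), δ z = 0) ∧
      (∀ᶠ q : E × ℂ in 𝓝 0, q ∈ X →
        δ q.1 * (q.2 ^ d + ∑ j ∈ Finset.range d, c j q.1 * q.2 ^ j) = 0) ∧
      ∀ r : ℕ → E → ℂ, (∀ i, AnalyticAt ℂ (r i) 0) →
        (∀ᶠ q : E × ℂ in 𝓝 0, q ∈ X → ∑ i ∈ Finset.range d, r i q.1 * q.2 ^ i = 0) →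
        ∀ i < d, ∀ᶠ z in 𝓝 (0 : E), r i z = 0 := by
  obtain ⟨d, p, hp, hpd, hpX, hmin⟩ := tc_minpoly X ω hω hωX
  set δ : E → ℂ := (p.coeff d).1 with hδ
  have hδa : AnalyticAt ℂ δ 0 := (p.coeff d).2
  set k := ω.natDegree with hk
  have hωk : ω.degree < ((k + 1 : ℕ) : WithBot ℕ) :=
    lt_of_le_of_lt Polynomial.degree_le_natDegree (by exact_mod_cast Nat.lt_succ_self _)
  obtain ⟨M, A, r, hr, hdiv⟩ := tc_pseudo d p hp (k + 1) ω hωk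
  have hdivz : ∀ z : E, Polynomial.C (δ z) ^ M * ω.map (tcEv z) =
      A.map (tcEv z) * p.map (tcEv z) + r.map (tcEv z) := by
    intro z
    have := congrArg (Polynomial.map (tcEv z)) hdiv
    simpa [tcEv_apply] using this
  have hrX : ∀ᶠ q : E × ℂ in 𝓝 0, q ∈ X → (r.map (tcEv q.1)).eval q.2 = 0 := by
    filter_upwards [hωX, hpX] with q h1 h2 hq
    have := congrArg (Polynomial.eval q.2) (hdivz q.1)
    rw [Polynomial.eval_mul, Polynomial.eval_add, Polynomial.eval_mul, h1 hq, h2 hq] at this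
    simpa using this.symm
  have hr0 := hmin r hr hrX
  have hrz : ∀ᶠ z in 𝓝 (0 : E), r.map (tcEv z) = 0 := by
    have : ∀ᶠ z in 𝓝 (0 : E), ∀ i ∈ Finset.range d, (r.coeff i).1 z = 0 :=
      (Finset.eventually_all _).2 fun i _ => hr0 i
    filter_upwards [this] with z hz
    ext1 m
    rw [Polynomial.coeff_map, Polynomial.coeff_zero, tcEv_apply]
    by_cases hm : m < d
    · exact hz m (Finset.mem_range.2 hm)
    · rw [Polynomial.degree_lt_iff_coeff_zero] at hr
      rw [hr m (by omega)]; rfl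
  -- the roots of `ω` are small
  have hsmall : ∀ η : ℝ, 0 < η → ∀ᶠ z in 𝓝 (0 : E), ∀ t, (ω.map (tcEv z)).eval t = 0 → ‖t‖ < η := by
    intro η hη
    have hcont : ContinuousAt (fun z : E => ∑ j ∈ Finset.range k, ‖(ω.coeff j).1 z‖ * η ^ j) 0 := by
      refine tendsto_finsetSum _ fun j hj => ?_
      have : ContinuousAt (ω.coeff j).1 0 := AnalyticAt.continuousAt (ω.coeff j).2
      exact (this.norm).mul continuousAt_const
    have hlt : ∀ᶠ z in 𝓝 (0 : E), ∑ j ∈ Finset.range k, ‖(ω.coeff j).1 z‖ * η ^ j < η ^ k := by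
      apply hcont.eventually_lt_const
      beta_reduce
      rw [Finset.sum_eq_zero]
      · positivity
      · intro j hj
        rw [hω0 j (Finset.mem_range.1 hj)]; simp
    filter_upwards [hlt] with z hz t ht
    refine tc_root_bound k (fun j => (ω.coeff j).1 z) η hη hz t ?_
    rw [Polynomial.eval_eq_sum_range, hω.natDegree_map, Finset.sum_range_succ] at ht
    simp only [Polynomial.coeff_map, tcEv_apply] at ht
    rw [← hk, hk, hω.coeff_natDegree] at ht
    rw [add_comm, hk]
    simpa using ht
  have hbound : ∀ j < d, ∀ η : ℝ, 0 < η → ∀ᶠ z in 𝓝 (0 : E), δ z ≠ 0 →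
      ‖(p.coeff j).1 z‖ ≤ η * ‖δ z‖ := by
    intro j hj η hη
    set η' := min 1 (η / (d.choose j + 1)) with hη'
    have hη'0 : 0 < η' := by positivity
    filter_upwards [hsmall η' hη'0, hrz] with z h1 h2 hz
    set P := p.map (tcEv z) with hP
    have hPd : P.coeff d = δ z := by rw [hP, Polynomial.coeff_map, tcEv_apply]
    have hPdeg : P.natDegree = d := by
      apply Polynomial.natDegree_eq_of_le_of_coeff_ne_zero _ (by rw [hPd]; exact hz)
      rw [Polynomial.natDegree_le_iff_coeff_eq_zero]
      intro m hm
      rw [Polynomial.degree_lt_iff_coeff_zero] at hp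
      rw [hP, Polynomial.coeff_map, hp m hm, map_zero]
    set m := Polynomial.C (δ z)⁻¹ * P with hm
    have hmdeg : m.natDegree = d := by
      rw [hm, Polynomial.natDegree_C_mul (inv_ne_zero hz), hPdeg]
    have hmon : m.Monic := by
      rw [Polynomial.Monic, Polynomial.leadingCoeff, hmdeg, hm, Polynomial.coeff_C_mul, hPd,
        inv_mul_cancel₀ hz]
    have hroots : ∀ t ∈ (m.map (RingHom.id ℂ)).roots, ‖t‖ ≤ η' := by
      intro t ht
      rw [Polynomial.map_id] at ht
      have h3 := (Polynomial.mem_roots'.1 ht).2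
      rw [Polynomial.IsRoot, hm, Polynomial.eval_mul, Polynomial.eval_C] at h3
      have h4 := (mul_eq_zero.1 h3).resolve_left (inv_ne_zero hz)
      apply (h1 t _).le
      have h5 := congrArg (Polynomial.eval t) (hdivz z)
      rw [h2, add_zero, Polynomial.eval_mul, Polynomial.eval_mul, h4, mul_zero, Polynomial.eval_pow,
        Polynomial.eval_C] at h5
      exact (mul_eq_zero.1 h5).resolve_left (pow_ne_zero _ hz)
    have h6 := Polynomial.coeff_le_of_roots_le (f := RingHom.id ℂ) j hmon (IsAlgClosed.splits _) hroots
    rw [Polynomial.map_id, hmdeg, hm, Polynomial.coeff_C_mul, norm_mul, norm_inv] at h6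
    have h7 : ‖P.coeff j‖ = ‖(p.coeff j).1 z‖ := by rw [hP, Polynomial.coeff_map, tcEv_apply]
    rw [h7, inv_mul_le_iff₀ (norm_pos_iff.2 hz)] at h6
    have h8 : η' ^ (d - j) ≤ η' := by
      calc η' ^ (d - j) ≤ η' ^ 1 := pow_le_pow_of_le_one hη'0.le (min_le_left _ _) (by omega)
        _ = η' := pow_one _
    have h9 : η' ^ (d - j) * (d.choose j : ℝ) ≤ η := by
      calc η' ^ (d - j) * (d.choose j : ℝ) ≤ η' * (d.choose j + 1 : ℝ) := by
            gcongr; linarith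
        _ ≤ η / (d.choose j + 1) * (d.choose j + 1 : ℝ) := by
            gcongr; exact min_le_right _ _
        _ = η := by field_simp
    calc _ ≤ _ := h6
      _ ≤ ‖δ z‖ * η := by gcongr
      _ = _ := mul_comm _ _
  have hex : ∀ j : ℕ, ∃ a : E → ℂ, AnalyticAt ℂ a 0 ∧ a 0 = 0 ∧
      (j < d → ∀ᶠ z in 𝓝 (0 : E), (p.coeff j).1 z = a z * δ z) := by
    intro j
    by_cases hj : j < d
    · obtain ⟨a, h1, h2, h3⟩ := tc_riemann2 δ (p.coeff j).1 hδa (p.coeff j).2 hpd (hbound j hj)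
      exact ⟨a, h1, h2, fun _ => h3⟩
    · exact ⟨0, analyticAt_const, rfl, fun h => absurd h hj⟩
  choose c hc1 hc2 hc3 using hex
  refine ⟨d, c, δ, fun j => ⟨hc1 j, hc2 j⟩, hδa, hpd, ?_, ?_⟩
  · have h1 : ∀ᶠ z in 𝓝 (0 : E), ∀ j ∈ Finset.range d, (p.coeff j).1 z = c j z * δ z :=
      (Finset.eventually_all _).2 fun j hj => hc3 j (Finset.mem_range.1 hj)
    have h2 := (continuous_fst.tendsto (0 : E × ℂ)).eventually h1
    filter_upwards [hpX, h2] with q i1 i2 hq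
    have i3 := i1 hq
    have hdeg : (p.map (tcEv q.1)).natDegree < d + 1 := by
      rw [Nat.lt_succ_iff, Polynomial.natDegree_le_iff_coeff_eq_zero]
      intro m hm
      rw [Polynomial.degree_lt_iff_coeff_zero] at hp
      rw [Polynomial.coeff_map, hp m hm, map_zero]
    rw [Polynomial.eval_eq_sum_range' hdeg, Finset.sum_range_succ] at i3
    simp only [Polynomial.coeff_map, tcEv_apply] at i3
    rw [Finset.sum_congr rfl fun j hj => by rw [i2 j hj]] at i3
    rw [mul_add, Finset.mul_sum, ← i3, add_comm]
    congr 1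
    refine Finset.sum_congr rfl fun j _ => by ring
  · intro r hra hrX i hi
    set rp : Polynomial (tcR E) := ∑ i ∈ Finset.range d, Polynomial.C (⟨r i, hra i⟩ : tcR E) * Polynomial.X ^ i
      with hrp
    have hcoef : ∀ m, rp.coeff m = if m < d then ⟨r m, hra m⟩ else 0 := by
      intro m
      simp [hrp, Polynomial.finset_sum_coeff, Polynomial.coeff_X_pow]
    have hdeg : rp.degree < (d : ℕ) := by
      rw [Polynomial.degree_lt_iff_coeff_zero]
      intro m hm
      rw [hcoef, if_neg (by omega)]
    have := hmin rp hdeg ?_ i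
    · rw [hcoef, if_pos hi] at this
      exact this
    · filter_upwards [hrX] with q h1 hq
      rw [← h1 hq, hrp, Polynomial.map_sum, Polynomial.eval_finset_sum]
      refine Finset.sum_congr rfl fun j _ => ?_
      simp [tcEv_apply]

/-- The monic polynomial of degree `d` with given lower coefficients. -/
def tcPoly {A : Type*} [CommRing A] (d : ℕ) (c : ℕ → A) : Polynomial A :=
  Polynomial.X ^ d + ∑ j ∈ Finset.range d, Polynomial.C (c j) * Polynomial.X ^ j

theorem tcPoly_coeff {A : Type*} [CommRing A] (d : ℕ) (c : ℕ → A) (m : ℕ) :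
    (tcPoly d c).coeff m = if m < d then c m else if m = d then 1 else 0 := by
  simp only [tcPoly, Polynomial.coeff_add, Polynomial.coeff_X_pow, Polynomial.finset_sum_coeff,
    Polynomial.coeff_C_mul, mul_ite, mul_one, mul_zero, Finset.sum_ite_eq, Finset.mem_range]
  by_cases h : m < d
  · rw [if_neg h.ne, if_pos h, zero_add]
  · rw [if_neg h, if_neg h, add_zero]

theorem tcPoly_natDegree {A : Type*} [CommRing A] [Nontrivial A] (d : ℕ) (c : ℕ → A) :
    (tcPoly d c).natDegree = d := by
  apply Polynomial.natDegree_eq_of_le_of_coeff_ne_zero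
  · rw [Polynomial.natDegree_le_iff_coeff_eq_zero]
    intro m hm
    rw [tcPoly_coeff, if_neg (by omega), if_neg (by omega)]
  · rw [tcPoly_coeff]; simp

theorem tcPoly_monic {A : Type*} [CommRing A] [Nontrivial A] (d : ℕ) (c : ℕ → A) :
    (tcPoly d c).Monic := by
  rw [Polynomial.Monic, Polynomial.leadingCoeff, tcPoly_natDegree, tcPoly_coeff]; simp

theorem tcPoly_eval {A : Type*} [CommRing A] (d : ℕ) (c : ℕ → A) (t : A) :
    (tcPoly d c).eval t = t ^ d + ∑ j ∈ Finset.range d, c j * t ^ j := by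
  simp [tcPoly, Polynomial.eval_finset_sum]

theorem tcPoly_map {A B : Type*} [CommRing A] [CommRing B] (f : A →+* B) (d : ℕ) (c : ℕ → A) :
    (tcPoly d c).map f = tcPoly d (fun j => f (c j)) := by
  simp [tcPoly, Polynomial.map_sum]

theorem tc_prod_bound (s : Multiset ℂ) (x : ℂ) (B : ℝ) (hB : 0 ≤ B) (h : ∀ a ∈ s, ‖x - a‖ ≤ B) :
    ‖(s.map (fun a => x - a)).prod‖ ≤ B ^ s.card := by
  induction s using Multiset.induction_on with
  | empty => simp
  | cons a s ih =>
    rw [Multiset.map_cons, Multiset.prod_cons, norm_mul, Multiset.card_cons, pow_succ']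
    have h1 := ih fun b hb => h b (Multiset.mem_cons_of_mem hb)
    have h2 := h a (Multiset.mem_cons_self a s)
    gcongr

theorem tc_prod_poly (k : ℕ) (s : Multiset ℂ) (hs : s.card = k) :
    (s.map (fun a => Polynomial.X - Polynomial.C a)).prod =
      tcPoly k (fun j => (-1) ^ (k - j) * s.esymm (k - j)) := by
  ext m
  rw [tcPoly_coeff]
  rcases lt_trichotomy m k with h | h | h
  · rw [Multiset.prod_X_sub_C_coeff _ (by omega), if_pos h, hs]
  · rw [if_neg (by omega), if_pos h, Multiset.prod_X_sub_C_coeff _ (by omega), hs, h]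
    simp [Multiset.esymm]
  · rw [if_neg (by omega), if_neg (by omega)]
    apply Polynomial.coeff_eq_zero_of_natDegree_lt
    rw [Polynomial.natDegree_multiset_prod_X_sub_C_eq_card, hs]; exact h

theorem tc_weier {E : Type*} [NormedAddCommGroup E] [NormedSpace ℂ E] (U : Set (E × ℂ)) (hU : IsOpen U)
    (h0 : (0 : E × ℂ) ∈ U) (S : Set (E × ℂ → ℂ)) (hS : ∀ g ∈ S, AnalyticOnNhd ℂ g U) (C : ℝ)
    (hcone : ∀ᶠ q : E × ℂ in 𝓝 0, (q ∈ U ∧ ∀ g ∈ S, g q = 0) → ‖q.2‖ ≤ C * ‖q.1‖)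
    (h : E × ℂ → ℂ) (hh : h ∈ S) (hne : ¬ ∀ᶠ t in 𝓝 (0 : ℂ), h (0, t) = 0) :
    ∃ (d : ℕ) (Q : E × ℂ → ℂ) (δ : E → ℂ), AnalyticAt ℂ Q 0 ∧
      (∃ K : ℝ, ∀ᶠ q : E × ℂ in 𝓝 0, ‖Q q‖ ≤ K * ‖q‖ ^ d) ∧ (∀ t, Q (0, t) = t ^ d) ∧
      AnalyticAt ℂ δ 0 ∧ (¬ ∀ᶠ z in 𝓝 (0 : E), δ z = 0) ∧
      ∀ᶠ q : E × ℂ in 𝓝 0, (q ∈ U ∧ ∀ g ∈ S, g q = 0) → Q q = 0 ∨ δ q.1 = 0 := by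
  set X : Set (E × ℂ) := {q | q ∈ U ∧ ∀ g ∈ S, g q = 0} with hX
  obtain ⟨ρ, hρ, -, ε, hε, k, s, hsub, hax, hs, hsym⟩ := tc_prep U hU h0 h (hS h hh) hne 1 one_pos
  have h0B : (0 : E) ∈ Metric.ball (0 : E) ε := by simpa using hε
  have hes : ∀ j, AnalyticOnNhd ℂ (fun z => (s z).esymm j) (Metric.ball (0 : E) ε) := by
    intro j
    have := hsym (fun p => p.2) (fun p _ => analyticAt_snd) j
    simpa using this
  set ω : Polynomial (tcR E) := tcPoly k (fun j => ⟨fun z => (-1) ^ (k - j) * (s z).esymm (k - j),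
    analyticAt_const.mul (hes (k - j) 0 h0B)⟩) with hω
  have hωz : ∀ z ∈ Metric.ball (0 : E) ε, ω.map (tcEv z) =
      ((s z).map (fun a => Polynomial.X - Polynomial.C a)).prod := by
    intro z hz
    rw [tc_prod_poly k (s z) (hs z hz).1, hω, tcPoly_map]
    rfl
  have hωm : ω.Monic := tcPoly_monic _ _
  have hωd : ω.natDegree = k := tcPoly_natDegree _ _
  have hω0 : ∀ j < ω.natDegree, (ω.coeff j).1 0 = 0 := by
    intro j hj
    rw [hωd] at hj
    have h1 : s 0 = Multiset.replicate k 0 := by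
      rw [Multiset.eq_replicate]
      refine ⟨(hs 0 h0B).1, fun b hb => ?_⟩
      have h2 := ((hs 0 h0B).2.2 b).1 hb
      by_contra hb0
      exact hax b (norm_pos_iff.2 hb0) h2.1.le h2.2
    have h3 := congrArg (fun p => Polynomial.coeff p j) (hωz 0 h0B)
    simp only [Polynomial.coeff_map, h1, tcEv_apply] at h3
    rw [h3]
    simp [Polynomial.coeff_X_pow, hj.ne]
  have hnear : ∀ (r r' : ℝ), 0 < r → 0 < r' → ∀ᶠ q : E × ℂ in 𝓝 0, ‖q.1‖ < r ∧ ‖q.2‖ < r' := by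
    intro r r' hr hr'
    have i1 : ∀ᶠ z in 𝓝 (0 : E), ‖z‖ < r := by
      filter_upwards [Metric.ball_mem_nhds (0 : E) hr] with z hz
      exact mem_ball_zero_iff.1 hz
    have i2 : ∀ᶠ z in 𝓝 (0 : ℂ), ‖z‖ < r' := by
      filter_upwards [Metric.ball_mem_nhds (0 : ℂ) hr'] with z hz
      exact mem_ball_zero_iff.1 hz
    exact ((continuous_fst.tendsto (0 : E × ℂ)).eventually i1).and
      ((continuous_snd.tendsto (0 : E × ℂ)).eventually i2)
  have hωX : ∀ᶠ q : E × ℂ in 𝓝 0, q ∈ X → (ω.map (tcEv q.1)).eval q.2 = 0 := by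
    filter_upwards [hnear ε ρ hε hρ] with q hq hqX
    have hz : q.1 ∈ Metric.ball (0 : E) ε := mem_ball_zero_iff.2 hq.1
    have ht : q.2 ∈ s q.1 := ((hs q.1 hz).2.2 q.2).2 ⟨hq.2, hqX.2 h hh⟩
    rw [hωz q.1 hz, Polynomial.eval_multiset_prod, Multiset.map_map]
    apply Multiset.prod_eq_zero
    rw [Multiset.mem_map]
    exact ⟨q.2, ht, by simp⟩
  obtain ⟨d, c, δ, hc, hδ, hδ0, hQX, hmin⟩ := tc_core X ω hωm hω0 hωX
  have hsmall : ∀ η : ℝ, 0 < η → ∀ᶠ z in 𝓝 (0 : E), ∑ j ∈ Finset.range d, ‖c j z‖ * η ^ j < η ^ d := by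
    intro η hη
    have hcont : ContinuousAt (fun z : E => ∑ j ∈ Finset.range d, ‖c j z‖ * η ^ j) 0 := by
      refine tendsto_finsetSum _ fun j hj => ?_
      exact ((hc j).1.continuousAt.norm).mul continuousAt_const
    apply hcont.eventually_lt_const
    beta_reduce
    rw [Finset.sum_eq_zero]
    · positivity
    · intro j hj
      rw [(hc j).2]; simp
  have hcan : ∀ᶠ z in 𝓝 (0 : E), ∀ j ∈ Finset.range d, AnalyticAt ℂ (c j) z :=
    (Finset.eventually_all _).2 fun j _ => (hc j).1.eventually_analyticAt
  obtain ⟨ε1, hε1, hball⟩ := Metric.eventually_nhds_iff_ball.1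
    ((hcan.and (hsmall ρ hρ)).and (Metric.ball_mem_nhds (0 : E) hε))
  -- zeros of Q lie in X
  have hsumc : ∀ (z : E) (t : ℂ), ∑ j ∈ Finset.range (d + 1), (if j < d then c j else fun _ => 1) z * t ^ j =
      t ^ d + ∑ j ∈ Finset.range d, c j z * t ^ j := by
    intro z t
    rw [Finset.sum_range_succ, add_comm]
    congr 1
    · simp
    · refine Finset.sum_congr rfl fun j hj => ?_
      rw [if_pos (Finset.mem_range.1 hj)]
  have hkey : ∀ z ∈ Metric.ball (0 : E) ε1, ∀ t : ℂ, ‖t‖ < ρ →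
      t ^ d + ∑ j ∈ Finset.range d, c j z * t ^ j = 0 → (z, t) ∈ X := by
    intro z hz t ht hQ
    refine ⟨hsub ⟨(hball z hz).2, by simpa using ht.le⟩, fun g hg => ?_⟩
    obtain ⟨r, hra, hrdiv⟩ := tc_division (Metric.ball (0 : E) ε1) ρ hρ d
      (fun j => if j < d then c j else fun _ => 1)
      (by
        intro j _ y hy
        by_cases hj : j < d
        · simp only [if_pos hj]; exact (hball y hy).1.1 j (Finset.mem_range.2 hj)
        · simp only [if_neg hj]; exact analyticAt_const)
      (by
        intro y hy τ hτ hcon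
        rw [hsumc] at hcon
        have := tc_root_bound d (fun j => c j y) ρ hρ (hball y hy).1.2 τ hcon
        have hτ' : ‖τ‖ = ρ := by simpa using hτ
        linarith) g ((hS g hg).mono fun p hp => hsub ⟨(hball p.1 hp.1).2, hp.2⟩)
    have h0B1 : (0 : E) ∈ Metric.ball (0 : E) ε1 := by simpa using hε1
    have hr0 := hmin (fun i y => δ y * r i y) (fun i => hδ.mul (hra i 0 h0B1)) (by
      filter_upwards [hQX, hnear ε1 ρ hε1 hρ] with q i1 i2 hq
      obtain ⟨A, hA⟩ := hrdiv q.1 (mem_ball_zero_iff.2 i2.1) q.2 (mem_ball_zero_iff.2 i2.2)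
      have i3 := i1 hq
      rw [hsumc, show g (q.1, q.2) = 0 from hq.2 g hg] at hA
      have i4 : ∑ i ∈ Finset.range d, δ q.1 * r i q.1 * q.2 ^ i =
          δ q.1 * ∑ i ∈ Finset.range d, r i q.1 * q.2 ^ i := by
        rw [Finset.mul_sum]
        exact Finset.sum_congr rfl fun _ _ => by ring
      rw [i4]
      linear_combination (-δ q.1) * hA - A * i3)
    have hrz : ∀ i < d, r i z = 0 := by
      intro i hi
      have j1 := tc_domain δ (r i) hδ (hra i 0 h0B1) (hr0 i hi) hδ0
      exact (hra i).eqOn_zero_of_preconnected_of_eventuallyEq_zero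
        ((convex_ball (0 : E) ε1).isPreconnected) h0B1 j1 hz
    obtain ⟨A, hA⟩ := hrdiv z hz t (mem_ball_zero_iff.2 ht)
    rw [hA, hsumc, hQ, Finset.sum_eq_zero fun i hi => by rw [hrz i (Finset.mem_range.1 hi), zero_mul]]
    simp
  refine ⟨d, fun q => q.2 ^ d + ∑ j ∈ Finset.range d, c j q.1 * q.2 ^ j, δ, ?_, ?_, ?_, hδ, hδ0, ?_⟩
  · refine (analyticAt_snd.pow d).add (Finset.analyticAt_fun_sum _ fun j _ => ?_)
    have : AnalyticAt ℂ (fun q : E × ℂ => c j q.1) 0 := (hc j).1.comp_of_eq analyticAt_fst rfl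
    exact this.mul (analyticAt_snd.pow j)
  · obtain ⟨r, hr, hcr⟩ := Metric.eventually_nhds_iff_ball.1 hcone
    have hm : 0 < min r ρ := lt_min hr hρ
    have hz := ((hsmall _ hm).and (Metric.ball_mem_nhds (0 : E) (lt_min hε1 hr)))
    refine ⟨(1 + |C|) ^ d, ?_⟩
    filter_upwards [(continuous_fst.tendsto (0 : E × ℂ)).eventually hz] with q hq
    have hq2 := mem_ball_zero_iff.1 hq.2
    set P : Polynomial ℂ := tcPoly d (fun j => c j q.1) with hP
    rw [← tcPoly_eval, (IsAlgClosed.splits P).eval_eq_prod_roots_of_monic (tcPoly_monic _ _)]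
    have hcard : P.roots.card = d := by
      rw [← (IsAlgClosed.splits P).natDegree_eq_card_roots, tcPoly_natDegree]
    have := tc_prod_bound P.roots q.2 ((1 + |C|) * ‖q‖) (by positivity) ?_
    · rw [hcard, mul_pow] at this
      exact this
    · intro τ hτ
      have hτ0 := (Polynomial.mem_roots'.1 hτ).2
      rw [Polynomial.IsRoot, tcPoly_eval] at hτ0
      have hτs := tc_root_bound d _ _ hm hq.1 τ hτ0
      have hτX := hkey q.1 (mem_ball_zero_iff.2 (hq2.trans_le (min_le_left _ _))) τ
        (hτs.trans_le (min_le_right _ _)) hτ0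
      have hin : (q.1, τ) ∈ Metric.ball (0 : E × ℂ) r := by
        rw [mem_ball_zero_iff, Prod.norm_def]
        exact max_lt (hq2.trans_le (min_le_right _ _)) (hτs.trans_le (min_le_left _ _))
      have hb := hcr _ hin hτX
      simp only at hb
      have n1 : ‖q.1‖ ≤ ‖q‖ := norm_fst_le q
      have n2 : ‖q.2‖ ≤ ‖q‖ := norm_snd_le q
      calc ‖q.2 - τ‖ ≤ ‖q.2‖ + ‖τ‖ := norm_sub_le _ _
        _ ≤ ‖q‖ + |C| * ‖q‖ := by
          refine add_le_add n2 (hb.trans ?_)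
          have := le_abs_self C
          gcongr
        _ = _ := by ring
  · intro t
    simp only
    rw [Finset.sum_eq_zero fun j _ => by rw [(hc j).2, zero_mul], add_zero]
  · filter_upwards [hQX] with q hq hqX
    exact (mul_eq_zero.1 (hq hqX)).symm

lemma tc_axis {E : Type*} [NormedAddCommGroup E] [NormedSpace ℂ E]
    (U : Set (E × ℂ)) (hU : IsOpen U) (h0 : (0 : E × ℂ) ∈ U) (S : Set (E × ℂ → ℂ))
    (hS : ∀ g ∈ S, AnalyticOnNhd ℂ g U) (C : ℝ)
    (hcone : ∀ᶠ q : E × ℂ in 𝓝 0, (q ∈ U ∧ ∀ g ∈ S, g q = 0) → ‖q.2‖ ≤ C * ‖q.1‖) :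
    ∃ h ∈ S, ¬ ∀ᶠ t in 𝓝 (0 : ℂ), h (0, t) = 0 := by
  by_contra hcon
  push Not at hcon
  have hc : Continuous (fun t : ℂ => ((0 : E), t)) := by fun_prop
  have hU' : (fun t : ℂ => ((0 : E), t)) ⁻¹' U ∈ 𝓝 (0 : ℂ) :=
    (hU.preimage hc).mem_nhds h0
  obtain ⟨r, hr, hrU⟩ := Metric.mem_nhds_iff.1 hU'
  have hz : ∀ h ∈ S, ∀ t ∈ Metric.ball (0 : ℂ) r, h (0, t) = 0 := by
    intro h hh t ht
    have han : AnalyticOnNhd ℂ (fun t : ℂ => h ((0 : E), t)) (Metric.ball 0 r) := by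
      intro u hu
      have h1 : AnalyticAt ℂ (fun t : ℂ => ((0 : E), t)) u := analyticAt_const.prod analyticAt_id
      exact (hS h hh _ (hrU hu)).comp' h1
    exact han.eqOn_zero_of_preconnected_of_eventuallyEq_zero
      (convex_ball (0 : ℂ) r).isPreconnected (Metric.mem_ball_self hr) (hcon h hh) ht
  have h1 : ∀ᶠ t in 𝓝 (0 : ℂ), t = 0 := by
    have := (hc.tendsto 0).eventually hcone
    filter_upwards [this, Metric.ball_mem_nhds (0 : ℂ) hr] with t ht htr
    have := ht ⟨hrU htr, fun g hg => hz g hg t htr⟩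
    simpa using this
  have h2 : ∀ᶠ t in 𝓝[≠] (0 : ℂ), False := by
    filter_upwards [h1.filter_mono nhdsWithin_le_nhds, self_mem_nhdsWithin] with t ht ht'
    exact ht' ht
  exact (h2.exists).elim (fun _ h => h)

lemma tc_avoid {α : Type*} (P : Set α) (hP : P.Finite) (S : Set (α → ℂ))
    (h : ∀ a ∈ P, ∃ g ∈ S, g a ≠ 0) :
    ∃ g ∈ Submodule.span ℂ S, ∀ a ∈ P, g a ≠ 0 := by
  by_contra hcon
  push Not at hcon
  have := hP.to_subtype
  let p : P → Submodule ℂ (Submodule.span ℂ S) := fun a =>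
    LinearMap.ker ((LinearMap.proj (R := ℂ) (φ := fun _ : α => ℂ) a.1).comp
      (Submodule.span ℂ S).subtype)
  have hcov : ⋃ i, (p i : Set (Submodule.span ℂ S)) = Set.univ := by
    ext g
    simp only [mem_iUnion, mem_univ, iff_true]
    obtain ⟨a, ha, hga⟩ := hcon g.1 g.2
    exact ⟨⟨a, ha⟩, by simpa [p] using hga⟩
  obtain ⟨a, ha⟩ := Subspace.exists_eq_top_of_iUnion_eq_univ hcov
  obtain ⟨g, hg, hga⟩ := h a.1 a.2
  have : (⟨g, Submodule.subset_span hg⟩ : Submodule.span ℂ S) ∈ p a := by rw [ha]; trivial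
  exact hga (by simpa [p] using this)

lemma tc_main : ∀ (n : ℕ) (E : Type) [NormedAddCommGroup E] [NormedSpace ℂ E]
    [FiniteDimensional ℂ E], Module.finrank ℂ E = n → 
    ∀ (U : Set (E × ℂ)), IsOpen U → (0 : E × ℂ) ∈ U → ∀ (S : Set (E × ℂ → ℂ)),
    (∀ g ∈ S, AnalyticOnNhd ℂ g U) → ∀ (C : ℝ),
    (∀ᶠ q : E × ℂ in 𝓝 0, (q ∈ U ∧ ∀ g ∈ S, g q = 0) → ‖q.2‖ ≤ C * ‖q.1‖) →
    ∃ (g : E × ℂ → ℂ) (d : ℕ), AnalyticAt ℂ g 0 ∧ (∃ K, ∀ᶠ q in 𝓝 0, ‖g q‖ ≤ K * ‖q‖ ^ d) ∧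
      (∀ t, g (0, t) = t ^ d) ∧ ∀ᶠ q in 𝓝 0, (q ∈ U ∧ ∀ g ∈ S, g q = 0) → g q = 0 := by
  intro n
  induction n using Nat.strong_induction_on with
  | _ n ih =>
  intro E _ _ _ hn U hU h0 S hS C hcone
  obtain ⟨h, hh, hne⟩ := tc_axis U hU h0 S hS C hcone
  obtain ⟨d, Q, δ, hQ, ⟨K₀, hQK⟩, hQ0, hδ, hδne, hXQ⟩ := tc_weier U hU h0 S hS C hcone h hh hne
  have hcfst : Tendsto (fun q : E × ℂ => q.1) (𝓝 0) (𝓝 0) := continuous_fst.tendsto (0 : E × ℂ)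
  by_cases hδ0 : δ 0 = 0
  swap
  · refine ⟨Q, d, hQ, ⟨K₀, hQK⟩, hQ0, ?_⟩
    filter_upwards [hXQ, hcfst.eventually (hδ.continuousAt.eventually_ne hδ0)] with q hq hq' hqX
    exact (hq hqX).resolve_right hq'
  obtain ⟨w, hw, K, hK, hdir⟩ := tc_dir δ hδ hδne hδ0
  obtain ⟨ℓ, hℓ⟩ := SeparatingDual.exists_eq_one (R := ℂ) hw
  let F : Submodule ℂ E := LinearMap.ker (ℓ : E →ₗ[ℂ] ℂ)
  have hwF : w ∉ F := by
    simp [F, hℓ]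
  have hF : Module.finrank ℂ F < n := by
    rw [← hn]
    apply Submodule.finrank_lt
    intro h
    exact hwF (h ▸ Submodule.mem_top)
  let Φ : (F × ℂ) × ℂ →L[ℂ] E × ℂ :=
    ((F.subtypeL.comp ((ContinuousLinearMap.fst ℂ F ℂ).comp (ContinuousLinearMap.fst ℂ (F × ℂ) ℂ)))
      + (ContinuousLinearMap.snd ℂ (F × ℂ) ℂ).smulRight w).prod
      ((ContinuousLinearMap.snd ℂ F ℂ).comp (ContinuousLinearMap.fst ℂ (F × ℂ) ℂ))
  have hΦ : ∀ y t s, Φ ((y, t), s) = ((y : E) + s • w, t) := fun y t s => rfl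
  obtain ⟨r, hr, hdir⟩ := Metric.eventually_nhds_iff_ball.1 hdir
  let U1 : Set ((F × ℂ) × ℂ) := Φ ⁻¹' (U ∩ {p | AnalyticAt ℂ δ p.1})
  have hU1 : IsOpen U1 :=
    (hU.inter ((isOpen_analyticAt ℂ δ).preimage continuous_fst)).preimage Φ.continuous
  have h01 : (0 : (F × ℂ) × ℂ) ∈ U1 := by
    simp only [U1, mem_preimage, map_zero]
    exact ⟨h0, hδ⟩
  have hh1 : AnalyticOnNhd ℂ (fun q => δ (Φ q).1) U1 := by
    intro q hq
    have h2 : AnalyticAt ℂ (fun q => (Φ q).1) q :=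
      ((ContinuousLinearMap.fst ℂ E ℂ).comp Φ).analyticAt q
    exact AnalyticAt.comp' (f := fun q => (Φ q).1) hq.2 h2
  have hne1 : ¬ ∀ᶠ s in 𝓝 (0 : ℂ), (fun q => δ (Φ q).1) ((0 : F × ℂ), s) = 0 := by
    intro hcon
    have h2 : ∀ᶠ t in 𝓝[≠] (0 : ℂ), False := by
      filter_upwards [hcon.filter_mono nhdsWithin_le_nhds, self_mem_nhdsWithin,
        (Metric.ball_mem_nhds (0 : ℂ) hr : _ ∈ _) |> fun h => mem_nhdsWithin_of_mem_nhds h]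
        with s hs hs' hsr
      have h3 := hdir ((0 : E), s) (by simpa [Prod.norm_def] using hsr)
      have h4 : δ ((0 : E) + s • w) = 0 := hs
      have := h3 h4
      apply hs'
      simpa using this
    exact (h2.exists).elim (fun _ h => h)
  obtain ⟨ρ, hρ, hρr, ε, hε, k, σ, hsub, -, hσ, hσan⟩ := tc_prep U1 hU1 h01 _ hh1 hne1 r hr
  -- span functions
  have hspan : ∀ g ∈ Submodule.span ℂ S, AnalyticOnNhd ℂ g U := by
    intro g hg
    induction hg using Submodule.span_induction with
    | mem g hg => exact hS g hg
    | zero => exact analyticOnNhd_const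
    | add f g _ _ hf hg => exact hf.add hg
    | smul a f _ hf => exact (analyticOnNhd_const (v := a)).mul hf
  have hspan0 : ∀ q, (∀ g ∈ S, g q = 0) → ∀ g ∈ Submodule.span ℂ S, g q = 0 := by
    intro q hq g hg
    induction hg using Submodule.span_induction with
    | mem g hg => exact hq g hg
    | zero => rfl
    | add f g _ _ hf hg => simp [hf, hg]
    | smul a f _ hf => simp [hf]
  let P : (E × ℂ → ℂ) → F × ℂ → ℂ := fun g p => ((σ p).map (fun s => g (Φ (p, s)))).prod
  let S1 : Set (F × ℂ → ℂ) := P '' (Submodule.span ℂ S : Set (E × ℂ → ℂ))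
  have hS1 : ∀ g ∈ S1, AnalyticOnNhd ℂ g (Metric.ball 0 ε) := by
    rintro _ ⟨g, hg, rfl⟩
    have h2 : AnalyticOnNhd ℂ (fun q => g (Φ q)) U1 := by
      intro q hq
      exact (hspan g hg _ hq.1).comp' (Φ.analyticAt q)
    refine (hσan _ h2 k).congr Metric.isOpen_ball ?_
    intro p hp
    have hc : ((σ p).map (fun s => g (Φ (p, s)))).card = k := by
      rw [Multiset.card_map]; exact (hσ p hp).1
    simp only [P]
    rw [← hc, Multiset.esymm, Multiset.powersetCard_self]
    simp
  have hpt : ∀ p ∈ Metric.ball (0 : F × ℂ) ε, (∀ g ∈ S1, g p = 0) →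
      ∃ s ∈ σ p, ∀ g ∈ S, g (Φ (p, s)) = 0 := by
    intro p hp hp0
    by_contra hcon
    push Not at hcon
    obtain ⟨g, hg, hgP⟩ := tc_avoid ((fun s => Φ (p, s)) '' {s | s ∈ σ p})
      (((σ p).toFinset.finite_toSet.subset (by intro s hs; simpa using hs)).image _) S
      (by rintro _ ⟨s, hs, rfl⟩; exact hcon s hs)
    have h3 := hp0 _ ⟨g, hg, rfl⟩
    simp only [P, Multiset.prod_eq_zero_iff, Multiset.mem_map] at h3
    obtain ⟨s, hs, hs0⟩ := h3
    exact hgP _ ⟨s, hs, rfl⟩ hs0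
  obtain ⟨r2, hr2, hcone⟩ := Metric.eventually_nhds_iff_ball.1 hcone
  have hKw : 0 ≤ K * ‖w‖ := by positivity
  have hcone1 : ∀ᶠ p : F × ℂ in 𝓝 0, (p ∈ Metric.ball 0 ε ∧ ∀ g ∈ S1, g p = 0) →
      ‖p.2‖ ≤ (|C| * (1 + K * ‖w‖)) * ‖p.1‖ := by
    have hb : 0 < min r (r2 / (1 + K * ‖w‖)) := lt_min hr (by positivity)
    filter_upwards [Metric.ball_mem_nhds (0 : F × ℂ) hb] with p hp hpX
    obtain ⟨hpε, hp0⟩ := hpX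
    obtain ⟨s, hs, hsX⟩ := hpt p hpε hp0
    obtain ⟨y, t⟩ := p
    rw [mem_ball_zero_iff, lt_min_iff, lt_div_iff₀ (by positivity)] at hp
    have hy : ‖y‖ ≤ ‖(y, t)‖ := norm_fst_le (y, t)
    have ht : ‖t‖ ≤ ‖(y, t)‖ := norm_snd_le (y, t)
    have hs1 := ((hσ _ hpε).2.2 s).1 hs
    have hsK : ‖s‖ ≤ K * ‖y‖ := by
      have := hdir ((y : E), s) (by
        rw [mem_ball_zero_iff, Prod.norm_def]
        exact max_lt (lt_of_le_of_lt hy hp.1) (hs1.1.trans hρr))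
      exact this hs1.2
    have hyw : ‖(y : E) + s • w‖ ≤ (1 + K * ‖w‖) * ‖y‖ := by
      calc ‖(y : E) + s • w‖ ≤ ‖y‖ + ‖s‖ * ‖w‖ := by
            refine (norm_add_le _ _).trans ?_
            rw [norm_smul]; rfl
        _ ≤ ‖y‖ + (K * ‖y‖) * ‖w‖ := by gcongr
        _ = _ := by ring
    have hmem : Φ ((y, t), s) ∈ Metric.ball (0 : E × ℂ) r2 := by
      rw [hΦ, mem_ball_zero_iff, Prod.norm_def]
      refine max_lt ?_ ?_
      · refine hyw.trans_lt ?_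
        nlinarith
      · refine ht.trans_lt ?_
        nlinarith [norm_nonneg (y, t)]
    have hU' : Φ ((y, t), s) ∈ U := by
      have : ((y, t), s) ∈ U1 := hsub ⟨hpε, by simpa using hs1.1.le⟩
      exact this.1
    have h5 := hcone _ hmem ⟨hU', hsX⟩
    rw [hΦ] at h5
    calc ‖t‖ ≤ C * ‖(y : E) + s • w‖ := h5
      _ ≤ |C| * ‖(y : E) + s • w‖ := by gcongr; exact le_abs_self C
      _ ≤ |C| * ((1 + K * ‖w‖) * ‖y‖) := by gcongr
      _ = _ := by ring
  obtain ⟨G, d', hG, ⟨K₁, hGK⟩, hG0, hGX⟩ := ih _ hF F rfl (Metric.ball 0 ε) Metric.isOpen_ball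
    (Metric.mem_ball_self hε) S1 hS1 _ hcone1
  let π : E →L[ℂ] F := (ContinuousLinearMap.id ℂ E - ℓ.smulRight w).codRestrict F (by
    intro z
    simp [F, hℓ])
  have hπ : ∀ z, ((π z : F) : E) = z - ℓ z • w := fun z => rfl
  let Ψ : E × ℂ →L[ℂ] F × ℂ := (π.comp (ContinuousLinearMap.fst ℂ E ℂ)).prod
    (ContinuousLinearMap.snd ℂ E ℂ)
  have hΨ : ∀ z t, Ψ (z, t) = (π z, t) := fun z t => rfl
  have hΨ0 : Tendsto Ψ (𝓝 0) (𝓝 0) := by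
    have := Ψ.continuous.tendsto 0
    rwa [map_zero] at this
  refine ⟨fun q => Q q * G (Ψ q), d + d', ?_, ?_, ?_, ?_⟩
  · have h2 : AnalyticAt ℂ G (Ψ 0) := by rwa [map_zero]
    exact hQ.mul (h2.comp' (Ψ.analyticAt 0))
  · refine ⟨K₀ * (|K₁| * ‖Ψ‖ ^ d'), ?_⟩
    filter_upwards [hQK, hΨ0.eventually hGK] with q h1 h2
    have h3 : ‖G (Ψ q)‖ ≤ |K₁| * (‖Ψ‖ * ‖q‖) ^ d' := by
      refine h2.trans ?_
      have := Ψ.le_opNorm q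
      have h5 := le_abs_self K₁
      gcongr
    calc ‖Q q * G (Ψ q)‖ = ‖Q q‖ * ‖G (Ψ q)‖ := norm_mul _ _
      _ ≤ (K₀ * ‖q‖ ^ d) * (|K₁| * (‖Ψ‖ * ‖q‖) ^ d') := by
          refine mul_le_mul h1 h3 (norm_nonneg _) ((norm_nonneg _).trans h1)
      _ = _ := by rw [mul_pow, pow_add]; ring
  · intro t
    have h2 : Ψ (0, t) = (0, t) := by rw [hΨ, map_zero]
    simp only [h2, hQ0, hG0, pow_add]
  · have hl : Tendsto (fun q : E × ℂ => ℓ q.1) (𝓝 0) (𝓝 0) := by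
      have : Continuous (fun q : E × ℂ => ℓ q.1) := by fun_prop
      have := this.tendsto 0
      simpa using this
    filter_upwards [hXQ, hΨ0.eventually hGX, hΨ0.eventually (Metric.ball_mem_nhds _ hε),
      hl.eventually (Metric.ball_mem_nhds _ hρ)] with q h1 h2 h3 h4 hq
    rcases h1 hq with h5 | h5
    · simp [h5]
    · obtain ⟨z, t⟩ := q
      have hz : Φ (Ψ (z, t), ℓ z) = (z, t) := by
        rw [hΨ, hΦ, hπ]; simp
      have h6 : G (Ψ (z, t)) = 0 := by
        refine h2 ⟨h3, ?_⟩
        rintro _ ⟨g, hg, rfl⟩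
        simp only [P, Multiset.prod_eq_zero_iff, Multiset.mem_map]
        refine ⟨ℓ z, ((hσ _ h3).2.2 _).2 ⟨by simpa using h4, ?_⟩, ?_⟩
        · show δ (Φ (Ψ (z, t), ℓ z)).1 = 0
          rw [hz]; exact h5
        · rw [hz]; exact hspan0 _ hq.2 g hg
      simp [h6]


lemma tc_partial {E : Type*} [NormedAddCommGroup E] [NormedSpace ℂ E]
    (p : FormalMultilinearSeries ℂ E ℂ) (d : ℕ) (y : E) (h : ∀ e < d, (p e fun _ => y) = 0) :
    p.partialSum (d + 1) y = p d fun _ => y := by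
  rw [FormalMultilinearSeries.partialSum, Finset.sum_range_succ, Finset.sum_eq_zero, zero_add]
  intro e he
  exact h e (Finset.mem_range.1 he)

lemma tc_easy {E : Type*} [NormedAddCommGroup E] [NormedSpace ℂ E] (X : Set E) (x v : E)
    (g : E → ℂ) (p : FormalMultilinearSeries ℂ E ℂ) (d : ℕ)
    (hg : HasFPowerSeriesAt g p x) (hgX : ∀ᶠ y in 𝓝 x, y ∈ X → g y = 0) (hp : ∀ e < d, p e = 0)
    (hv : v ∈ tangentConeSet X x) : (p d fun _ => v) = 0 := by
  obtain ⟨xs, ts, hxs, hx, hts⟩ := hv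
  obtain ⟨c, hc⟩ := (hg.isBigO_sub_partialSum_pow (d + 1)).bound
  have hy : Tendsto (fun k => xs k - x) atTop (𝓝 0) := by
    simpa using hx.sub_const x
  have h1 : Tendsto (fun k => p d fun _ => ts k • (xs k - x)) atTop (𝓝 (p d fun _ => v)) := by
    have hcont : Continuous (fun u : E => p d fun _ => u) := by
      exact (p d).cont.comp (continuous_pi fun _ => continuous_id)
    exact (hcont.tendsto v).comp hts
  have h2 : Tendsto (fun k => c * (‖ts k • (xs k - x)‖ ^ d * ‖xs k - x‖)) atTop (𝓝 0) := by
    have := ((hts.norm.pow d).mul hy.norm).const_mul c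
    simpa using this
  have h3 : Tendsto (fun k => p d fun _ => ts k • (xs k - x)) atTop (𝓝 0) := by
    refine squeeze_zero_norm' ?_ h2
    filter_upwards [hy.eventually hc, hx.eventually hgX] with k hk1 hk2
    rw [tc_partial p d _ (fun e he => by rw [hp e he]; rfl)] at hk1
    rw [add_sub_cancel, hk2 (hxs k), zero_sub, norm_neg, norm_pow, norm_norm] at hk1
    have h4 : (p d fun _ => ts k • (xs k - x)) = ts k ^ d • (p d fun _ => (xs k - x)) := by
      have := (p d).map_smul_univ (fun _ => ts k) (fun _ => xs k - x)
      simpa using this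
    rw [h4, norm_smul, norm_pow, norm_smul, mul_pow]
    calc ‖ts k‖ ^ d * ‖p d fun _ => (xs k - x)‖ ≤ ‖ts k‖ ^ d * (c * ‖xs k - x‖ ^ (d + 1)) := by
          gcongr
      _ = _ := by ring
  exact tendsto_nhds_unique h1 h3

lemma tc_lowzero {E : Type*} [NormedAddCommGroup E] [NormedSpace ℂ E] (x : E)
    (g : E → ℂ) (p : FormalMultilinearSeries ℂ E ℂ) (d : ℕ) (hg : HasFPowerSeriesAt g p x)
    (hO : (fun y => g (x + y)) =O[𝓝 0] fun y : E => ‖y‖ ^ d) :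
    ∀ e < d, ∀ y, (p e fun _ => y) = 0 := by
  intro e
  induction e using Nat.strong_induction_on with
  | _ e ih =>
  intro he
  apply Asymptotics.IsBigO.continuousMultilinearMap_apply_eq_zero
  have h1 := hg.isBigO_sub_partialSum_pow (e + 1)
  have h2 : (fun y : E => ‖y‖ ^ d) =O[𝓝 0] fun y : E => ‖y‖ ^ (e + 1) := by
    refine Asymptotics.IsBigO.of_bound 1 ?_
    filter_upwards [Metric.ball_mem_nhds (0 : E) one_pos] with y hy
    rw [mem_ball_zero_iff] at hy
    simp only [norm_pow, norm_norm, one_mul]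
    exact pow_le_pow_of_le_one (norm_nonneg _) hy.le he
  have h3 := (hO.trans h2).sub h1
  refine h3.congr_left fun y => ?_
  rw [sub_sub_cancel, tc_partial p e y (fun e' he' => ih e' he' (he'.trans he) y)]

lemma tc_trunc {E : Type*} [NormedAddCommGroup E] [NormedSpace ℂ E] (x : E)
    (g : E → ℂ) (d : ℕ) (hg : AnalyticAt ℂ g x)
    (hO : (fun y => g (x + y)) =O[𝓝 0] fun y : E => ‖y‖ ^ d) :
    ∃ p : FormalMultilinearSeries ℂ E ℂ, HasFPowerSeriesAt g p x ∧ ∀ e < d, p e = 0 := by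
  obtain ⟨p, hp⟩ := hg
  have hlow := tc_lowzero x g p d hp hO
  obtain ⟨r, hr⟩ := hp
  let p' : FormalMultilinearSeries ℂ E ℂ := fun e => if e < d then 0 else p e
  refine ⟨p', ⟨r, ?_, hr.r_pos, ?_⟩, fun e he => by simp [p', he]⟩
  · refine hr.r_le.trans (FormalMultilinearSeries.radius_le_of_le fun n => ?_)
    by_cases h : n < d <;> simp [p', h]
  · intro y hy
    have := hr.hasSum hy
    convert this using 2 with n
    by_cases h : n < d
    · simp [p', h, hlow n h y]
    · simp [p', h]

lemma tc_hard (E : Type) [NormedAddCommGroup E] [NormedSpace ℂ E] [FiniteDimensional ℂ E]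
    (X U : Set E) (x : E) (hU : IsOpen U) (hxU : x ∈ U) (hxX : x ∈ X) (S : Set (E → ℂ))
    (hS : ∀ g ∈ S, AnalyticOnNhd ℂ g U) (hXU : X ∩ U = {x ∈ U | ∀ g ∈ S, g x = 0}) (v : E)
    (hv : v ∉ tangentConeSet X x) :
    ∃ (g : E → ℂ) (p : FormalMultilinearSeries ℂ E ℂ) (d : ℕ),
      HasFPowerSeriesAt g p x ∧ (∀ᶠ y in 𝓝 x, y ∈ X → g y = 0) ∧ (∀ e < d, p e = 0) ∧
        (p d fun _ => v) ≠ 0 := by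
  have hv0 : v ≠ 0 := by
    rintro rfl
    exact hv ⟨fun _ => x, fun _ => 0, fun _ => hxX, tendsto_const_nhds, by simp⟩
  obtain ⟨ℓ, hℓ⟩ := SeparatingDual.exists_eq_one (R := ℂ) hv0
  let F : Submodule ℂ E := LinearMap.ker (ℓ : E →ₗ[ℂ] ℂ)
  let Φ : F × ℂ →L[ℂ] E := F.subtypeL.comp (ContinuousLinearMap.fst ℂ F ℂ)
      + (ContinuousLinearMap.snd ℂ F ℂ).smulRight v
  have hΦ : ∀ y t, Φ (y, t) = (y : E) + t • v := fun y t => rfl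
  let π : E →L[ℂ] F := (ContinuousLinearMap.id ℂ E - ℓ.smulRight v).codRestrict F (by
    intro z
    simp [F, hℓ])
  have hπ : ∀ z, ((π z : F) : E) = z - ℓ z • v := fun z => rfl
  let Ψ : E →L[ℂ] F × ℂ := π.prod ℓ
  have hΨ : ∀ z, Ψ z = (π z, ℓ z) := fun z => rfl
  have hΦΨ : ∀ z, Φ (Ψ z) = z := by
    intro z; rw [hΨ, hΦ, hπ]; simp
  have hΨv : ∀ s : ℂ, Ψ (s • v) = (0, s) := by
    intro s
    rw [hΨ]
    have h1 : ℓ (s • v) = s := by simp [hℓ]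
    refine Prod.ext ?_ h1
    apply Subtype.ext
    show ((π (s • v) : F) : E) = 0
    rw [hπ, h1, sub_self]
  let T : F × ℂ → E := fun q => x + Φ q
  have hTc : Continuous T := by fun_prop
  have hT0 : T 0 = x := by simp [T]
  have hTan : ∀ q, AnalyticAt ℂ T q := fun q => analyticAt_const.add (Φ.analyticAt q)
  let U' : Set (F × ℂ) := T ⁻¹' U
  let S' : Set (F × ℂ → ℂ) := (fun g q => g (T q)) '' S
  have hX' : ∀ q, (q ∈ U' ∧ ∀ g ∈ S', g q = 0) ↔ T q ∈ X ∧ T q ∈ U := by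
    intro q
    have : T q ∈ X ∩ U ↔ T q ∈ {x ∈ U | ∀ g ∈ S, g x = 0} := by rw [hXU]
    rw [← mem_inter_iff, this]
    simp [U', S']
  have hS' : ∀ g ∈ S', AnalyticOnNhd ℂ g U' := by
    rintro _ ⟨g, hg, rfl⟩ q hq
    exact (hS g hg _ hq).comp' (hTan q)
  have hcone : ∃ C : ℝ, ∀ᶠ q : F × ℂ in 𝓝 0, (q ∈ U' ∧ ∀ g ∈ S', g q = 0) →
      ‖q.2‖ ≤ C * ‖q.1‖ := by
    by_contra hcon
    push Not at hcon
    have hch : ∀ n : ℕ, ∃ q : F × ℂ, ‖q‖ < 1 / ((n : ℝ) + 1) ∧ T q ∈ X ∧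
        ((n : ℝ) + 1) * ‖q.1‖ < ‖q.2‖ := by
      intro n
      have h1 := hcon ((n : ℝ) + 1)
      have h2 : ∀ᶠ q : F × ℂ in 𝓝 0, ‖q‖ < 1 / ((n : ℝ) + 1) := by
        filter_upwards [Metric.ball_mem_nhds (0 : F × ℂ) (Nat.one_div_pos_of_nat (α := ℝ) (n := n))]
          with q hq
        simpa using hq
      obtain ⟨q, ⟨hq1, hq2⟩, hq3⟩ := (h1.and_eventually h2).exists
      exact ⟨q, hq3, ((hX' q).1 hq1).1, hq2⟩
    choose q hq1 hq2 hq3 using hch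
    have hq0 : Tendsto q atTop (𝓝 0) := by
      refine squeeze_zero_norm (fun n => (hq1 n).le) tendsto_one_div_add_atTop_nhds_zero_nat
    apply hv
    refine ⟨fun n => T (q n), fun n => (q n).2⁻¹, hq2, ?_, ?_⟩
    · have := (hTc.tendsto 0).comp hq0
      rwa [hT0] at this
    · have h5 : ∀ n, (q n).2 ≠ 0 := by
        intro n h0
        have := hq3 n
        rw [h0, norm_zero] at this
        exact absurd this (not_lt.2 (by positivity))
      have h6 : Tendsto (fun n => (q n).2⁻¹ • ((q n).1 : E)) atTop (𝓝 0) := by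
        refine squeeze_zero_norm (fun n => ?_) tendsto_one_div_add_atTop_nhds_zero_nat
        rw [norm_smul, norm_inv, inv_mul_le_iff₀ (norm_pos_iff.2 (h5 n))]
        rw [mul_one_div, le_div_iff₀ (by positivity), mul_comm]
        exact (hq3 n).le
      have h7 := h6.add_const v
      rw [zero_add] at h7
      refine h7.congr fun n => ?_
      show (q n).2⁻¹ • ((q n).1 : E) + v = (q n).2⁻¹ • (x + ((q n).1 + (q n).2 • v) - x)
      rw [add_sub_cancel_left, smul_add, smul_smul, inv_mul_cancel₀ (h5 n), one_smul]
  obtain ⟨C, hcone⟩ := hcone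
  obtain ⟨G, d, hG, ⟨K, hGK⟩, hG0, hGX⟩ := tc_main _ F rfl U' (hU.preimage hTc)
    (by show T 0 ∈ U; rwa [hT0]) S' hS' C hcone
  let g : E → ℂ := fun z => G (Ψ (z - x))
  have hΨ0 : Tendsto Ψ (𝓝 0) (𝓝 0) := by
    have := Ψ.continuous.tendsto 0
    rwa [map_zero] at this
  have hgan : AnalyticAt ℂ g x := by
    have h2 : AnalyticAt ℂ (fun z => Ψ (z - x)) x := 
      AnalyticAt.comp' (f := fun z => z - x) (Ψ.analyticAt (x - x))
        (analyticAt_id.sub analyticAt_const)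
    have h3 : AnalyticAt ℂ G (Ψ (x - x)) := by rwa [sub_self, map_zero]
    exact AnalyticAt.comp' (f := fun z => Ψ (z - x)) h3 h2
  have hO : (fun y => g (x + y)) =O[𝓝 0] fun y : E => ‖y‖ ^ d := by
    refine Asymptotics.IsBigO.of_bound (|K| * ‖Ψ‖ ^ d) ?_
    filter_upwards [hΨ0.eventually hGK] with y hy
    simp only [g, add_sub_cancel_left, norm_pow, norm_norm]
    refine hy.trans ?_
    have h4 := Ψ.le_opNorm y
    have h5 := le_abs_self K
    calc K * ‖Ψ y‖ ^ d ≤ |K| * (‖Ψ‖ * ‖y‖) ^ d := by gcongr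
      _ = _ := by rw [mul_pow]; ring
  obtain ⟨p, hp, hpd⟩ := tc_trunc x g d hgan hO
  refine ⟨g, p, d, hp, ?_, hpd, ?_⟩
  · have hsub : Tendsto (fun y => Ψ (y - x)) (𝓝 x) (𝓝 0) := by
      have : Continuous (fun y => Ψ (y - x)) := by fun_prop
      have := this.tendsto x
      simpa using this
    filter_upwards [hsub.eventually hGX, hU.mem_nhds hxU] with y hy hyU hyX
    refine hy ((hX' _).2 ?_)
    have : T (Ψ (y - x)) = y := by simp [T, hΦΨ]
    rw [this]
    exact ⟨hyX, hyU⟩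
  · intro hpv
    obtain ⟨c, hc⟩ := (hp.isBigO_sub_partialSum_pow (d + 1)).bound
    have hsv : Tendsto (fun s : ℂ => s • v) (𝓝 0) (𝓝 0) := by
      have : Continuous (fun s : ℂ => s • v) := by fun_prop
      have := this.tendsto 0
      simpa using this
    have h1 : ∀ᶠ s in 𝓝[≠] (0 : ℂ), 1 ≤ c * ‖v‖ ^ (d + 1) * ‖s‖ := by
      filter_upwards [(hsv.eventually hc).filter_mono nhdsWithin_le_nhds, self_mem_nhdsWithin]
        with s hs hs0
      rw [tc_partial p d _ (fun e he => by rw [hpd e he]; rfl)] at hs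
      have h4 : (p d fun _ => s • v) = s ^ d • (p d fun _ => v) := by
        have := (p d).map_smul_univ (fun _ => s) (fun _ => v)
        simpa using this
      have h5 : g (x + s • v) = s ^ d := by
        simp only [g, add_sub_cancel_left, hΨv, hG0]
      rw [h4, hpv, smul_zero, sub_zero, h5, norm_pow, norm_pow, norm_norm, norm_smul, mul_pow] at hs
      have hsp : 0 < ‖s‖ ^ d := pow_pos (norm_pos_iff.2 hs0) d
      have : 1 * ‖s‖ ^ d ≤ (c * ‖v‖ ^ (d + 1) * ‖s‖) * ‖s‖ ^ d := by
        calc 1 * ‖s‖ ^ d = ‖s‖ ^ d := one_mul _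
          _ ≤ _ := hs
          _ = _ := by ring
      exact le_of_mul_le_mul_right this hsp
    have h2 : Tendsto (fun s : ℂ => c * ‖v‖ ^ (d + 1) * ‖s‖) (𝓝[≠] 0) (𝓝 0) := by
      have : Continuous (fun s : ℂ => c * ‖v‖ ^ (d + 1) * ‖s‖) := by fun_prop
      have := this.tendsto 0
      rw [norm_zero, mul_zero] at this
      exact this.mono_left nhdsWithin_le_nhds
    have := ge_of_tendsto h2 h1
    norm_num at this

/-- **Theorem (statement 13).** For a complex analytic set `X` and `x ∈ X`, the tangent
cone `C(X,x)` is the common zero set of the initial parts (lowest-degree homogeneous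
terms of the Taylor expansions at `x`) of all holomorphic germs vanishing on `X`
near `x`. -/
theorem tangent_cone_eq_zero_set_of_initial_parts (N : ℕ) (X Ω : Set (Cn N)) (x : Cn N)
    (hX : IsAnalyticSetIn X Ω) (hxΩ : x ∈ Ω) (hxX : x ∈ X) :
    tangentConeSet X x =
      {v : Cn N | ∀ (g : Cn N → ℂ) (p : FormalMultilinearSeries ℂ (Cn N) ℂ) (d : ℕ),
        HasFPowerSeriesAt g p x → (∀ᶠ y in 𝓝 x, y ∈ X → g y = 0) →
        (∀ e < d, p e = 0) → (p d fun _ => v) = 0} := by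
  ext v
  constructor
  · intro hv g p d hg hgX hp
    exact tc_easy X x v g p d hg hgX hp hv
  · intro hv
    by_contra hcon
    obtain ⟨U, hU, hxU, -, S, hS, hXU⟩ := hX.2.2.2 x hxΩ
    obtain ⟨g, p, d, h1, h2, h3, h4⟩ := tc_hard (Cn N) X U x hU hxU hxX S hS hXU v hcon
    exact h4 (hv g p d h1 h2 h3)
end
end

section
/- Let f : (ℂⁿ,0) → (ℂⁿ⁺¹,0) be a finite holomorphic map germ and for k ≥ 0 set Σ̂ᵏ(f) = {x ∈ ℂⁿ : corank df_x ≥ k}, where corank df_x = n − rank df_x. Then dim Σ̂ᵏ(f) ≤ n − k. -/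
open Filter Topology Set

noncomputable section

instance germAlgebra {α : Type*} (l : Filter α) : Algebra ℂ (Filter.Germ l ℂ) :=
  Algebra.ofModule
    (fun r x y => by
      induction x using Filter.Germ.inductionOn with | _ f =>
      induction y using Filter.Germ.inductionOn with | _ g =>
      rw [← Filter.Germ.coe_smul, ← Filter.Germ.coe_mul, ← Filter.Germ.coe_mul,
        ← Filter.Germ.coe_smul, smul_mul_assoc])
    (fun r x y => by
      induction x using Filter.Germ.inductionOn with | _ f =>
      induction y using Filter.Germ.inductionOn with | _ g =>
      rw [← Filter.Germ.coe_smul, ← Filter.Germ.coe_mul, ← Filter.Germ.coe_mul,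
        ← Filter.Germ.coe_smul, mul_smul_comm])

/-- The local ℂ-algebra `𝒪_n` of germs at `0` of holomorphic functions on `ℂⁿ`. -/
def Ogerm (n : ℕ) : Subalgebra ℂ (Filter.Germ (𝓝 (0 : Cn n)) ℂ) where
  carrier := {G | ∃ g : Cn n → ℂ, AnalyticAt ℂ g 0 ∧ (g : Filter.Germ (𝓝 (0 : Cn n)) ℂ) = G}
  mul_mem' := by rintro _ _ ⟨g, hg, rfl⟩ ⟨h, hh, rfl⟩; exact ⟨g * h, hg.mul hh, rfl⟩
  add_mem' := by rintro _ _ ⟨g, hg, rfl⟩ ⟨h, hh, rfl⟩; exact ⟨g + h, hg.add hh, rfl⟩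
  algebraMap_mem' := fun c => ⟨fun _ => c, analyticAt_const, by
    rw [Algebra.algebraMap_eq_smul_one, ← Filter.Germ.coe_one, ← Filter.Germ.coe_smul]
    congr 1
    funext x
    simp⟩

/-- The ideal `⟨f⟩` of `𝒪_n` generated by the coordinate functions of `f`. -/
def coordIdeal {n p : ℕ} (f : Cn n → Cn p) : Ideal (Ogerm n) :=
  Ideal.span {G : Ogerm n | ∃ i : Fin p,
    (G : Filter.Germ (𝓝 (0 : Cn n)) ℂ) =
      ((fun x => f x i : Cn n → ℂ) : Filter.Germ (𝓝 (0 : Cn n)) ℂ)}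

/-- The multiplicity `mult f = dim_ℂ 𝒪ₙ/⟨f⟩` of a map germ. -/
def multGerm {n p : ℕ} (f : Cn n → Cn p) : Cardinal :=
  Module.rank ℂ (Ogerm n ⧸ coordIdeal f)

/-- `f` is a finite map germ: `dim_ℂ 𝒪ₙ/f^*(𝔪_p)𝒪ₙ < ∞`. -/
def FiniteGerm {n p : ℕ} (f : Cn n → Cn p) : Prop :=
  multGerm f < Cardinal.aleph0


theorem level_chart {E R : Type} [NormedAddCommGroup E] [NormedSpace ℂ E] [FiniteDimensional ℂ E]
    [NormedAddCommGroup R] [NormedSpace ℂ R] [FiniteDimensional ℂ R]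
    (g : E → R) (v0 : E) (hg : AnalyticAt ℂ g v0)
    (hs : (fderiv ℂ g v0).range = ⊤) (N : Set E) (hN : N ∈ 𝓝 v0) :
    ∃ (χ : (fderiv ℂ g v0).ker → E) (ε : ℝ), 0 < ε ∧ χ 0 = v0 ∧
      AnalyticOnNhd ℂ χ (Metric.ball 0 ε) ∧ InjOn χ (Metric.ball 0 ε) ∧
      (∀ t ∈ Metric.ball (0 : (fderiv ℂ g v0).ker) ε, χ t ∈ N ∧ g (χ t) = g v0) ∧
      ∀ᶠ x in 𝓝 v0, g x = g v0 → x ∈ χ '' Metric.ball 0 ε := by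
  have := FiniteDimensional.complete ℂ E
  have := FiniteDimensional.complete ℂ R
  have hst : HasStrictFDerivAt g (fderiv ℂ g v0) v0 := hg.hasStrictFDerivAt
  have hker : (fderiv ℂ g v0).ker.ClosedComplemented :=
    Submodule.ClosedComplemented.of_finiteDimensional _
  set φ := HasStrictFDerivAt.implicitFunctionDataOfComplemented g (fderiv ℂ g v0) hst hs hker with hφ
  have hpt : φ.pt = v0 := rfl
  have hleft : φ.leftFun = g := rfl
  have hr0 : φ.rightFun v0 = 0 := by
    simp [hφ]
  have hprod : φ.prodFun φ.pt = (g v0, 0) := by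
    rw [ImplicitFunctionData.prodFun_apply, hpt, hr0, hleft]
  have hran : AnalyticAt ℂ φ.rightFun v0 := by
    have : φ.rightFun = fun x => (Classical.choose hker) (x - v0) := rfl
    rw [this]
    exact ((Classical.choose hker).analyticAt _).fun_comp (analyticAt_id.sub analyticAt_const)
  have hcd := φ.contDiffAt_implicitFunction (n := ⊤) (show ContDiffAt ℂ ⊤ g v0 from hg.contDiffAt)
    hran.contDiffAt (by simp)
  rw [hprod] at hcd
  let χ : (fderiv ℂ g v0).ker → E := fun t => φ.implicitFunction (g v0) t
  have hχa : AnalyticAt ℂ χ 0 := by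
    have h1 : AnalyticAt ℂ φ.implicitFunction.uncurry (g v0, 0) := by
      exact hcd.analyticAt
    exact h1.fun_comp (f := fun t : (fderiv ℂ g v0).ker => (g v0, t)) (analyticAt_const.prod analyticAt_id)
  have himg := φ.implicitFunction_apply_image
  have hχ0 : χ 0 = v0 := by
    have := himg.self_of_nhds
    rw [hpt, hr0, hleft] at this
    exact this
  have hpf : ∀ᶠ t in 𝓝 (0 : (fderiv ℂ g v0).ker), φ.prodFun (χ t) = (g v0, t) := by
    have h := φ.prodFun_implicitFunction
    rw [hprod] at h
    have hc : Tendsto (fun t : (fderiv ℂ g v0).ker => (g v0, t)) (𝓝 0) (𝓝 (g v0, 0)) := by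
      apply Continuous.tendsto' (by fun_prop); rfl
    exact hc.eventually h
  have hall := (hpf.and (hχa.eventually_analyticAt.and
    (hχa.continuousAt.eventually (by rw [hχ0]; exact hN)))) 
  obtain ⟨ε, hε, hb⟩ := Metric.eventually_nhds_iff_ball.1 hall
  refine ⟨χ, ε, hε, hχ0, fun t ht => (hb t ht).2.1, ?_, ?_, ?_⟩
  · intro s hs' t ht h
    have h1 := (hb s hs').1
    have h2 := (hb t ht).1
    rw [h, h2] at h1
    exact (Prod.ext_iff.1 h1).2.symm
  · intro t ht
    exact ⟨(hb t ht).2.2, (Prod.ext_iff.1 (hb t ht).1).1⟩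
  · have hrc : ∀ᶠ x in 𝓝 v0, φ.rightFun x ∈ Metric.ball 0 ε :=
      hran.continuousAt.eventually (by rw [hr0]; exact Metric.ball_mem_nhds _ hε)
    rw [hpt] at himg
    filter_upwards [hrc, himg] with x h1 h2 h3
    refine ⟨φ.rightFun x, h1, ?_⟩
    rw [hleft, h3] at h2
    exact h2

theorem finrank_le_of_finite_fibres {E F : Type} [NormedAddCommGroup E] [NormedSpace ℂ E]
    [FiniteDimensional ℂ E] [NormedAddCommGroup F] [NormedSpace ℂ F] [FiniteDimensional ℂ F]
    (G : E → F) (V : Set E) (hV : IsOpen V) (hne : V.Nonempty) (hG : AnalyticOnNhd ℂ G V)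
    (hfib : ∀ v ∈ V, {w ∈ V | G w = G v}.Finite) (r : ℕ)
    (hr : ∀ v ∈ V, Module.finrank ℂ (fderiv ℂ G v).range ≤ r) : Module.finrank ℂ E ≤ r := by
  have := FiniteDimensional.complete ℂ E
  have := FiniteDimensional.complete ℂ F
  by_contra hlt
  push Not at hlt
  obtain ⟨v0, hv0, hmax⟩ : ∃ v0 ∈ V, ∀ v ∈ V, Module.finrank ℂ (fderiv ℂ G v).range ≤
      Module.finrank ℂ (fderiv ℂ G v0).range := by
    have hb : BddAbove ((fun v => Module.finrank ℂ (fderiv ℂ G v).range) '' V) :=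
      ⟨r, by rintro _ ⟨v, hv, rfl⟩; exact hr v hv⟩
    obtain ⟨v0, hv0, h0⟩ := Nat.sSup_mem (hne.image _) hb
    refine ⟨v0, hv0, fun v hv => ?_⟩
    have := le_csSup hb (mem_image_of_mem _ hv)
    simp only at h0 this
    omega
  obtain ⟨π, hπ⟩ : (fderiv ℂ G v0).range.ClosedComplemented :=
    Submodule.ClosedComplemented.of_finiteDimensional _
  let g : E → (fderiv ℂ G v0).range := fun v => π (G v)
  have hga : AnalyticOnNhd ℂ g V := fun v hv => (π.analyticAt _).fun_comp (hG v hv)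
  have hgd : ∀ v ∈ V, fderiv ℂ g v = π ∘L fderiv ℂ G v := fun v hv =>
    (π.hasFDerivAt.comp v (hG v hv).differentiableAt.hasFDerivAt).fderiv
  have hs0 : (fderiv ℂ g v0).range = ⊤ := by
    rw [LinearMap.range_eq_top]
    rintro ⟨y, x, rfl⟩
    refine ⟨x, ?_⟩
    rw [hgd v0 hv0]
    exact hπ ⟨_, x, rfl⟩
  have hopen : ∀ᶠ v in 𝓝 v0, (fderiv ℂ g v).range = ⊤ := by
    have ho := isOpen_setOfPred_nat_le_rank (𝕜 := ℂ) (E := E) (F := (fderiv ℂ G v0).range)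
      (Module.finrank ℂ (fderiv ℂ G v0).range)
    have hc : ContinuousAt (fderiv ℂ g) v0 := (hga v0 hv0).fderiv.continuousAt
    have hm := hc.eventually (ho.mem_nhds (by
      show ((Module.finrank ℂ (fderiv ℂ G v0).range : ℕ) : Cardinal) ≤ Module.rank ℂ (fderiv ℂ g v0).range
      rw [hs0, rank_top, Module.finrank_eq_rank]))
    filter_upwards [hm] with v hv
    apply Submodule.eq_top_of_finrank_eq
    apply le_antisymm (Submodule.finrank_le _)
    have hv' : ((Module.finrank ℂ (fderiv ℂ G v0).range : ℕ) : Cardinal) ≤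
      Module.rank ℂ (fderiv ℂ g v).range := hv
    rw [← Module.finrank_eq_rank] at hv'
    exact_mod_cast hv'
  obtain ⟨χ, ε, hε, hχ0, hχa, hχi, hχm, -⟩ := level_chart g v0 (hga v0 hv0) hs0
    (V ∩ {v | (fderiv ℂ g v).range = ⊤}) (inter_mem (hV.mem_nhds hv0) hopen)
  have hkereq : ∀ v ∈ V, (fderiv ℂ g v).range = ⊤ → (fderiv ℂ g v).ker = (fderiv ℂ G v).ker := by
    intro v hv hsv
    symm
    apply Submodule.eq_of_le_of_finrank_le
    · intro x hx
      have hx' : fderiv ℂ G v x = 0 := hx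
      show fderiv ℂ g v x = 0
      rw [hgd v hv]; simp [hx']
    · have h1 := LinearMap.finrank_range_add_finrank_ker (fderiv ℂ g v : E →ₗ[ℂ] (fderiv ℂ G v0).range)
      have h2 := LinearMap.finrank_range_add_finrank_ker (fderiv ℂ G v : E →ₗ[ℂ] F)
      have h3 := hmax v hv
      rw [hsv, finrank_top] at h1
      omega
  have hconst : ∀ t ∈ Metric.ball (0 : (fderiv ℂ g v0).ker) ε, G (χ t) = G v0 := by
    intro t ht
    have hdiff : ∀ s ∈ Metric.ball (0 : (fderiv ℂ g v0).ker) ε,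
        HasFDerivAt (G ∘ χ) (fderiv ℂ G (χ s) ∘L fderiv ℂ χ s) s := fun s hs =>
      (hG _ (hχm s hs).1.1).differentiableAt.hasFDerivAt.comp s
        (hχa s hs).differentiableAt.hasFDerivAt
    have := Metric.isOpen_ball.is_const_of_fderiv_eq_zero (𝕜 := ℂ) (f := G ∘ χ)
      (s := Metric.ball (0 : (fderiv ℂ g v0).ker) ε) (convex_ball _ _).isPreconnected
      (fun s hs => (hdiff s hs).differentiableAt.differentiableWithinAt) (by
        intro s hs
        rw [(hdiff s hs).fderiv]
        ext x
        have hgc : HasFDerivAt (g ∘ χ) (fderiv ℂ g (χ s) ∘L fderiv ℂ χ s) s :=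
          (hga _ (hχm s hs).1.1).differentiableAt.hasFDerivAt.comp s
            (hχa s hs).differentiableAt.hasFDerivAt
        have hgc' : HasFDerivAt (g ∘ χ) (0 : _ →L[ℂ] (fderiv ℂ G v0).range) s := by
          apply (hasFDerivAt_const (g v0) s).congr_of_eventuallyEq
          filter_upwards [Metric.isOpen_ball.mem_nhds hs] with u hu using (hχm u hu).2
        have h0 := hgc.unique hgc'
        have h1 : fderiv ℂ χ s x ∈ (fderiv ℂ g (χ s)).ker := by
          show (fderiv ℂ g (χ s) ∘L fderiv ℂ χ s) x = 0
          rw [h0]; rfl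
        rw [hkereq _ (hχm s hs).1.1 (hχm s hs).1.2] at h1
        exact h1) ht (Metric.mem_ball_self hε)
    simpa [hχ0] using this
  have hnt : Nontrivial (fderiv ℂ g v0).ker := by
    apply Module.nontrivial_of_finrank_pos (R := ℂ)
    have h1 := LinearMap.finrank_range_add_finrank_ker (fderiv ℂ g v0 : E →ₗ[ℂ] (fderiv ℂ G v0).range)
    have h3 := hr v0 hv0
    rw [hs0, finrank_top] at h1
    omega
  have := Module.punctured_nhds_neBot ℂ (fderiv ℂ g v0).ker 0
  have hinf : (Metric.ball (0 : (fderiv ℂ g v0).ker) ε).Infinite :=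
    infinite_of_mem_nhds 0 (Metric.ball_mem_nhds _ hε)
  refine (hinf.image hχi) ((hfib v0 hv0).subset ?_)
  rintro _ ⟨t, ht, rfl⟩
  exact ⟨(hχm t ht).1.1, hconst t ht⟩

theorem analyticAt_iteratedFDeriv' {E : Type} [NormedAddCommGroup E] [NormedSpace ℂ E]
    {h : E → ℂ} {w : E} (ha : AnalyticAt ℂ h w) (j : ℕ) :
    AnalyticAt ℂ (iteratedFDeriv ℂ j h) w :=
  AnalyticOnNhd.iteratedFDeriv (s := {w}) (fun x hx => by rw [mem_singleton_iff.1 hx]; exact ha)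
    j w rfl

theorem exists_derivative_component {E : Type} [NormedAddCommGroup E] [NormedSpace ℂ E]
    [FiniteDimensional ℂ E] {d : ℕ} (b : Module.Basis (Fin d) ℂ E) (h : E → ℂ) (w : E)
    (ha : AnalyticAt ℂ h w) (h0 : h w = 0) (hne : ¬ (h =ᶠ[𝓝 w] 0)) :
    ∃ (j : ℕ) (c : Fin j → Fin d),
      iteratedFDeriv ℂ j h w (fun i => b (c i)) = 0 ∧
      fderiv ℂ (fun x => iteratedFDeriv ℂ j h x (fun i => b (c i))) w ≠ 0 := by
  classical
  have hex : ∃ j, iteratedFDeriv ℂ j h w ≠ 0 := by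
    by_contra hcon
    push Not at hcon
    apply hne
    obtain ⟨p, r, hp⟩ := ha
    have hball : ∀ᶠ y in 𝓝 w, y - w ∈ Metric.eball (0 : E) r := by
      have : Tendsto (fun y => y - w) (𝓝 w) (𝓝 0) := by
        apply Continuous.tendsto' (by fun_prop); simp
      exact this.eventually (Metric.eball_mem_nhds _ hp.r_pos)
    filter_upwards [hball] with y hy
    have hs := hp.hasSum_iteratedFDeriv hy
    simp only [hcon] at hs
    have h2 : HasSum (fun n : ℕ => (0 : ℂ)) (h (w + (y - w))) := by simpa using hs
    have := h2.unique hasSum_zero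
    simpa using this
  have hj := Nat.find_spec hex
  have hmin : ∀ m < Nat.find hex, iteratedFDeriv ℂ m h w = 0 := fun m hm => by
    simpa using Nat.find_min hex hm
  revert hj hmin
  generalize Nat.find hex = j
  intro hj hmin
  cases j with
  | zero =>
    exfalso; apply hj; ext m; simp [h0]
  | succ i =>
    have hi := hmin i (Nat.lt_succ_self i)
    have hd : fderiv ℂ (iteratedFDeriv ℂ i h) w ≠ 0 := by
      intro hz
      apply hj
      ext m
      rw [iteratedFDeriv_succ_apply_left, hz]; rfl
    obtain ⟨u, hu⟩ : ∃ u, fderiv ℂ (iteratedFDeriv ℂ i h) w u ≠ 0 := by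
      by_contra hcon; push Not at hcon; exact hd (ContinuousLinearMap.ext hcon)
    obtain ⟨c, hc⟩ : ∃ c : Fin i → Fin d,
        fderiv ℂ (iteratedFDeriv ℂ i h) w u (fun l => b (c l)) ≠ 0 := by
      by_contra hcon
      push Not at hcon
      apply hu
      apply ContinuousMultilinearMap.toMultilinearMap_injective
      apply Module.Basis.ext_multilinear (fun _ => b)
      intro v
      exact hcon v
    refine ⟨i, c, by rw [hi]; rfl, fun hz => hc ?_⟩
    have hdiff : DifferentiableAt ℂ (iteratedFDeriv ℂ i h) w := 
      (analyticAt_iteratedFDeriv' ha i).differentiableAt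
    have hcomp := (ContinuousMultilinearMap.apply ℂ (fun _ : Fin i => E) ℂ
      (fun l => b (c l))).hasFDerivAt.comp w hdiff.hasFDerivAt
    have := hcomp.fderiv
    have h3 : fderiv ℂ (fun x => iteratedFDeriv ℂ i h x (fun l => b (c l))) w u
      = fderiv ℂ (iteratedFDeriv ℂ i h) w u (fun l => b (c l)) := 
      congrArg (fun L : E →L[ℂ] ℂ => L u) this
    rw [← h3, hz]; rfl

theorem dimH_image_le_of_local {E F : Type} [TopologicalSpace E] [SecondCountableTopology E]
    [MetricSpace F] (φ : E → F) (S : Set E) (c : ENNReal)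
    (hloc : ∀ v ∈ S, ∃ N ∈ 𝓝 v, dimH (φ '' (S ∩ N)) ≤ c) : dimH (φ '' S) ≤ c := by
  choose! N hN hd using hloc
  obtain ⟨t, htS, htc, hcov⟩ := TopologicalSpace.countable_cover_nhdsWithin
    (f := N) (s := S) (fun x hx => mem_nhdsWithin_of_mem_nhds (hN x hx))
  have hsub : φ '' S ⊆ ⋃ x ∈ t, φ '' (S ∩ N x) := by
    rintro _ ⟨v, hv, rfl⟩
    obtain ⟨x, hx, hvx⟩ := mem_iUnion₂.1 (hcov hv)
    exact mem_iUnion₂.2 ⟨x, hx, v, ⟨hv, hvx⟩, rfl⟩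
  refine (dimH_mono hsub).trans ?_
  rw [dimH_bUnion htc]
  exact iSup₂_le fun x hx => hd x (htS hx)

theorem exists_test_maps {E F : Type} [NormedAddCommGroup E] [NormedSpace ℂ E]
    [FiniteDimensional ℂ E] [NormedAddCommGroup F] [NormedSpace ℂ F] [FiniteDimensional ℂ F]
    (A : E →L[ℂ] F) (r : ℕ) (hr : r < Module.finrank ℂ A.range) :
    ∃ (α : (Fin (r+1) → ℂ) →ₗ[ℂ] E) (β : F →ₗ[ℂ] (Fin (r+1) → ℂ)),
      β ∘ₗ (A : E →ₗ[ℂ] F) ∘ₗ α = LinearMap.id := by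
  have hle : Module.rank ℂ (Fin (r+1) → ℂ) ≤ Module.rank ℂ A.range := by
    rw [← Module.finrank_eq_rank, ← Module.finrank_eq_rank]
    have : Module.finrank ℂ (Fin (r+1) → ℂ) ≤ Module.finrank ℂ A.range := by simpa using hr
    exact_mod_cast this
  obtain ⟨L, hL⟩ := rank_le_iff_exists_linearMap.1 hle
  obtain ⟨σ, hσ⟩ := (LinearMap.rangeRestrict (A : E →ₗ[ℂ] F)).exists_rightInverse_of_surjective
    (LinearMap.range_rangeRestrict _)
  obtain ⟨β, hβ⟩ := (A.range.subtype ∘ₗ L).exists_leftInverse_of_injective (by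
    rw [LinearMap.ker_eq_bot]
    exact (Submodule.subtype_injective _).comp hL)
  refine ⟨σ ∘ₗ L, β, ?_⟩
  rw [← hβ]
  ext1 i
  ext1 
  have : ∀ y : A.range, A (σ y) = y := fun y => congrArg Subtype.val (LinearMap.congr_fun hσ y)
  simp [this]

theorem det_test_eq_zero {E F : Type} [NormedAddCommGroup E] [NormedSpace ℂ E]
    [FiniteDimensional ℂ E] [NormedAddCommGroup F] [NormedSpace ℂ F] [FiniteDimensional ℂ F]
    (A : E →L[ℂ] F) (r : ℕ) (hr : Module.finrank ℂ A.range ≤ r)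
    (α : (Fin (r+1) → ℂ) →ₗ[ℂ] E) (β : F →ₗ[ℂ] (Fin (r+1) → ℂ)) :
    LinearMap.det (β ∘ₗ (A : E →ₗ[ℂ] F) ∘ₗ α) = 0 := by
  by_contra hne
  have hsurj := (LinearMap.equivOfDetNeZero _ hne).surjective
  have h1 : (β ∘ₗ (A : E →ₗ[ℂ] F) ∘ₗ α).range = ⊤ := LinearMap.range_eq_top.2 hsurj
  have h2 : (β ∘ₗ (A : E →ₗ[ℂ] F) ∘ₗ α).range ≤ A.range.map β := by
    rintro _ ⟨x, rfl⟩
    exact ⟨A (α x), ⟨α x, rfl⟩, rfl⟩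
  have h3 := Submodule.finrank_mono h2
  rw [h1, finrank_top] at h3
  have h4 := Submodule.finrank_map_le β A.range
  simp at h3
  omega

theorem analyticAt_det_test {E F X : Type} [NormedAddCommGroup E] [NormedSpace ℂ E]
    [FiniteDimensional ℂ E] [NormedAddCommGroup F] [NormedSpace ℂ F] [FiniteDimensional ℂ F]
    [NormedAddCommGroup X] [NormedSpace ℂ X] (A : X → E →L[ℂ] F) (x : X) (hA : AnalyticAt ℂ A x)
    (r : ℕ) (α : (Fin (r+1) → ℂ) →ₗ[ℂ] E) (β : F →ₗ[ℂ] (Fin (r+1) → ℂ)) :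
    AnalyticAt ℂ (fun x => LinearMap.det (β ∘ₗ (A x : E →ₗ[ℂ] F) ∘ₗ α)) x := by
  have heq : (fun x => LinearMap.det (β ∘ₗ (A x : E →ₗ[ℂ] F) ∘ₗ α)) = fun x =>
      ∑ σ : Equiv.Perm (Fin (r+1)), (Equiv.Perm.sign σ : ℤ) * ∏ i,
        β (A x (α (Pi.single i 1))) (σ i) := by
    funext x
    rw [← LinearMap.det_toMatrix', Matrix.det_apply']
    simp [LinearMap.toMatrix'_apply]
  rw [heq]
  apply Finset.analyticAt_fun_sum
  intro σ _
  apply analyticAt_const.fun_mul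
  apply Finset.analyticAt_fun_prod
  intro i _
  let L : (E →L[ℂ] F) →ₗ[ℂ] ℂ := (LinearMap.proj (σ i)) ∘ₗ β ∘ₗ
    ((ContinuousLinearMap.apply ℂ F (α (Pi.single i 1)) : (E →L[ℂ] F) →L[ℂ] F) : (E →L[ℂ] F) →ₗ[ℂ] F)
  have := FiniteDimensional.complete ℂ F
  exact ((LinearMap.toContinuousLinearMap L).analyticAt _).fun_comp hA

theorem dimH_rank_locus {F₁ F₂ : Type} [NormedAddCommGroup F₁] [NormedSpace ℂ F₁]
    [FiniteDimensional ℂ F₁] [NormedAddCommGroup F₂] [NormedSpace ℂ F₂] [FiniteDimensional ℂ F₂]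
    (f : F₁ → F₂) (W : Set F₁) (hfa : AnalyticOnNhd ℂ f W)
    (hfib : ∀ y, {x ∈ W | f x = y}.Finite) (r : ℕ) :
    ∀ (d : ℕ) (E : Type) [NormedAddCommGroup E] [NormedSpace ℂ E] [FiniteDimensional ℂ E]
      (φ : E → F₁) (V : Set E), Module.finrank ℂ E = d → IsOpen V → AnalyticOnNhd ℂ φ V →
      InjOn φ V → MapsTo φ V W →
      dimH (φ '' (V ∩ {v | Module.finrank ℂ (fderiv ℂ f (φ v)).range ≤ r})) ≤
        ((2 * r : ℕ) : ENNReal) := by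
  intro d
  induction d using Nat.strong_induction_on with
  | _ d ih =>
  intro E _ _ _ φ V hd hV hφ hinj hmaps
  have := FiniteDimensional.complete ℂ F₁
  have := FiniteDimensional.complete ℂ F₂
  have : ProperSpace E := FiniteDimensional.proper ℂ E
  apply dimH_image_le_of_local
  rintro v ⟨hv, hvr⟩
  obtain ⟨ε, hε, hball⟩ := Metric.isOpen_iff.1 hV v hv
  refine ⟨Metric.ball v ε, Metric.ball_mem_nhds _ hε, ?_⟩
  have hAan : ∀ x ∈ V, AnalyticAt ℂ (fun x => fderiv ℂ f (φ x)) x := fun x hx =>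
    (hfa _ (hmaps hx)).fderiv.fun_comp (hφ x hx)
  by_cases hall : ∀ x ∈ Metric.ball v ε, Module.finrank ℂ (fderiv ℂ f (φ x)).range ≤ r
  · have hdr : Module.finrank ℂ E ≤ r := by
      apply finrank_le_of_finite_fibres (f ∘ φ) (Metric.ball v ε) Metric.isOpen_ball
        ⟨v, Metric.mem_ball_self hε⟩
        (fun x hx => (hfa _ (hmaps (hball hx))).comp (hφ x (hball hx)))
      · intro w hw
        have hfin := hfib (f (φ w))
        refine Set.Finite.of_finite_image (f := φ) (hfin.subset ?_)
          (hinj.mono (fun x hx => hball hx.1))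
        rintro _ ⟨x, hx, rfl⟩
        exact ⟨hmaps (hball hx.1), hx.2⟩
      · intro x hx
        have hcomp : fderiv ℂ (f ∘ φ) x = fderiv ℂ f (φ x) ∘L fderiv ℂ φ x :=
          fderiv_comp x (hfa _ (hmaps (hball hx))).differentiableAt
            (hφ x (hball hx)).differentiableAt
        rw [hcomp]
        refine le_trans (Submodule.finrank_mono ?_) (hall x hx)
        rintro _ ⟨y, rfl⟩
        exact ⟨fderiv ℂ φ x y, rfl⟩
    have : FiniteDimensional ℝ E := FiniteDimensional.complexToReal E
    have hcd : ContDiffOn ℝ 1 φ (Metric.ball v ε) := fun x hx =>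
      ((hφ x (hball hx)).contDiffAt.restrict_scalars ℝ).contDiffWithinAt
    calc dimH (φ '' _) ≤ dimH (φ '' (Metric.ball v ε)) :=
          dimH_mono (image_mono inter_subset_right)
      _ ≤ dimH (Metric.ball v ε) := hcd.dimH_image_le (convex_ball _ _) subset_rfl
      _ ≤ dimH (univ : Set E) := dimH_mono (subset_univ _)
      _ = Module.finrank ℝ E := Real.dimH_univ_eq_finrank E
      _ ≤ ((2 * r : ℕ) : ENNReal) := by
        rw [finrank_real_of_complex]
        exact_mod_cast Nat.mul_le_mul_left 2 hdr
  · push Not at hall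
    obtain ⟨x1, hx1, hx1r⟩ := hall
    obtain ⟨α, β, hαβ⟩ := exists_test_maps _ r hx1r
    let h : E → ℂ := fun x =>
      LinearMap.det (β ∘ₗ (fderiv ℂ f (φ x) : F₁ →ₗ[ℂ] F₂) ∘ₗ α)
    have hh : AnalyticOnNhd ℂ h (Metric.ball v ε) := fun x hx =>
      analyticAt_det_test _ x (hAan x (hball hx)) r α β
    have hh1 : h x1 = 1 := by
      show LinearMap.det (β ∘ₗ (fderiv ℂ f (φ x1) : F₁ →ₗ[ℂ] F₂) ∘ₗ α) = 1
      rw [hαβ, LinearMap.det_id]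
    have hnz : ∀ w ∈ Metric.ball v ε, ¬ (h =ᶠ[𝓝 w] 0) := by
      intro w hw hcon
      have := hh.eqOn_zero_of_preconnected_of_eventuallyEq_zero
        (convex_ball _ _).isPreconnected hw hcon hx1
      rw [hh1] at this
      exact one_ne_zero this
    let b := Module.finBasis ℂ E
    let H : (Σ j : ℕ, Fin j → Fin (Module.finrank ℂ E)) → E → ℂ := fun s x =>
      iteratedFDeriv ℂ s.1 h x (fun i => b (s.2 i))
    have hHa : ∀ s, AnalyticOnNhd ℂ (H s) (Metric.ball v ε) := by
      intro s x hx
      exact ((ContinuousMultilinearMap.apply ℂ (fun _ : Fin s.1 => E) ℂ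
        (fun l => b (s.2 l))).analyticAt _).fun_comp (analyticAt_iteratedFDeriv' (hh x hx) s.1)
    let Z := V ∩ {v | Module.finrank ℂ (fderiv ℂ f (φ v)).range ≤ r} ∩ Metric.ball v ε
    let S : (Σ j : ℕ, Fin j → Fin (Module.finrank ℂ E)) → Set E := fun s =>
      {w ∈ Z | H s w = 0 ∧ fderiv ℂ (H s) w ≠ 0}
    have hcov : φ '' Z ⊆ ⋃ s, φ '' (S s) := by
      rintro _ ⟨w, hw, rfl⟩
      have hw0 : h w = 0 := det_test_eq_zero _ r hw.1.2 α β
      obtain ⟨j, c, h1, h2⟩ := exists_derivative_component b h w (hh w hw.2) hw0 (hnz w hw.2)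
      exact mem_iUnion.2 ⟨⟨j, c⟩, w, ⟨hw, h1, h2⟩, rfl⟩
    refine (dimH_mono hcov).trans ?_
    rw [dimH_iUnion]
    apply iSup_le
    intro s
    apply dimH_image_le_of_local
    rintro w ⟨hwZ, hw0, hwd⟩
    have hsurj : (fderiv ℂ (H s) w).range = ⊤ := by
      rw [LinearMap.range_eq_top]
      apply LinearMap.surjective
      intro hz
      exact hwd (ContinuousLinearMap.coe_injective hz)
    obtain ⟨χ, δ, hδ, -, hχa, hχi, hχm, hχc⟩ := level_chart (H s) w (hHa s w hwZ.2) hsurj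
      (Metric.ball v ε) (Metric.isOpen_ball.mem_nhds hwZ.2)
    have hk : Module.finrank ℂ (fderiv ℂ (H s) w).ker < d := by
      have h1 := LinearMap.finrank_range_add_finrank_ker (fderiv ℂ (H s) w : E →ₗ[ℂ] ℂ)
      rw [hsurj, finrank_top, Module.finrank_self] at h1
      omega
    have hI := ih _ hk (fderiv ℂ (H s) w).ker (φ ∘ χ) (Metric.ball 0 δ) rfl Metric.isOpen_ball
      (fun t ht => (hφ _ (hball (hχm t ht).1)).comp (hχa t ht))
      (hinj.comp hχi (fun t ht => hball (hχm t ht).1))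
      (fun t ht => hmaps (hball (hχm t ht).1))
    refine ⟨_, hχc, (dimH_mono ?_).trans hI⟩
    rintro _ ⟨x, ⟨hxS, hxN⟩, rfl⟩
    obtain ⟨t, ht, rfl⟩ := hxN (hxS.2.1.trans hw0.symm)
    exact ⟨t, ⟨ht, hxS.1.1.2⟩, rfl⟩

theorem monomials_mem_of_absorb {B S : Type} [NormedCommRing B] [NormedAlgebra ℂ B] {n : ℕ}
    (X : Fin n → B) (r : ℝ) (hr : 0 < r) (m : ℕ) (P : Submodule ℂ B) (hPc : IsClosed (P : Set B))
    (hbd : ∀ α : Fin n → ℕ, ‖∏ i, X i ^ α i‖ ≤ r ^ (∑ i, α i))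
    (hP : ∀ α : Fin n → ℕ, (∀ i, α i < m) → ∏ i, X i ^ α i ∈ P)
    (c : Fin n → S → ℂ) (γ : S → Fin n → ℕ)
    (hsum : ∀ i, HasSum (fun s => c i s • ∏ j, X j ^ γ s j) (X i ^ m))
    (hc : ∀ i, Summable (fun s => ‖c i s‖ * r ^ (∑ j, γ s j)))
    (hle : ∀ i, ∑' s, ‖c i s‖ * r ^ (∑ j, γ s j) ≤ r ^ m / 2) (α : Fin n → ℕ) :
    ∏ i, X i ^ α i ∈ P := by
  have : IsClosed (P : Set B) := hPc
  have key : ∀ N : ℕ, ∀ α : Fin n → ℕ,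
      ‖P.mkQL (∏ i, X i ^ α i)‖ ≤ r ^ (∑ i, α i) * (1/2) ^ N := by
    intro N
    induction N with
    | zero =>
      intro α
      simp only [pow_zero, mul_one]
      exact (Submodule.Quotient.norm_mk_le P _).trans (hbd α)
    | succ N ih =>
      intro α
      by_cases h : ∀ i, α i < m
      · have h0 : P.mkQL (∏ i, X i ^ α i) = 0 := by
          simpa using hP α h
        rw [h0, norm_zero]; positivity
      · push Not at h
        obtain ⟨i, hi⟩ := h
        obtain ⟨β, hβ⟩ : ∃ β : Fin n → ℕ, α = β + Pi.single i m := by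
          refine ⟨α - Pi.single i m, ?_⟩
          funext j
          by_cases hj : j = i
          · subst hj; simp [hi]
          · simp [hj]
        have hmul : ∀ a b : Fin n → ℕ, ∏ j, X j ^ (a + b) j =
            (∏ j, X j ^ a j) * ∏ j, X j ^ b j := by
          intro a b
          simp [pow_add, Finset.prod_mul_distrib]
        have hsing : ∏ j, X j ^ (Pi.single i m : Fin n → ℕ) j = X i ^ m := by
          rw [Finset.prod_eq_single i]
          · simp
          · intro j _ hj; simp [hj]
          · simp
        have hsα : ∑ j, α j = ∑ j, β j + m := by
          rw [hβ]; simp [Finset.sum_add_distrib]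
        have h1 : HasSum (fun s => c i s • P.mkQL (∏ j, X j ^ (β + γ s) j))
            (P.mkQL (∏ j, X j ^ α j)) := by
          have h2 := ((hsum i).mul_left (∏ j, X j ^ β j)).mapL P.mkQL
          rw [hβ, hmul, hsing]
          refine h2.congr_fun ?_ |> fun h => h
          intro s
          rw [hmul, mul_smul_comm, map_smul]
        have h3 : ∀ s, ‖c i s • P.mkQL (∏ j, X j ^ (β + γ s) j)‖ ≤
            (r ^ (∑ j, β j) * (1/2)^N) * (‖c i s‖ * r ^ (∑ j, γ s j)) := by
          intro s
          rw [norm_smul]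
          calc _ ≤ ‖c i s‖ * (r ^ (∑ j, (β + γ s) j) * (1/2)^N) := by
                gcongr; exact ih _
            _ = _ := by
                simp only [Pi.add_apply, Finset.sum_add_distrib, pow_add]; ring
        have h4 := tsum_of_norm_bounded (((hc i).hasSum).mul_left (r ^ (∑ j, β j) * (1/2)^N)) h3
        rw [h1.tsum_eq] at h4
        calc _ ≤ _ := h4
          _ ≤ (r ^ (∑ j, β j) * (1/2)^N) * (r ^ m / 2) := by gcongr; exact hle i
          _ = _ := by rw [hsα, pow_add, pow_succ]; ring
  have hz : ‖P.mkQL (∏ i, X i ^ α i)‖ ≤ 0 := by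
    have : Tendsto (fun N : ℕ => r ^ (∑ i, α i) * (1/2 : ℝ) ^ N) atTop (𝓝 (r ^ (∑ i, α i) * 0)) :=
      (tendsto_pow_atTop_nhds_zero_of_lt_one (by norm_num) (by norm_num)).const_mul _
    rw [mul_zero] at this
    exact ge_of_tendsto' this (fun N => key N α)
  have := norm_le_zero_iff.mp hz
  simpa using this

theorem word_expansion {n : ℕ} (a : EuclideanSpace ℂ (Fin n) → ℂ) (ha : AnalyticAt ℂ a 0) :
    ∃ c : (Σ k : ℕ, (Fin k → Fin n)) → ℂ, ∀ᶠ r in 𝓝[>] (0:ℝ),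
      Summable (fun s => ‖c s‖ * r ^ s.1) ∧
      ∀ x : EuclideanSpace ℂ (Fin n), (∀ i, ‖x i‖ ≤ r) →
        HasSum (fun s => c s * ∏ l, x (s.2 l)) (a x) := by
  obtain ⟨p, R, hp⟩ := ha
  let e : Fin n → EuclideanSpace ℂ (Fin n) := fun i => EuclideanSpace.single i 1
  have he : ∀ i, ‖e i‖ = 1 := fun i => by simp [e]
  refine ⟨fun s => p s.1 (fun l => e (s.2 l)), ?_⟩
  have hR : 0 < R := hp.r_pos
  have hev : ∀ᶠ r : ℝ in 𝓝[>] (0:ℝ), ENNReal.ofReal (n * r) < R := by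
    have h1 : Tendsto (fun r : ℝ => ENNReal.ofReal (n * r)) (𝓝 0) (𝓝 (ENNReal.ofReal (n * 0))) :=
      (ENNReal.continuous_ofReal.comp (continuous_const.mul continuous_id)).tendsto 0
    rw [mul_zero, ENNReal.ofReal_zero] at h1
    exact (h1.eventually_lt_const hR).filter_mono nhdsWithin_le_nhds
  filter_upwards [hev, self_mem_nhdsWithin] with r hr hr0
  have hr0 : 0 < r := hr0
  have hnr : 0 ≤ n * r := by positivity
  have hsm : Summable (fun s : (Σ k : ℕ, (Fin k → Fin n)) =>
      ‖p s.1 (fun l => e (s.2 l))‖ * r ^ s.1) := by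
    rw [summable_sigma_of_nonneg (fun s => by positivity)]
    refine ⟨fun k => Summable.of_finite, ?_⟩
    have h2 : Summable (fun k => ‖p k‖ * ((Real.toNNReal (n * r) : NNReal) : ℝ) ^ k) :=
      p.summable_norm_mul_pow (lt_of_lt_of_le hr hp.r_le)
    refine Summable.of_nonneg_of_le (fun k => tsum_nonneg fun w => by positivity) (fun k => ?_) h2
    rw [tsum_fintype]
    calc _ ≤ ∑ w : Fin k → Fin n, ‖p k‖ * r ^ k := by
          gcongr with w
          have := (p k).le_opNorm (fun l => e (w l))
          simpa [he] using this
      _ = _ := by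
          simp [Real.coe_toNNReal _ hnr, mul_pow]; ring
  refine ⟨hsm, fun x hx => ?_⟩
  have hxe : x = ∑ i, x i • e i := by
    ext j
    simp [e, Finset.sum_apply, Pi.single_apply]
  have hxn : ‖x‖ ≤ n * r := by
    calc ‖x‖ = ‖∑ i, x i • e i‖ := by rw [← hxe]
      _ ≤ ∑ i, ‖x i • e i‖ := norm_sum_le _ _
      _ ≤ ∑ i : Fin n, r := by
          gcongr with i
          rw [norm_smul, he, mul_one]; exact hx i
      _ = _ := by simp
  have hxR : x ∈ Metric.eball (0 : EuclideanSpace ℂ (Fin n)) R := by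
    rw [Metric.mem_eball, edist_zero_right]
    refine lt_of_le_of_lt ?_ hr
    rw [← ofReal_norm]
    exact ENNReal.ofReal_le_ofReal hxn
  have hs := hp.hasSum hxR
  rw [zero_add] at hs
  have hk : ∀ k, p k (fun _ => x) = ∑ w : Fin k → Fin n,
      p k (fun l => e (w l)) * ∏ l, x (w l) := by
    intro k
    have := (p k).toMultilinearMap.map_sum (fun (_ : Fin k) i => x i • e i)
    simp only [← hxe] at this
    refine this.trans ?_
    refine Finset.sum_congr rfl fun w _ => ?_
    rw [MultilinearMap.map_smul_univ, smul_eq_mul, mul_comm]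
    rfl
  have hsum' : Summable (fun s : (Σ k : ℕ, (Fin k → Fin n)) =>
      p s.1 (fun l => e (s.2 l)) * ∏ l, x (s.2 l)) := by
    refine Summable.of_norm_bounded hsm (fun s => ?_)
    rw [norm_mul, norm_prod]
    gcongr
    calc _ ≤ ∏ l : Fin s.1, r := Finset.prod_le_prod (fun _ _ => norm_nonneg _) (fun l _ => hx _)
      _ = _ := by simp
  have h5 := hsum'.hasSum.sigma (fun k => hasSum_fintype _)
  have h6 := h5.unique (by simpa only [hk] using hs)
  rw [← h6]
  exact hsum'.hasSum

theorem finite_fibres_of_pow_mem {n p : ℕ}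
    (f : EuclideanSpace ℂ (Fin n) → EuclideanSpace ℂ (Fin p)) (hf0 : f 0 = 0)
    (hf : ContinuousAt f 0) (m : ℕ)
    (a : Fin n → Fin p → EuclideanSpace ℂ (Fin n) → ℂ) (ha : ∀ i j, AnalyticAt ℂ (a i j) 0)
    (heq : ∀ i, ∀ᶠ x in 𝓝 (0 : EuclideanSpace ℂ (Fin n)), (x i) ^ m = ∑ j, a i j x * f x j) :
    ∃ W ∈ 𝓝 (0 : EuclideanSpace ℂ (Fin n)), ∀ y, {x ∈ W | f x = y}.Finite := by
  choose c hc using fun i j => word_expansion (a i j) (ha i j)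
  have hev : ∀ᶠ r in 𝓝[>] (0:ℝ), 0 < r ∧ ∀ i j, (Summable (fun s => ‖c i j s‖ * r ^ s.1) ∧
      ∀ x : EuclideanSpace ℂ (Fin n), (∀ i, ‖x i‖ ≤ r) →
        HasSum (fun s => c i j s * ∏ l, x (s.2 l)) (a i j x)) :=
    (eventually_mem_of_tendsto_nhdsWithin tendsto_id).and
      (eventually_all.mpr fun i => eventually_all.mpr fun j => hc i j)
  obtain ⟨r, hr, hrc⟩ := hev.exists
  set T : Fin n → Fin p → ℝ := fun i j => ∑' s, ‖c i j s‖ * r ^ s.1 with hT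
  have hT0 : ∀ i j, 0 ≤ T i j := fun i j => tsum_nonneg fun s => by positivity
  set M : ℝ := ∑ i, ∑ j, T i j with hM
  have hM0 : 0 ≤ M := Finset.sum_nonneg fun i _ => Finset.sum_nonneg fun j _ => hT0 i j
  set η : ℝ := (r ^ m / 2) / (M + 1) with hη
  have hη0 : 0 < η := by positivity
  have hηM : η * M ≤ r ^ m / 2 := by
    rw [hη, div_mul_eq_mul_div, div_le_iff₀ (by positivity)]
    have : 0 < r ^ m / 2 := by positivity
    nlinarith
  refine ⟨{x | (∀ i, ‖x i‖ ≤ r) ∧ (∀ j, ‖f x j‖ ≤ η) ∧ ∀ i, (x i) ^ m = ∑ j, a i j x * f x j},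
    ?_, ?_⟩
  · have h1 : ∀ᶠ x in 𝓝 (0 : EuclideanSpace ℂ (Fin n)), ∀ i, ‖x i‖ ≤ r := by
      filter_upwards [Metric.ball_mem_nhds (0 : EuclideanSpace ℂ (Fin n)) hr] with x hx i
      exact (PiLp.norm_apply_le x i).trans (mem_ball_zero_iff.mp hx).le
    have h2 : ∀ᶠ x in 𝓝 (0 : EuclideanSpace ℂ (Fin n)), ∀ j, ‖f x j‖ ≤ η := by
      have := hf.eventually (Metric.ball_mem_nhds (f 0) hη0)
      filter_upwards [this] with x hx j
      rw [hf0, dist_zero_right] at hx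
      exact (PiLp.norm_apply_le (f x) j).trans hx.le
    filter_upwards [h1, h2, eventually_all.mpr heq] with x h1 h2 h3
    exact ⟨h1, h2, h3⟩
  intro y
  by_cases hy : ∀ j, ‖y j‖ ≤ η
  swap
  · convert Set.finite_empty
    ext x
    simp only [Set.mem_ofPred_eq, mem_empty_iff_false, iff_false]
    rintro ⟨⟨_, h, _⟩, rfl⟩
    exact hy h
  set K : Set (EuclideanSpace ℂ (Fin n)) := {x ∈ {x | (∀ i, ‖x i‖ ≤ r) ∧ (∀ j, ‖f x j‖ ≤ η) ∧
    ∀ i, (x i) ^ m = ∑ j, a i j x * f x j} | f x = y} with hK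
  have hK1 : ∀ x : K, ∀ i, ‖x.1 i‖ ≤ r := fun x => x.2.1.1
  have hK2 : ∀ x : K, ∀ i, (x.1 i) ^ m = ∑ j, a i j x.1 * y j := fun x i => by
    rw [x.2.1.2.2 i, x.2.2]
  let X : Fin n → BoundedContinuousFunction K ℂ := fun i =>
    BoundedContinuousFunction.ofNormedAddCommGroup (fun x : K => x.1 i)
      (by fun_prop) r (fun x => hK1 x i)
  have hX : ∀ i x, X i x = x.1 i := fun i x => rfl
  let ev : K → BoundedContinuousFunction K ℂ →L[ℂ] ℂ := fun x =>
    BoundedContinuousFunction.evalCLM ℂ x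
  have hmono : ∀ (α : Fin n → ℕ) (x : K), (∏ i, X i ^ α i) x = ∏ i, x.1 i ^ α i := by
    intro α x
    simp [hX]
  let γ : (Σ k : ℕ, (Fin k → Fin n)) → Fin n → ℕ := fun s i =>
    (Finset.univ.filter fun l => s.2 l = i).card
  have hγs : ∀ s, ∑ i, γ s i = s.1 := by
    intro s
    have := Finset.card_eq_sum_card_fiberwise (f := s.2) (s := Finset.univ) (t := Finset.univ)
      (by simp)
    simpa [γ] using this.symm
  have hγp : ∀ s (x : Fin n → ℂ), ∏ i, x i ^ γ s i = ∏ l, x (s.2 l) := by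
    intro s x
    rw [← Finset.prod_fiberwise' Finset.univ s.2 x]
    simp [γ]
  have hbd : ∀ α : Fin n → ℕ, ‖∏ i, X i ^ α i‖ ≤ r ^ (∑ i, α i) := by
    intro α
    rw [BoundedContinuousFunction.norm_le (by positivity)]
    intro x
    rw [hmono, norm_prod, ← Finset.prod_pow_eq_pow_sum]
    refine Finset.prod_le_prod (fun _ _ => norm_nonneg _) fun i _ => ?_
    rw [norm_pow]
    gcongr
    exact hK1 x i
  let c' : Fin n → (Σ k : ℕ, (Fin k → Fin n)) → ℂ := fun i s => ∑ j, c i j s * y j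
  have hc'le : ∀ i s, ‖c' i s‖ * r ^ s.1 ≤ ∑ j, η * (‖c i j s‖ * r ^ s.1) := by
    intro i s
    calc _ ≤ (∑ j, ‖c i j s * y j‖) * r ^ s.1 := by gcongr; exact norm_sum_le _ _
      _ = ∑ j, ‖y j‖ * (‖c i j s‖ * r ^ s.1) := by
          rw [Finset.sum_mul]
          refine Finset.sum_congr rfl fun j _ => ?_
          rw [norm_mul]; ring
      _ ≤ _ := by
          gcongr with j
          exact hy j
  have hmaj : ∀ i, HasSum (fun s => ∑ j, η * (‖c i j s‖ * r ^ s.1)) (∑ j, η * T i j) := fun i =>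
    hasSum_sum fun j _ => ((hrc i j).1.hasSum).mul_left η
  have hc's : ∀ i, Summable (fun s => ‖c' i s‖ * r ^ s.1) := fun i =>
    Summable.of_nonneg_of_le (fun s => by positivity) (hc'le i) (hmaj i).summable
  have hc't : ∀ i, ∑' s, ‖c' i s‖ * r ^ s.1 ≤ r ^ m / 2 := by
    intro i
    calc _ ≤ ∑ j, η * T i j := hasSum_le (hc'le i) (hc's i).hasSum (hmaj i)
      _ = η * ∑ j, T i j := by rw [Finset.mul_sum]
      _ ≤ η * M := by
          gcongr
          exact Finset.single_le_sum (f := fun i => ∑ j, T i j)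
            (fun i _ => Finset.sum_nonneg fun j _ => hT0 i j) (Finset.mem_univ i)
      _ ≤ _ := hηM
  have hsumm : ∀ i, HasSum (fun s => c' i s • ∏ j, X j ^ γ s j) (X i ^ m) := by
    intro i
    have h1 : Summable (fun s => c' i s • ∏ j, X j ^ γ s j) := by
      refine Summable.of_norm_bounded (hc's i) fun s => ?_
      rw [norm_smul]
      gcongr
      exact (hbd _).trans (by rw [hγs])
    have h2 : ∑' s, c' i s • ∏ j, X j ^ γ s j = X i ^ m := by
      ext x
      have h3 := h1.hasSum.mapL (ev x)
      have h4 : HasSum (fun s => ∑ j, (c i j s * ∏ l, x.1 (s.2 l)) * y j)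
          (∑ j, a i j x.1 * y j) :=
        hasSum_sum fun j _ => ((hrc i j).2 x.1 (hK1 x)).mul_right (y j)
      have h5 : (fun s => ev x (c' i s • ∏ j, X j ^ γ s j)) =
          fun s => ∑ j, (c i j s * ∏ l, x.1 (s.2 l)) * y j := by
        funext s
        have : ev x (∏ j, X j ^ γ s j) = ∏ l, x.1 (s.2 l) :=
          (hmono _ x).trans (hγp s x.1)
        rw [map_smul, this, smul_eq_mul, Finset.sum_mul]
        refine Finset.sum_congr rfl fun j _ => ?_
        ring
      rw [h5] at h3
      have h6 := h3.unique h4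
      refine Eq.trans h6 ?_
      rw [← hK2 x i]
      rfl
    rw [← h2]
    exact h1.hasSum
  let P : Submodule ℂ (BoundedContinuousFunction K ℂ) :=
    Submodule.span ℂ (Set.range fun α : Fin n → Fin m => ∏ i, X i ^ (α i : ℕ))
  have hPfin : FiniteDimensional ℂ P := FiniteDimensional.span_of_finite ℂ (Set.finite_range _)
  have hall := monomials_mem_of_absorb X r hr m P P.closed_of_finiteDimensional hbd
    (fun α hα => Submodule.subset_span ⟨fun i => ⟨α i, hα i⟩, rfl⟩) c' γ hsumm
    (fun i => by simpa only [hγs] using hc's i) (fun i => by simpa only [hγs] using hc't i)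
  have hpow : ∀ i k, X i ^ k ∈ P := by
    intro i k
    have := hall (Pi.single i k)
    rwa [Finset.prod_eq_single i (fun j _ hj => by simp [hj]) (by simp), Pi.single_eq_same] at this
  have hroot : ∀ i, ∃ q : Polynomial ℂ, q ≠ 0 ∧ Polynomial.aeval (X i) q = 0 := by
    intro i
    by_contra hcon
    push Not at hcon
    have hmem : ∀ q : Polynomial ℂ, Polynomial.aeval (X i) q ∈ P := by
      intro q
      rw [Polynomial.aeval_eq_sum_range]
      exact P.sum_mem fun k _ => P.smul_mem _ (hpow i k)
    have hinj : Function.Injective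
        (LinearMap.codRestrict P (Polynomial.aeval (X i)).toLinearMap hmem) := by
      rw [← LinearMap.ker_eq_bot, LinearMap.ker_eq_bot']
      intro q hq
      by_contra hq0
      exact hcon q hq0 (congrArg Subtype.val hq)
    exact Polynomial.not_finite (Module.Finite.of_injective _ hinj)
  choose q hq0 hq using hroot
  have hqx : ∀ x ∈ K, ∀ i, x i ∈ (q i).rootSet ℂ := by
    intro x hx i
    rw [Polynomial.mem_rootSet]
    refine ⟨hq0 i, ?_⟩
    have h1 := congrArg (ev ⟨x, hx⟩) (hq i)
    rw [Polynomial.aeval_eq_sum_range, map_sum, map_zero] at h1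
    rw [Polynomial.aeval_eq_sum_range]
    rw [← h1]
    refine Finset.sum_congr rfl fun k _ => ?_
    rw [map_smul]
    rfl
  have hfinpi : (Set.pi Set.univ fun i => (q i).rootSet ℂ).Finite :=
    Set.Finite.pi' (fun i => (q i).rootSet_finite ℂ) |>.subset (fun x hx i => hx i trivial)
  refine Set.Finite.of_finite_image (f := fun x : EuclideanSpace ℂ (Fin n) => (fun i => x i))
    (hfinpi.subset ?_) ?_
  · rintro _ ⟨x, hx, rfl⟩ i _
    exact hqx x hx i
  · intro x _ x' _ h
    ext i
    exact congrFun h i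

theorem coordIdeal_mem {n p : ℕ} (f : Cn n → Cn p) (G : Ogerm n) (hG : G ∈ coordIdeal f) :
    ∃ a : Fin p → Cn n → ℂ, (∀ j, AnalyticAt ℂ (a j) 0) ∧
      (G : Filter.Germ (𝓝 (0 : Cn n)) ℂ) =
        ((fun x => ∑ j, a j x * f x j : Cn n → ℂ) : Filter.Germ (𝓝 (0 : Cn n)) ℂ) := by
  unfold coordIdeal at hG
  induction hG using Submodule.span_induction with
  | mem G hG =>
    obtain ⟨i, hi⟩ := hG
    refine ⟨fun j _ => if j = i then 1 else 0, fun j => analyticAt_const, ?_⟩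
    rw [hi]
    congr 1
    funext x
    simp
  | zero =>
    refine ⟨fun j _ => 0, fun j => analyticAt_const, ?_⟩
    simp only [zero_mul, Finset.sum_const_zero]
    rfl
  | add G H _ _ hG hH =>
    obtain ⟨a, ha, haG⟩ := hG
    obtain ⟨b, hb, hbH⟩ := hH
    refine ⟨fun j x => a j x + b j x, fun j => (ha j).add (hb j), ?_⟩
    have : ((G + H : Ogerm n) : Filter.Germ (𝓝 (0 : Cn n)) ℂ) =
      (G : Filter.Germ (𝓝 (0 : Cn n)) ℂ) + (H : Filter.Germ (𝓝 (0 : Cn n)) ℂ) := rfl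
    rw [this, haG, hbH, ← Filter.Germ.coe_add]
    congr 1
    funext x
    simp [add_mul, Finset.sum_add_distrib]
  | smul c G _ hG =>
    obtain ⟨a, ha, haG⟩ := hG
    obtain ⟨g, hg, hgc⟩ := c.2
    refine ⟨fun j x => g x * a j x, fun j => hg.mul (ha j), ?_⟩
    have : ((c • G : Ogerm n) : Filter.Germ (𝓝 (0 : Cn n)) ℂ) =
      (c : Filter.Germ _ ℂ) * (G : Filter.Germ _ ℂ) := rfl
    rw [this, haG, ← hgc, ← Filter.Germ.coe_mul]
    congr 1
    funext x
    simp [Finset.mul_sum, mul_assoc]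

theorem analyticAt_coordFun {n : ℕ} (i : Fin n) : AnalyticAt ℂ (fun x : Cn n => x i) 0 :=
  (EuclideanSpace.proj (𝕜 := ℂ) i : Cn n →L[ℂ] ℂ).analyticAt 0

def coordGerm {n : ℕ} (i : Fin n) : Ogerm n :=
  ⟨((fun x : Cn n => x i : Cn n → ℂ) : Filter.Germ (𝓝 (0 : Cn n)) ℂ),
    ⟨fun x : Cn n => x i, analyticAt_coordFun i, rfl⟩⟩

theorem aeval_coordGerm {n : ℕ} (i : Fin n) (q : Polynomial ℂ) :
    ((Polynomial.aeval (coordGerm i) q : Ogerm n) : Filter.Germ (𝓝 (0 : Cn n)) ℂ) =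
      ((fun x : Cn n => q.eval (x i) : Cn n → ℂ) : Filter.Germ (𝓝 (0 : Cn n)) ℂ) := by
  induction q using Polynomial.induction_on' with
  | add q q' h h' =>
    rw [map_add]
    refine (congrArg₂ (· + ·) h h').trans ?_
    simp only [Polynomial.eval_add]
    rfl
  | monomial k c =>
    rw [Polynomial.aeval_monomial, ← Algebra.smul_def]
    simp only [Polynomial.eval_monomial]
    have : ((c • coordGerm i ^ k : Ogerm n) : Filter.Germ (𝓝 (0 : Cn n)) ℂ) =
      c • (coordGerm i : Filter.Germ (𝓝 (0 : Cn n)) ℂ) ^ k := rfl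
    rw [this]
    have h2 : (coordGerm i : Filter.Germ (𝓝 (0 : Cn n)) ℂ) =
      ((fun x : Cn n => x i : Cn n → ℂ) : Filter.Germ (𝓝 (0 : Cn n)) ℂ) := rfl
    rw [h2, ← Filter.Germ.coe_pow, ← Filter.Germ.coe_smul]
    rfl

theorem exists_aeval_mem_of_rank_lt {A : Type} [CommRing A] [Algebra ℂ A] (I : Ideal A)
    (hI : Module.rank ℂ (A ⧸ I) < Cardinal.aleph0) (x : A) :
    ∃ q : Polynomial ℂ, q ≠ 0 ∧ Polynomial.aeval x q ∈ I := by
  have hfd : Module.Finite ℂ (A ⧸ I) := Module.rank_lt_aleph0_iff.mp hI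
  have hint : IsIntegral ℂ (Ideal.Quotient.mkₐ ℂ I x) :=
    Algebra.IsIntegral.isIntegral _
  obtain ⟨q, hqm, hq⟩ := hint
  refine ⟨q, hqm.ne_zero, ?_⟩
  change Polynomial.aeval (Ideal.Quotient.mkₐ ℂ I x) q = 0 at hq
  rwa [Polynomial.aeval_algHom_apply, Ideal.Quotient.mkₐ_eq_mk,
    Ideal.Quotient.eq_zero_iff_mem] at hq

theorem exists_pow_coord {n p : ℕ} (f : Cn n → Cn p) (hfin : FiniteGerm f) (i : Fin n) :
    ∃ m : ℕ, ∃ a : Fin p → Cn n → ℂ, (∀ j, AnalyticAt ℂ (a j) 0) ∧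
      ∀ᶠ x in 𝓝 (0 : Cn n), (x i) ^ m = ∑ j, a j x * f x j := by
  obtain ⟨q, hq0, hq⟩ := exists_aeval_mem_of_rank_lt (coordIdeal f) hfin (coordGerm i)
  obtain ⟨a, ha, hG⟩ := coordIdeal_mem f _ hq
  rw [aeval_coordGerm, Filter.Germ.coe_eq] at hG
  obtain ⟨u, hu, hu0⟩ := Polynomial.exists_eq_pow_rootMultiplicity_mul_and_not_dvd q hq0 0
  rw [map_zero, sub_zero] at hu hu0
  rw [Polynomial.X_dvd_iff, Polynomial.coeff_zero_eq_eval_zero] at hu0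
  have huan : AnalyticAt ℂ (fun x : Cn n => u.eval (x i)) 0 := by
    have := AnalyticAt.aeval_polynomial (analyticAt_coordFun i) u
    simpa using this
  have hun : (fun x : Cn n => u.eval (x i)) 0 ≠ 0 := hu0
  refine ⟨q.rootMultiplicity 0, fun j x => a j x / u.eval (x i),
    fun j => (ha j).div huan hun, ?_⟩
  filter_upwards [hG, huan.continuousAt.eventually_ne hun] with x hx hxu
  have h1 : q.eval (x i) = (x i) ^ q.rootMultiplicity 0 * u.eval (x i) := by
    conv_lhs => rw [hu]
    simp
  rw [h1] at hx
  rw [eq_div_of_mul_eq hxu hx, Finset.sum_div]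
  exact Finset.sum_congr rfl fun j _ => by ring

theorem exists_finite_fibres {n p : ℕ} (f : Cn n → Cn p) (hf0 : f 0 = 0)
    (hf : ContinuousAt f 0) (hfin : FiniteGerm f) :
    ∃ W ∈ 𝓝 (0 : Cn n), ∀ y, {x ∈ W | f x = y}.Finite := by
  choose m a ha heq using exists_pow_coord f hfin
  refine finite_fibres_of_pow_mem f hf0 hf (∑ i, m i)
    (fun i j x => (x i) ^ (∑ i, m i - m i) * a i j x)
    (fun i j => ((analyticAt_coordFun i).pow _).mul (ha i j)) fun i => ?_
  filter_upwards [heq i] with x hx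
  have hle : m i ≤ ∑ i, m i := Finset.single_le_sum (fun _ _ => Nat.zero_le _) (Finset.mem_univ i)
  calc (x i) ^ (∑ i, m i) = (x i) ^ (∑ i, m i - m i) * (x i) ^ m i := by
        rw [← pow_add, Nat.sub_add_cancel hle]
    _ = _ := by
        rw [hx, Finset.mul_sum]
        exact Finset.sum_congr rfl fun j _ => by ring

/-- **Proposition (statement 17).** For a finite map germ `f : (ℂⁿ,0) → (ℂⁿ⁺¹,0)` and
`Σ̂ᵏ(f) = {x : corank df_x ≥ k}`, the germ of `Σ̂ᵏ(f)` at `0` has complex dimension at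
most `n - k` (its Hausdorff dimension near `0` is at most `2(n-k)`). -/
theorem corank_locus_dimension (n k : ℕ) (f : Cn n → Cn (n+1))
    (hf0 : f 0 = 0) (hfa : AnalyticAt ℂ f 0) (hfin : FiniteGerm f) :
    ∀ᶠ V in (𝓝 (0 : Cn n)).smallSets,
      dimH ({x : Cn n |
          k + Module.finrank ℂ (LinearMap.range ((fderiv ℂ f x) : Cn n →ₗ[ℂ] Cn (n+1))) ≤ n}
        ∩ V) ≤ ((2 * (n - k) : ℕ) : ENNReal) := by
  by_cases hk : n < k
  · refine Filter.Eventually.of_forall fun V => ?_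
    have : {x : Cn n |
          k + Module.finrank ℂ (LinearMap.range ((fderiv ℂ f x) : Cn n →ₗ[ℂ] Cn (n+1))) ≤ n}
        ∩ V = ∅ := by
      ext x
      simp only [Set.mem_inter_iff, Set.mem_ofPred_eq, Set.mem_empty_iff_false, iff_false]
      rintro ⟨h, _⟩
      omega
    rw [this, dimH_empty]
    exact zero_le
  · obtain ⟨W, hW, hWf⟩ := exists_finite_fibres f hf0 hfa.continuousAt hfin
    have hU : {x | x ∈ W ∧ AnalyticAt ℂ f x} ∈ 𝓝 (0 : Cn n) :=
      Filter.inter_mem hW hfa.eventually_analyticAt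
    obtain ⟨U, hUs, hUo, hU0⟩ := mem_nhds_iff.mp hU
    have hmain := dimH_rank_locus f U (fun x hx => (hUs hx).2)
      (fun y => (hWf y).subset fun x hx => ⟨(hUs hx.1).1, hx.2⟩) (n - k) n (Cn n) id U
      (by simp) hUo analyticOnNhd_id (Set.injOn_id U) (Set.mapsTo_id U)
    rw [Filter.eventually_smallSets]
    refine ⟨U, hUo.mem_nhds hU0, fun V hV => (dimH_mono ?_).trans hmain⟩
    rintro x ⟨hx, hxV⟩
    refine ⟨x, ⟨hV hxV, ?_⟩, rfl⟩
    have hx' : k + Module.finrank ℂ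
      (LinearMap.range ((fderiv ℂ f x) : Cn n →ₗ[ℂ] Cn (n+1))) ≤ n := hx
    change Module.finrank ℂ
      (LinearMap.range ((fderiv ℂ f x) : Cn n →ₗ[ℂ] Cn (n+1))) ≤ n - k
    omega
end
end
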